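/- arXiv:1109.0320 — 4 statements merged into one kernel-verified Lean document; each statement's English description precedes it below -/
import Mathlib

section
/- Under conditions (A.1)–(A.7), for any given η = (βᵀ,θᵀ)ᵀ ∈ ℝ^p × Ω, when the data are generated from the model with parameter η (i.e., y ~ N(Xβ, Γ(θ))), the score and Hessian of the log-likelihood satisfy, as n → ∞: N_n^{−1/2} ℓ'(η) converges in distribution to N(0, J(η)) and N_n^{−1} ℓ''(η) converges in probability to −J(η), where J(η) = diag{J(β), J(θ)}. -/
open MeasureTheory ProbabilityTheory Filter Matrix
open scoped ENNReal NNReal Topology BigOperators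

noncomputable section

/-- A probability measure on `ι → ℝ` is the (possibly degenerate) multivariate Gaussian with
mean vector `m` and covariance matrix `S` if every linear functional of it is a real Gaussian
with the corresponding mean and variance. -/
def IsGaussianVector {ι : Type*} [Fintype ι] (μ : Measure (ι → ℝ)) (m : ι → ℝ)
    (S : Matrix ι ι ℝ) : Prop :=
  IsProbabilityMeasure μ ∧
    ∀ a : ι → ℝ,
      μ.map (fun x => ∑ i, a i * x i) =
        gaussianReal (∑ i, a i * m i) (Real.toNNReal (a ⬝ᵥ S.mulVec a))

/-- Convergence in distribution (weak convergence of the laws) of a sequence of random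
elements `Z n` to a limiting law `μ`. -/
def TendstoInDistribution {Ωs : Type*} [MeasurableSpace Ωs] (P : Measure Ωs)
    {E : Type*} [MeasurableSpace E] [TopologicalSpace E]
    (Z : ℕ → Ωs → E) (μ : Measure E) : Prop :=
  ∀ f : BoundedContinuousFunction E ℝ,
    Tendsto (fun n => ∫ ω, f (Z n ω) ∂P) atTop (𝓝 (∫ x, f x ∂μ))

/-- `Z n = O_p(r n)` : for every `ε > 0` there is a constant `C` such that eventually
`P(Z n > C * r n) < ε`. -/
def IsBigOp {Ωs : Type*} [MeasurableSpace Ωs] (P : Measure Ωs)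
    (Z : ℕ → Ωs → ℝ) (r : ℕ → ℝ) : Prop :=
  ∀ ε : ℝ, 0 < ε → ∃ C : ℝ, ∀ᶠ n in atTop, (P {ω | C * r n < Z n ω}).toReal < ε

/-- Entrywise convergence in probability of a sequence of random matrices to a constant
matrix. -/
def TendstoInProbMatrix {Ωs : Type*} [MeasurableSpace Ωs] (P : Measure Ωs)
    {ι κ : Type*} (Z : ℕ → Ωs → Matrix ι κ ℝ) (c : Matrix ι κ ℝ) : Prop :=
  ∀ ε : ℝ, 0 < ε → ∀ i j,
    Tendsto (fun n => (P {ω | ε ≤ |Z n ω i j - c i j|}).toReal) atTop (𝓝 0)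

/-- The Frobenius norm of a real square matrix. -/
def frobNorm {ι : Type*} [Fintype ι] (A : Matrix ι ι ℝ) : ℝ :=
  Real.sqrt (∑ i, ∑ j, (A i j) ^ 2)

/-- Spatial linear model under increasing-domain asymptotics: at stage `n` there are `N n`
sampling sites in `ℝ^d`, a nonrandom `N n × p` design matrix `X n`, a covariance function
`γ` depending on a `q`-dimensional parameter ranging over an open set `Θ`, true regression
coefficients `β0` and true covariance parameter `θ0`, and data `y n` defined on a common
probability space. -/
structure SpatialModel (d p q : ℕ) where
  /-- sample sizes -/
  N : ℕ → ℕ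
  hN : Tendsto N atTop atTop
  /-- sampling sites -/
  sites : ∀ n, Fin (N n) → EuclideanSpace ℝ (Fin d)
  /-- design matrices -/
  X : ∀ n, Matrix (Fin (N n)) (Fin p) ℝ
  /-- covariance parameter space -/
  Θ : Set (Fin q → ℝ)
  hΘ : IsOpen Θ
  /-- covariance function -/
  γ : EuclideanSpace ℝ (Fin d) → EuclideanSpace ℝ (Fin d) → (Fin q → ℝ) → ℝ
  /-- true regression coefficients -/
  β0 : Fin p → ℝ
  /-- true covariance parameter -/
  θ0 : Fin q → ℝ
  hθ0 : θ0 ∈ Θ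
  /-- sample space -/
  Ωs : Type
  mΩ : MeasurableSpace Ωs
  P : @Measure Ωs mΩ
  hP : @IsProbabilityMeasure Ωs mΩ P
  /-- observed responses -/
  y : ∀ n, Ωs → Fin (N n) → ℝ

attribute [instance] SpatialModel.mΩ
attribute [instance] SpatialModel.hP

namespace SpatialModel

variable {d p q : ℕ} (M : SpatialModel d p q)

/-- The covariance matrix `Γ(θ)` at stage `n`. -/
def Γ (n : ℕ) (θ : Fin q → ℝ) : Matrix (Fin (M.N n)) (Fin (M.N n)) ℝ :=
  Matrix.of fun i j => M.γ (M.sites n i) (M.sites n j) θ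

/-- The entrywise partial derivative `Γ_k = ∂Γ/∂θ_k`. -/
def Γd (n : ℕ) (k : Fin q) (θ : Fin q → ℝ) : Matrix (Fin (M.N n)) (Fin (M.N n)) ℝ :=
  Matrix.of fun i j =>
    fderiv ℝ (fun t => M.γ (M.sites n i) (M.sites n j) t) θ (Pi.single k 1)

/-- The entrywise second partial derivative `Γ_{kk'} = ∂²Γ/∂θ_k∂θ_{k'}`. -/
def Γdd (n : ℕ) (k k' : Fin q) (θ : Fin q → ℝ) : Matrix (Fin (M.N n)) (Fin (M.N n)) ℝ :=
  Matrix.of fun i j =>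
    fderiv ℝ (fun t =>
      fderiv ℝ (fun t' => M.γ (M.sites n i) (M.sites n j) t') t (Pi.single k' 1))
      θ (Pi.single k 1)

/-- `t_{kk'} = tr(Γ⁻¹ Γ_k Γ⁻¹ Γ_{k'})` at the true parameter. -/
def tmat (n : ℕ) (k k' : Fin q) : ℝ :=
  ((M.Γ n M.θ0)⁻¹ * M.Γd n k M.θ0 * (M.Γ n M.θ0)⁻¹ * M.Γd n k' M.θ0).trace

/-- The Gaussian log-likelihood `ℓ(η)` at stage `n`. -/
def loglik (n : ℕ) (η : (Fin p → ℝ) × (Fin q → ℝ)) (ω : M.Ωs) : ℝ :=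
  -((M.N n : ℝ) / 2) * Real.log (2 * Real.pi)
    - (1 / 2) * Real.log ((M.Γ n η.2).det)
    - (1 / 2) * ((M.y n ω - (M.X n).mulVec η.1) ⬝ᵥ
        ((M.Γ n η.2)⁻¹.mulVec (M.y n ω - (M.X n).mulVec η.1)))

/-- The Fisher information for `β`: `I(β) = Xᵀ Γ⁻¹ X`. -/
def Iβ (n : ℕ) : Matrix (Fin p) (Fin p) ℝ := (M.X n)ᵀ * (M.Γ n M.θ0)⁻¹ * M.X n

/-- The Fisher information for `θ`: `I(θ)_{kk'} = t_{kk'}/2`. -/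
def Iθ (n : ℕ) : Matrix (Fin q) (Fin q) ℝ := Matrix.of fun k k' => M.tmat n k k' / 2

/-- The data are Gaussian: `y ∼ N(X β0, Γ(θ0))`. -/
def GaussianData : Prop :=
  (∀ n, Measurable (M.y n)) ∧
    ∀ n, IsGaussianVector ((M.P).map (M.y n)) ((M.X n).mulVec M.β0) (M.Γ n M.θ0)

/-- `β0 = (β10ᵀ, β20ᵀ)ᵀ` where the first `s` entries are nonzero and the rest are zero. -/
def SparseTruth (s : ℕ) : Prop :=
  (∀ j : Fin p, (j : ℕ) < s → M.β0 j ≠ 0) ∧ (∀ j : Fin p, s ≤ (j : ℕ) → M.β0 j = 0)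

/-- (A.1) The covariance function is twice continuously differentiable in `θ` and positive
definite. -/
def A1 : Prop :=
  (∀ n (i j : Fin (M.N n)),
      ContDiffOn ℝ 2 (fun θ => M.γ (M.sites n i) (M.sites n j) θ) M.Θ) ∧
    ∀ n, ∀ θ ∈ M.Θ, (M.Γ n θ).PosDef

/-- (A.2) The largest eigenvalue of `Γ` and the largest absolute eigenvalues of `Γ_k`,
`Γ_{kk'}` converge to finite constants. -/
def A2 : Prop :=
  (∃ C : ℝ, Tendsto (fun n => sSup (spectrum ℝ (M.Γ n M.θ0))) atTop (𝓝 C)) ∧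
    (∀ k, ∃ Ck : ℝ,
      Tendsto (fun n => sSup ((fun x => |x|) '' spectrum ℝ (M.Γd n k M.θ0))) atTop (𝓝 Ck)) ∧
    ∀ k k', ∃ Ckk : ℝ,
      Tendsto (fun n => sSup ((fun x => |x|) '' spectrum ℝ (M.Γdd n k k' M.θ0))) atTop (𝓝 Ckk)

/-- (A.3) Growth of the Frobenius norms of the derivative matrices, with exponent `δ`. -/
def A3With (δ : ℝ) : Prop :=
  0 < δ ∧
    (∀ k, ∃ D : ℝ, 0 < D ∧ ∀ n,
      (frobNorm (M.Γd n k M.θ0))⁻¹ ^ 2 = D * (M.N n : ℝ) ^ (-(1 / 2) - δ : ℝ)) ∧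
    ∀ k k', k ≠ k' →
      (∃ D : ℝ, 0 < D ∧ ∀ n,
        (frobNorm (M.Γd n k M.θ0 + M.Γd n k' M.θ0))⁻¹ ^ 2 =
          D * (M.N n : ℝ) ^ (-(1 / 2) - δ : ℝ)) ∨
      (∃ D : ℝ, 0 < D ∧ ∀ n,
        (frobNorm (M.Γd n k M.θ0 - M.Γd n k' M.θ0))⁻¹ ^ 2 =
          D * (M.N n : ℝ) ^ (-(1 / 2) - δ : ℝ))

/-- (A.3) -/
def A3 : Prop := ∃ δ : ℝ, M.A3With δ

/-- (A.4) The normalized information cross-terms converge to a nonsingular matrix, and the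
diagonal ratios are bounded. -/
def A4 : Prop :=
  (∃ A : Matrix (Fin q) (Fin q) ℝ, A.det ≠ 0 ∧ ∀ k k',
    Tendsto (fun n => M.tmat n k k' / Real.sqrt (M.tmat n k k * M.tmat n k' k'))
      atTop (𝓝 (A k k'))) ∧
    ∀ k k', ∃ B : ℝ, ∀ n, |M.tmat n k k / M.tmat n k' k'| ≤ B

/-- (A.5) The design matrices have full rank `p`, uniformly bounded entries, and
`(XᵀX)⁻¹ → 0`. -/
def A5 : Prop :=
  (∀ n, (M.X n).rank = p) ∧
    (∃ B : ℝ, ∀ n i j, |M.X n i j| ≤ B) ∧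
    Tendsto (fun n => ((M.X n)ᵀ * M.X n)⁻¹) atTop (𝓝 0)

/-- (A.6) The spectral norm of `Γ⁻¹` is bounded. -/
def A6 : Prop :=
  ∃ C0 : ℝ, ∀ n, ∀ x ∈ spectrum ℝ ((M.Γ n M.θ0)⁻¹), |x| < C0

/-- (A.7) The normalized information matrices converge to positive definite limits
`J(β)` and `J(θ)`. -/
def A7 (Jβ : Matrix (Fin p) (Fin p) ℝ) (Jθ : Matrix (Fin q) (Fin q) ℝ) : Prop :=
  Jβ.PosDef ∧ Jθ.PosDef ∧
    Tendsto (fun n => (M.N n : ℝ)⁻¹ • M.Iβ n) atTop (𝓝 Jβ) ∧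
    Tendsto (fun n => (M.N n : ℝ)⁻¹ • M.Iθ n) atTop (𝓝 Jθ)

end SpatialModel

/-- A penalty function family `p_λ` with tuning parameter sequence `λ_n`. -/
structure Penalty where
  /-- the penalty function: `pen l t = p_l(t)` -/
  pen : ℝ → ℝ → ℝ
  /-- the tuning parameter sequence -/
  lam : ℕ → ℝ
  pen_zero : ∀ l, pen l 0 = 0
  pen_nonneg : ∀ l t, 0 ≤ pen l t

namespace Penalty

/-- `p'_λ` -/
def d1 (Pn : Penalty) (l t : ℝ) : ℝ := deriv (Pn.pen l) t

/-- `p''_λ` -/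
def d2 (Pn : Penalty) (l t : ℝ) : ℝ := deriv (deriv (Pn.pen l)) t

/-- (A.9) Local Lipschitz continuity of `p''_{λ_n}` beyond `c₁ λ_n`. -/
def A9 (Pn : Penalty) : Prop :=
  ∃ c1 c2 : ℝ, 0 < c1 ∧ 0 < c2 ∧ ∀ n (b1 b2 : ℝ), c1 * Pn.lam n < b1 → c1 * Pn.lam n < b2 →
    |Pn.d2 (Pn.lam n) b1 - Pn.d2 (Pn.lam n) b2| ≤ c2 * |b1 - b2|

/-- (A.11) -/
def A11 (Pn : Penalty) : Prop :=
  0 < Filter.liminf (fun n =>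
    Filter.liminf (fun b => (Pn.lam n)⁻¹ * Pn.d1 (Pn.lam n) b) (𝓝[>] (0 : ℝ))) atTop

end Penalty

namespace SpatialModel

variable {d p q : ℕ} (M : SpatialModel d p q)

/-- `a_n = max{|p'_{λ_n}(|β_{j0}|)| : β_{j0} ≠ 0}`. -/
def aseq (Pn : Penalty) (n : ℕ) : ℝ :=
  sSup {x | ∃ j : Fin p, M.β0 j ≠ 0 ∧ x = |Pn.d1 (Pn.lam n) (abs (M.β0 j))|}

/-- `b_n = max{|p''_{λ_n}(|β_{j0}|)| : β_{j0} ≠ 0}`. -/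
def bseq (Pn : Penalty) (n : ℕ) : ℝ :=
  sSup {x | ∃ j : Fin p, M.β0 j ≠ 0 ∧ x = |Pn.d2 (Pn.lam n) (abs (M.β0 j))|}

/-- The penalized log-likelihood `Q(η) = ℓ(η) - N_n ∑_j p_{λ_n}(|β_j|)`. -/
def Q (Pn : Penalty) (n : ℕ) (η : (Fin p → ℝ) × (Fin q → ℝ)) (ω : M.Ωs) : ℝ :=
  M.loglik n η ω - (M.N n : ℝ) * ∑ j, Pn.pen (Pn.lam n) |η.1 j|

/-- (A.8) `a_n = O(N_n^{-1/2})` and `b_n → 0`. -/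
def A8 (Pn : Penalty) : Prop :=
  (∃ C : ℝ, ∀ᶠ n in atTop, M.aseq Pn n ≤ C * (Real.sqrt (M.N n))⁻¹) ∧
    Tendsto (M.bseq Pn) atTop (𝓝 0)

/-- (A.10) `λ_n → 0` and `N_n^{1/2} λ_n → ∞`. -/
def A10 (Pn : Penalty) : Prop :=
  Tendsto Pn.lam atTop (𝓝 0) ∧
    Tendsto (fun n => Real.sqrt (M.N n) * Pn.lam n) atTop atTop

end SpatialModel

/-- The coordinate directions in the parameter space `ℝ^p × ℝ^q`. -/
def paramBasis (p q : ℕ) : (Fin p ⊕ Fin q) → (Fin p → ℝ) × (Fin q → ℝ)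
  | Sum.inl j => (Pi.single j 1, 0)
  | Sum.inr k => (0, Pi.single k 1)

namespace SpatialModel

variable {d p q : ℕ} (M : SpatialModel d p q)

/-- The score `ℓ'(η)`, i.e. the gradient of the log-likelihood in `η = (β, θ)`. -/
def score (n : ℕ) (η : (Fin p → ℝ) × (Fin q → ℝ)) (ω : M.Ωs) : (Fin p ⊕ Fin q) → ℝ :=
  fun i => fderiv ℝ (fun η' => M.loglik n η' ω) η (paramBasis p q i)

/-- The Hessian `ℓ''(η)` of the log-likelihood in `η = (β, θ)`. -/
def hess (n : ℕ) (η : (Fin p → ℝ) × (Fin q → ℝ)) (ω : M.Ωs) :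
    Matrix (Fin p ⊕ Fin q) (Fin p ⊕ Fin q) ℝ :=
  Matrix.of fun i i' =>
    fderiv ℝ (fun η' => fderiv ℝ (fun η'' => M.loglik n η'' ω) η' (paramBasis p q i'))
      η (paramBasis p q i)

end SpatialModel

open MeasureTheory ProbabilityTheory Filter Matrix SpatialModel
open scoped ENNReal NNReal Topology BigOperators

/-
The score and the centred Hessian of a Gaussian log-likelihood, in any direction, are
linear-quadratic forms `u ⬝ r + (r ⬝ A r - tr (A S)) / 2` of the residual `r ∼ N(0, S)`.
Simultaneous diagonalization turns such a form into a sum of independent terms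
`v z + lam (z² - 1) / 2` with `z ∼ N(0, 1)`, so its characteristic function is an explicit product.
A second-order expansion of that product shows that the form is asymptotically `N(0, V)` as soon as
`‖A‖ ‖S‖ → 0` and its variance converges to `V`.

Bounded operator norms of `Γ`, `Γ⁻¹` and the derivatives of `Γ` give the norm condition after
scaling. The variance of the score is the Fisher information, so Cramér–Wold and Lévy's continuity
theorem give the first claim. The variance of each centred Hessian entry is `O(N_n)`, so with the
scaling `N_n⁻¹` the limiting variance is `0` and only the deterministic part `-I(η)` survives.
-/

section LogCharacteristicFunction

open Complex

/-- The logarithm of `E exp(i Y)` for `Y = v Z + lam / 2 * (Z ^ 2 - 1)` with `Z` standard normal. -/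
def logChar (v lam : ℝ) : ℂ :=
  -(1 / 2) * log (1 - lam * I) - lam * I / 2 - v ^ 2 / (2 * (1 - lam * I))

lemma one_sub_ofReal_mul_I_ne_zero (lam : ℝ) : 1 - lam * I ≠ 0 := fun h => by
  simpa using congrArg re h

lemma pi_div_cpow_half (lam : ℝ) :
    (Real.pi / ((1 - lam * I) / 2)) ^ (1 / 2 : ℂ)
      = (√(2 * Real.pi) : ℂ) * exp (-(1 / 2) * log (1 - lam * I)) := by
  have hpi : (0 : ℝ) < 2 * Real.pi := by positivity
  have hz := one_sub_ofReal_mul_I_ne_zero lam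
  have harg : (1 - lam * I).arg ≠ Real.pi := fun h => by
    have := (arg_eq_pi_iff.mp h).1
    simp only [sub_re, one_re, mul_re, ofReal_re, I_re, ofReal_im, I_im] at this
    linarith
  have hsplit : (Real.pi / ((1 - lam * I) / 2) : ℂ)
      = ((2 * Real.pi : ℝ) : ℂ) * (1 - lam * I)⁻¹ := by
    push_cast
    field_simp
  have hsqrt : ((√(2 * Real.pi) : ℝ) : ℂ) = exp (Real.log (2 * Real.pi) * (1 / 2)) := by
    rw [Real.sqrt_eq_rpow, Real.rpow_def_of_pos hpi]
    push_cast
    rfl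
  rw [hsplit, cpow_def_of_ne_zero (mul_ne_zero (by exact_mod_cast hpi.ne') (inv_ne_zero hz)),
    log_ofReal_mul hpi (inv_ne_zero hz), log_inv _ harg, hsqrt, ← exp_add]
  ring_nf

lemma integral_cexp_linear_add_square_gaussianReal (v lam : ℝ) :
    ∫ x : ℝ, exp ((v * x + lam / 2 * (x ^ 2 - 1) : ℝ) * I) ∂gaussianReal 0 1
      = exp (logChar v lam) := by
  have hz := one_sub_ofReal_mul_I_ne_zero lam
  have hdensity (x : ℝ) :
      gaussianPDFReal 0 1 x • exp ((v * x + lam / 2 * (x ^ 2 - 1) : ℝ) * I)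
        = (√(2 * Real.pi) : ℂ)⁻¹ *
          exp (-((1 - lam * I) / 2) * x ^ 2 + (v * I) * x + (-(lam * I / 2))) := by
    rw [gaussianPDFReal, real_smul]
    push_cast
    rw [mul_assoc, ← exp_add]
    congr 2
    · simp
    · ring
  have hre : (-((1 - lam * I) / 2)).re < 0 := by simp
  have hsqrt : (√(2 * Real.pi) : ℂ) ≠ 0 := by
    exact_mod_cast (Real.sqrt_pos.mpr (by positivity)).ne'
  rw [integral_gaussianReal_eq_integral_smul one_ne_zero]
  simp_rw [hdensity]
  rw [integral_const_mul, integral_cexp_quadratic hre, neg_neg, pi_div_cpow_half, ← mul_assoc,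
    inv_mul_cancel_left₀ hsqrt, ← exp_add, logChar]
  congr 1
  have hsq : (v * I : ℂ) ^ 2 = -v ^ 2 := by rw [mul_pow, I_sq]; ring
  rw [hsq]
  field_simp
  ring

lemma norm_log_one_sub_taylor_two_le {lam : ℝ} (h : |lam| ≤ 1 / 2) :
    ‖log (1 - lam * I) - (-(lam * I) + lam ^ 2 / 2)‖ ≤ lam ^ 2 * |lam| := by
  have hnorm : ‖-(lam * I : ℂ)‖ = |lam| := by simp
  have htaylor : logTaylor (2 + 1) (-(lam * I)) = -(lam * I) + lam ^ 2 / 2 := by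
    simp only [logTaylor, Finset.sum_range_succ, Finset.sum_range_zero]
    push_cast
    linear_combination (-(lam : ℂ) ^ 2 / 2) * I_sq
  have hbound := norm_log_sub_logTaylor_le (z := -(lam * I)) 2 (by rw [hnorm]; linarith)
  have hinv : (1 - |lam|)⁻¹ ≤ 2 := by
    rw [inv_le_comm₀ (by linarith) (by norm_num)]
    linarith
  rw [htaylor, hnorm, ← sub_eq_add_neg] at hbound
  calc ‖log (1 - lam * I) - (-(lam * I) + lam ^ 2 / 2)‖
      ≤ |lam| ^ 3 * (1 - |lam|)⁻¹ / 3 := by norm_num at hbound ⊢; exact hbound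
    _ ≤ |lam| ^ 3 * 2 / 3 := by gcongr
    _ ≤ |lam| ^ 3 := by linarith [pow_nonneg (abs_nonneg lam) 3]
    _ = lam ^ 2 * |lam| := by rw [← sq_abs]; ring

lemma norm_logChar_add_half_variance_le (v : ℝ) {lam : ℝ} (h : |lam| ≤ 1 / 2) :
    ‖logChar v lam + ((v ^ 2 + lam ^ 2 / 2) / 2 : ℝ)‖ ≤ 2 * |lam| * (v ^ 2 + lam ^ 2 / 2) := by
  have hz := one_sub_ofReal_mul_I_ne_zero lam
  have hden : 1 / 2 ≤ ‖1 - lam * I‖ := by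
    have := norm_sub_norm_le (1 : ℂ) (lam * I)
    simp only [norm_one, norm_mul, norm_real, Real.norm_eq_abs, norm_I, mul_one] at this
    linarith
  have hsquare : ‖(v : ℂ) ^ 2 * (lam * I) / (2 * (1 - lam * I))‖ ≤ v ^ 2 * |lam| := by
    have hnonneg : 0 ≤ v ^ 2 * |lam| := by positivity
    simp only [norm_div, norm_mul, norm_pow, norm_real, Real.norm_eq_abs, sq_abs, norm_I, mul_one,
      norm_ofNat]
    rw [div_le_iff₀ (by linarith)]
    nlinarith
  have hlog := norm_log_one_sub_taylor_two_le h
  have hsplit : logChar v lam + ((v ^ 2 + lam ^ 2 / 2) / 2 : ℝ)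
      = -(1 / 2) * (log (1 - lam * I) - (-(lam * I) + lam ^ 2 / 2))
        - (v : ℂ) ^ 2 * (lam * I) / (2 * (1 - lam * I)) := by
    rw [logChar]
    push_cast
    field_simp
    ring
  have hhalf : ‖(-(1 / 2) : ℂ)‖ = 1 / 2 := by simp
  calc ‖logChar v lam + ((v ^ 2 + lam ^ 2 / 2) / 2 : ℝ)‖
      ≤ 1 / 2 * (lam ^ 2 * |lam|) + v ^ 2 * |lam| := by
        rw [hsplit]
        refine (norm_sub_le _ _).trans (add_le_add ?_ hsquare)
        rw [norm_mul, hhalf]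
        gcongr
    _ ≤ 2 * |lam| * (v ^ 2 + lam ^ 2 / 2) := by
        nlinarith [mul_nonneg (sq_nonneg v) (abs_nonneg lam),
          mul_nonneg (sq_nonneg lam) (abs_nonneg lam)]

lemma integral_cexp_sum_linear_add_square_pi_gaussianReal {ι : Type*} [Fintype ι] (v lam : ι → ℝ) :
    ∫ w : ι → ℝ, exp ((∑ i, (v i * w i + lam i / 2 * (w i ^ 2 - 1)) : ℝ) * I)
        ∂(Measure.pi fun _ => gaussianReal 0 1)
      = exp (∑ i, logChar (v i) (lam i)) := by
  simp_rw [ofReal_sum, Finset.sum_mul, exp_sum]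
  rw [integral_fintype_prod_eq_prod (𝕜 := ℂ)
    (fun i x => exp ((v i * x + lam i / 2 * (x ^ 2 - 1) : ℝ) * I))]
  exact Finset.prod_congr rfl fun i _ => integral_cexp_linear_add_square_gaussianReal _ _

lemma tendsto_sum_logChar {α : Type*} {l : Filter α} {ι : α → Type*} [∀ a, Fintype (ι a)]
    {v lam : ∀ a, ι a → ℝ} {ε : α → ℝ} (hε : Tendsto ε l (𝓝 0)) (hlam : ∀ a i, |lam a i| ≤ ε a)
    {V : ℝ} (hV : Tendsto (fun a => ∑ i, (v a i ^ 2 + lam a i ^ 2 / 2)) l (𝓝 V)) :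
    Tendsto (fun a => ∑ i, logChar (v a i) (lam a i)) l (𝓝 (-(V / 2 : ℝ))) := by
  have hmain : Tendsto (fun a => ((-((∑ i, (v a i ^ 2 + lam a i ^ 2 / 2)) / 2) : ℝ) : ℂ)) l
      (𝓝 ((-(V / 2) : ℝ) : ℂ)) :=
    (continuous_ofReal.tendsto _).comp (hV.div_const 2).neg
  have herror : Tendsto (fun a => ∑ i, (logChar (v a i) (lam a i) +
      ((v a i ^ 2 + lam a i ^ 2 / 2) / 2 : ℝ))) l (𝓝 0) := by
    have hbound : Tendsto (fun a => 2 * ε a * ∑ i, (v a i ^ 2 + lam a i ^ 2 / 2)) l (𝓝 0) := by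
      simpa using (hε.const_mul 2).mul hV
    refine squeeze_zero_norm' ?_ hbound
    filter_upwards [hε.eventually_le_const (show (0 : ℝ) < 1 / 2 by norm_num)] with a ha
    rw [Finset.mul_sum]
    refine norm_sum_le_of_le _ fun i _ => ?_
    refine (norm_logChar_add_half_variance_le _ ((hlam a i).trans ha)).trans ?_
    gcongr
    exact hlam a i
  have hsum := herror.add hmain
  simp only [zero_add, Finset.sum_add_distrib, ← ofReal_sum, ← Finset.sum_div] at hsum
  simpa [add_assoc, ← ofReal_add] using hsum

end LogCharacteristicFunction

section LinQuad

open Complex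

variable {m : Type*} [Fintype m]

/-- The linear-quadratic functional `x ↦ uᵀx + (xᵀAx - tr(AS)) / 2`, centred so as to have mean zero
under `N(0, S)`. Score and Hessian of a Gaussian log-likelihood are of this form in `x = y - Xβ`. -/
def linQuad (S A : Matrix m m ℝ) (u x : m → ℝ) : ℝ :=
  u ⬝ᵥ x + 1 / 2 * (x ⬝ᵥ A *ᵥ x - (A * S).trace)

/-- The variance of `linQuad S A u` under `N(0, S)`. -/
def linQuadVar (S A : Matrix m m ℝ) (u : m → ℝ) : ℝ :=
  u ⬝ᵥ S *ᵥ u + 1 / 2 * (A * S * A * S).trace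

lemma linQuad_smul (c : ℝ) (S A : Matrix m m ℝ) (u x : m → ℝ) :
    linQuad S (c • A) (c • u) x = c * linQuad S A u x := by
  simp only [linQuad, smul_dotProduct, smul_mulVec, dotProduct_smul, smul_mul_assoc, trace_smul,
    smul_eq_mul]
  ring

lemma linQuadVar_smul (c : ℝ) (S A : Matrix m m ℝ) (u : m → ℝ) :
    linQuadVar S (c • A) (c • u) = c ^ 2 * linQuadVar S A u := by
  simp only [linQuadVar, smul_dotProduct, mulVec_smul, dotProduct_smul, smul_mul_assoc,
    mul_smul_comm, trace_smul, smul_eq_mul]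
  ring

@[fun_prop]
lemma continuous_linQuad (S A : Matrix m m ℝ) (u : m → ℝ) : Continuous (linQuad S A u) := by
  unfold linQuad
  fun_prop

lemma mulVec_dotProduct_mulVec (C A : Matrix m m ℝ) (w : m → ℝ) :
    C *ᵥ w ⬝ᵥ A *ᵥ (C *ᵥ w) = w ⬝ᵥ (Cᵀ * A * C) *ᵥ w := by
  rw [dotProduct_comm, dotProduct_mulVec, ← mulVec_transpose, mulVec_mulVec, mulVec_mulVec,
    dotProduct_comm, Matrix.mul_assoc]

open scoped Matrix.Norms.L2Operator MatrixOrder in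
lemma exists_mul_transpose_eq {S : Matrix m m ℝ} (hS : S.PosSemidef) :
    ∃ C : Matrix m m ℝ, C * Cᵀ = S := by
  classical
  obtain ⟨B, rfl⟩ := CStarAlgebra.nonneg_iff_eq_star_mul_self.mp hS.nonneg
  exact ⟨Bᵀ, by rw [transpose_transpose, star_eq_conjTranspose,
    conjTranspose_eq_transpose_of_trivial]⟩

variable [DecidableEq m]

lemma linQuad_mulVec_of_diagonal {S A C : Matrix m m ℝ} {lam : m → ℝ} (hC : C * Cᵀ = S)
    (hlam : Cᵀ * A * C = diagonal lam) (u w : m → ℝ) :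
    linQuad S A u (C *ᵥ w) = ∑ i, ((Cᵀ *ᵥ u) i * w i + lam i / 2 * (w i ^ 2 - 1)) := by
  have htrace : (A * S).trace = ∑ i, lam i := by
    rw [← hC, ← Matrix.mul_assoc, trace_mul_comm, ← Matrix.mul_assoc, hlam, trace_diagonal]
  rw [linQuad, mulVec_dotProduct_mulVec, hlam, htrace, dotProduct_mulVec, ← mulVec_transpose,
    dotProduct, dotProduct, ← Finset.sum_sub_distrib, Finset.mul_sum, ← Finset.sum_add_distrib]
  refine Finset.sum_congr rfl fun i _ => ?_
  rw [mulVec_diagonal]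
  ring

lemma linQuadVar_of_diagonal {S A C : Matrix m m ℝ} {lam : m → ℝ} (hC : C * Cᵀ = S)
    (hlam : Cᵀ * A * C = diagonal lam) (u : m → ℝ) :
    linQuadVar S A u = ∑ i, ((Cᵀ *ᵥ u) i ^ 2 + lam i ^ 2 / 2) := by
  have htrace : (A * S * A * S).trace = ∑ i, lam i ^ 2 := by
    rw [← hC, show A * (C * Cᵀ) * A * (C * Cᵀ) = (A * (C * Cᵀ) * A * C) * Cᵀ by
      simp only [Matrix.mul_assoc], trace_mul_comm,
      show Cᵀ * (A * (C * Cᵀ) * A * C) = (Cᵀ * A * C) * (Cᵀ * A * C) by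
      simp only [Matrix.mul_assoc], hlam, diagonal_mul_diagonal, trace_diagonal]
    simp only [sq]
  have hlinear : u ⬝ᵥ S *ᵥ u = ∑ i, (Cᵀ *ᵥ u) i ^ 2 := by
    rw [← hC, ← mulVec_mulVec, dotProduct_mulVec, ← mulVec_transpose]
    simp only [dotProduct, sq]
  rw [linQuadVar, htrace, hlinear, Finset.sum_add_distrib, Finset.mul_sum]
  simp only [div_eq_inv_mul, mul_one]

lemma exists_mul_transpose_eq_and_diagonal {S A : Matrix m m ℝ} (hS : S.PosSemidef)
    (hA : A.IsHermitian) :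
    ∃ (C : Matrix m m ℝ) (lam : m → ℝ), C * Cᵀ = S ∧ Cᵀ * A * C = diagonal lam := by
  obtain ⟨B, rfl⟩ := exists_mul_transpose_eq hS
  have hBAB : (Bᵀ * A * B).IsHermitian := by
    simpa only [conjTranspose_eq_transpose_of_trivial] using isHermitian_conjTranspose_mul_mul B hA
  set U : Matrix m m ℝ := ↑hBAB.eigenvectorUnitary
  have hUU : U * Uᵀ = 1 := Unitary.coe_mul_star_self hBAB.eigenvectorUnitary
  have hdiag : Uᵀ * (Bᵀ * A * B) * U = diagonal hBAB.eigenvalues := by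
    have := hBAB.conjStarAlgAut_star_eigenvectorUnitary
    rw [Unitary.conjStarAlgAut_star_apply] at this
    exact this
  refine ⟨B * U, hBAB.eigenvalues, ?_, ?_⟩
  · rw [transpose_mul, Matrix.mul_assoc, ← Matrix.mul_assoc U, hUU, Matrix.one_mul]
  · rw [← hdiag, transpose_mul]
    simp only [Matrix.mul_assoc]

open scoped Matrix.Norms.L2Operator in
lemma l2_opNorm_mul_self_of_mul_transpose_eq {S C : Matrix m m ℝ} (hC : C * Cᵀ = S) :
    ‖C‖ * ‖C‖ = ‖S‖ := by
  rw [← hC, ← conjTranspose_eq_transpose_of_trivial, ← l2_opNorm_conjTranspose C,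
    ← l2_opNorm_conjTranspose_mul_self, conjTranspose_conjTranspose]

open scoped Matrix.Norms.L2Operator in
lemma abs_le_l2_opNorm_mul_of_diagonal {S A C : Matrix m m ℝ} {lam : m → ℝ} (hC : C * Cᵀ = S)
    (hlam : Cᵀ * A * C = diagonal lam) (i : m) : |lam i| ≤ ‖A‖ * ‖S‖ := by
  calc |lam i| ≤ ‖diagonal lam‖ := by
        rw [l2_opNorm_diagonal]
        exact norm_le_pi_norm lam i
    _ ≤ ‖Cᵀ‖ * ‖A‖ * ‖C‖ := by
        rw [← hlam]
        exact (l2_opNorm_mul _ _).trans (by gcongr; exact l2_opNorm_mul _ _)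
    _ = ‖A‖ * ‖S‖ := by
        rw [← conjTranspose_eq_transpose_of_trivial, l2_opNorm_conjTranspose,
          ← l2_opNorm_mul_self_of_mul_transpose_eq hC]
        ring

end LinQuad

section GaussianVector

open Complex

variable {m : Type*} [Fintype m]

lemma strongDual_pi_apply_eq_sum [DecidableEq m] (L : StrongDual ℝ (m → ℝ))
    (x : m → ℝ) : L x = ∑ i, L (Pi.single i 1) * x i := by
  conv_lhs => rw [pi_eq_sum_univ' x, map_sum]
  simp only [map_smul, smul_eq_mul, mul_comm]

lemma IsGaussianVector.eq {μ ν : Measure (m → ℝ)} {b : m → ℝ} {S : Matrix m m ℝ}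
    (hμ : IsGaussianVector μ b S) (hν : IsGaussianVector ν b S) : μ = ν := by
  classical
  have := hμ.1
  have := hν.1
  refine Measure.ext_of_charFunDual (funext fun L => ?_)
  have hL : ⇑L = fun x => ∑ i, L (Pi.single i 1) * x i :=
    funext fun x => strongDual_pi_apply_eq_sum L x
  rw [charFunDual_eq_charFun_map_one, charFunDual_eq_charFun_map_one, hL, hμ.2, hν.2]

lemma IsGaussianVector.integral_cexp_dotProduct {μ : Measure (m → ℝ)} {S : Matrix m m ℝ}
    (hμ : IsGaussianVector μ 0 S) (hS : S.PosSemidef) (t : m → ℝ) :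
    ∫ x, exp ((t ⬝ᵥ x : ℝ) * I) ∂μ = exp (-(t ⬝ᵥ S *ᵥ t / 2 : ℝ)) := by
  have hnonneg : 0 ≤ t ⬝ᵥ S *ᵥ t := hS.dotProduct_mulVec_nonneg t
  have hcont : Continuous fun x : m → ℝ => ∑ i, t i * x i := by fun_prop
  have hlaw : charFun (μ.map fun x => ∑ i, t i * x i) 1 = _ := congrArg (charFun · 1) (hμ.2 t)
  rw [charFun_gaussianReal, charFun_apply_real,
    integral_map hcont.aemeasurable (by fun_prop), Real.coe_toNNReal _ hnonneg] at hlaw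
  simpa [dotProduct] using hlaw

lemma isGaussianVector_map_pi_gaussianReal {κ : Type*} [Fintype κ] (b : κ → ℝ) (C : Matrix κ m ℝ) :
    IsGaussianVector ((Measure.pi fun _ : m => gaussianReal 0 1).map fun w => b + C *ᵥ w) b
      (C * Cᵀ) := by
  have hmeas : Measurable fun w : m → ℝ => b + C *ᵥ w := Continuous.measurable (by fun_prop)
  refine ⟨Measure.isProbabilityMeasure_map hmeas.aemeasurable, fun a => ?_⟩
  have hvar : a ⬝ᵥ (C * Cᵀ) *ᵥ a = ∑ i, (Cᵀ *ᵥ a) i ^ 2 := by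
    rw [← mulVec_mulVec, dotProduct_mulVec, ← mulVec_transpose]
    simp only [dotProduct, sq]
  have hlin (t : ℝ) (w : m → ℝ) : t * ∑ i, a i * (b + C *ᵥ w) i
      = t * ∑ i, a i * b i + ∑ i, (t * (Cᵀ *ᵥ a) i * w i + 0 / 2 * (w i ^ 2 - 1)) := by
    change t * (a ⬝ᵥ (b + C *ᵥ w)) = t * (a ⬝ᵥ b) + _
    rw [dotProduct_add, dotProduct_mulVec, ← mulVec_transpose, mul_add]
    simp [dotProduct, Finset.mul_sum, mul_assoc]
  have hsum : Measurable fun x : κ → ℝ => ∑ i, a i * x i := Continuous.measurable (by fun_prop)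
  rw [Measure.map_map hsum hmeas]
  have := Measure.isProbabilityMeasure_map (μ := Measure.pi fun _ : m => gaussianReal 0 1)
    (hsum.comp hmeas).aemeasurable
  refine Measure.ext_of_charFun (funext fun t => ?_)
  rw [charFun_gaussianReal, charFun_apply_real,
    integral_map (hsum.comp hmeas).aemeasurable (by fun_prop)]
  simp_rw [Function.comp_apply, ← ofReal_mul, hlin, ofReal_add, add_mul, exp_add]
  rw [integral_const_mul, integral_cexp_sum_linear_add_square_pi_gaussianReal, ← exp_add,
    Real.coe_toNNReal _ (by rw [hvar]; positivity), hvar]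
  congr 1
  simp only [logChar]
  push_cast
  simp [Finset.sum_neg_distrib, Finset.mul_sum, Finset.sum_div, mul_pow, sub_eq_add_neg, mul_comm]

lemma exists_isGaussianVector (b : m → ℝ) {S : Matrix m m ℝ} (hS : S.PosSemidef) :
    ∃ μ, IsGaussianVector μ b S := by
  obtain ⟨C, rfl⟩ := exists_mul_transpose_eq hS
  exact ⟨_, isGaussianVector_map_pi_gaussianReal b C⟩

variable [DecidableEq m]

open scoped Matrix.Norms.L2Operator in
lemma IsGaussianVector.exists_integral_cexp_linQuad {μ : Measure (m → ℝ)} {b : m → ℝ}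
    {S A : Matrix m m ℝ} (hμ : IsGaussianVector μ b S) (hS : S.PosSemidef) (hA : A.IsHermitian)
    (u : m → ℝ) :
    ∃ v lam : m → ℝ, (∀ i, |lam i| ≤ ‖A‖ * ‖S‖) ∧
      linQuadVar S A u = ∑ i, (v i ^ 2 + lam i ^ 2 / 2) ∧
      ∫ y, exp (linQuad S A u (y - b) * I) ∂μ = exp (∑ i, logChar (v i) (lam i)) := by
  obtain ⟨C, lam, hC, hlam⟩ := exists_mul_transpose_eq_and_diagonal hS hA
  refine ⟨Cᵀ *ᵥ u, lam, abs_le_l2_opNorm_mul_of_diagonal hC hlam, linQuadVar_of_diagonal hC hlam u,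
    ?_⟩
  have hmeas : Measurable fun w : m → ℝ => b + C *ᵥ w := Continuous.measurable (by fun_prop)
  rw [hμ.eq (hC ▸ isGaussianVector_map_pi_gaussianReal b C),
    integral_map hmeas.aemeasurable (Continuous.aestronglyMeasurable (by fun_prop))]
  simp_rw [add_sub_cancel_left, linQuad_mulVec_of_diagonal hC hlam]
  exact integral_cexp_sum_linear_add_square_pi_gaussianReal _ _

open scoped Matrix.Norms.L2Operator in
lemma tendsto_integral_cexp_linQuad {α : Type*} {l : Filter α} {k : α → Type*}
    [∀ a, Fintype (k a)] [∀ a, DecidableEq (k a)] {μ : ∀ a, Measure (k a → ℝ)} {b : ∀ a, k a → ℝ}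
    {S A : ∀ a, Matrix (k a) (k a) ℝ} {u : ∀ a, k a → ℝ}
    (hμ : ∀ a, IsGaussianVector (μ a) (b a) (S a)) (hS : ∀ a, (S a).PosSemidef)
    (hA : ∀ a, (A a).IsHermitian) (hnorm : Tendsto (fun a => ‖A a‖ * ‖S a‖) l (𝓝 0)) {V : ℝ}
    (hV : Tendsto (fun a => linQuadVar (S a) (A a) (u a)) l (𝓝 V)) :
    Tendsto (fun a => ∫ y, exp (linQuad (S a) (A a) (u a) (y - b a) * I) ∂μ a) l
      (𝓝 (exp (-(V / 2 : ℝ)))) := by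
  choose v lam hlam hvar hint using fun a =>
    (hμ a).exists_integral_cexp_linQuad (hS a) (hA a) (u a)
  simp_rw [hint]
  simp_rw [hvar] at hV
  exact (continuous_exp.tendsto _).comp (tendsto_sum_logChar hnorm hlam hV)

end GaussianVector

section Convergence

open Complex

variable {Ωs : Type*} [MeasurableSpace Ωs] {P : Measure Ωs}

lemma TendstoInDistribution.comp_continuous {E F : Type*} [MeasurableSpace E] [TopologicalSpace E]
    [OpensMeasurableSpace E] [MeasurableSpace F] [TopologicalSpace F] [BorelSpace F]
    {Z : ℕ → Ωs → E} {μ : Measure E} (hZ : _root_.TendstoInDistribution P Z μ) {g : E → F}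
    (hg : Continuous g) :
    _root_.TendstoInDistribution P (fun n ω => g (Z n ω)) (μ.map g) := fun f => by
  rw [integral_map hg.aemeasurable f.continuous.aestronglyMeasurable]
  exact hZ (f.compContinuous ⟨g, hg⟩)

lemma tendstoInDistribution_of_tendsto_charFun {E : Type*} [NormedAddCommGroup E]
    [InnerProductSpace ℝ E] [FiniteDimensional ℝ E] [MeasurableSpace E] [BorelSpace E]
    [IsProbabilityMeasure P] {Z : ℕ → Ωs → E} (hZ : ∀ n, Measurable (Z n)) {μ : Measure E}
    [IsProbabilityMeasure μ]
    (h : ∀ t, Tendsto (fun n => charFun (P.map (Z n)) t) atTop (𝓝 (charFun μ t))) :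
    _root_.TendstoInDistribution P Z μ := fun f => by
  let law (n : ℕ) : ProbabilityMeasure E :=
    ⟨P.map (Z n), Measure.isProbabilityMeasure_map (hZ n).aemeasurable⟩
  have hlim : Tendsto law atTop (𝓝 ⟨μ, inferInstance⟩) :=
    ProbabilityMeasure.tendsto_of_tendsto_charFun h
  refine (ProbabilityMeasure.tendsto_iff_forall_integral_tendsto.mp hlim f).congr fun n => ?_
  exact integral_map (hZ n).aemeasurable f.continuous.aestronglyMeasurable

lemma charFun_map_toLp {ι : Type*} [Fintype ι] {W : Ωs → ι → ℝ} (hW : Measurable W)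
    (t : EuclideanSpace ℝ ι) :
    charFun (P.map (WithLp.toLp 2 ∘ W)) t = ∫ ω, exp ((t.ofLp ⬝ᵥ W ω : ℝ) * I) ∂P := by
  have htoLp : Continuous (WithLp.toLp 2 : (ι → ℝ) → EuclideanSpace ℝ ι) :=
    PiLp.continuous_toLp 2 _
  rw [charFun_apply, integral_map (htoLp.measurable.comp hW).aemeasurable (by fun_prop)]
  simp only [Function.comp_apply, EuclideanSpace.inner_eq_star_dotProduct, star_trivial]

lemma tendstoInDistribution_pi_of_tendsto_integral_cexp {ι : Type*} [Fintype ι]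
    [IsProbabilityMeasure P] {Z : ℕ → Ωs → ι → ℝ} (hZ : ∀ n, Measurable (Z n))
    {μ : Measure (ι → ℝ)} [IsProbabilityMeasure μ]
    (h : ∀ t : ι → ℝ, Tendsto (fun n => ∫ ω, exp ((t ⬝ᵥ Z n ω : ℝ) * I) ∂P) atTop
      (𝓝 (∫ x, exp ((t ⬝ᵥ x : ℝ) * I) ∂μ))) :
    _root_.TendstoInDistribution P Z μ := by
  let toE : (ι → ℝ) → EuclideanSpace ℝ ι := WithLp.toLp 2
  have htoE : Continuous toE := PiLp.continuous_toLp 2 _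
  have hofLp : Continuous (WithLp.ofLp : EuclideanSpace ℝ ι → ι → ℝ) := PiLp.continuous_ofLp 2 _
  have := Measure.isProbabilityMeasure_map (μ := μ) htoE.aemeasurable
  have hE : _root_.TendstoInDistribution P (fun n => toE ∘ Z n) (μ.map toE) := by
    refine tendstoInDistribution_of_tendsto_charFun (fun n => htoE.measurable.comp (hZ n))
      fun t => ?_
    rw [← Function.comp_id toE, charFun_map_toLp measurable_id]
    exact (h t.ofLp).congr fun n => (charFun_map_toLp (hZ n) t).symm
  have hback := hE.comp_continuous hofLp
  rwa [Measure.map_map hofLp.measurable htoE.measurable,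
    show WithLp.ofLp ∘ toE = id from rfl, Measure.map_id] at hback

lemma tendsto_measure_le_abs_of_tendstoInDistribution_dirac [IsProbabilityMeasure P]
    {Z : ℕ → Ωs → ℝ} (hZm : ∀ n, Measurable (Z n))
    (hZ : _root_.TendstoInDistribution P Z (Measure.dirac 0)) {ε : ℝ} (hε : 0 < ε) :
    Tendsto (fun n => (P {ω | ε ≤ |Z n ω|}).toReal) atTop (𝓝 0) := by
  let f : BoundedContinuousFunction ℝ ℝ :=
    .ofNormedAddCommGroup (fun x => min |x| ε) (by fun_prop) ε fun x => by
      rw [Real.norm_of_nonneg (le_min (abs_nonneg x) hε.le)]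
      exact min_le_right _ _
  have hf : Tendsto (fun n => ∫ ω, f (Z n ω) ∂P) atTop (𝓝 0) := by
    simpa [f, hε.le] using hZ f
  refine squeeze_zero (fun _ => ENNReal.toReal_nonneg) (fun n => ?_)
    (by simpa using hf.const_mul ε⁻¹)
  have hfZ : Integrable (fun ω => f (Z n ω)) P :=
    (f.integrable (P.map (Z n))).comp_measurable (hZm n)
  have hmarkov := mul_meas_ge_le_integral_of_nonneg
    (ae_of_all P fun ω => le_min (abs_nonneg (Z n ω)) hε.le) hfZ ε
  rw [le_inv_mul_iff₀ hε]
  simpa [f, Measure.real] using hmarkov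

lemma tendsto_measure_le_abs_of_tendsto_integral_cexp [IsProbabilityMeasure P] {Z : ℕ → Ωs → ℝ}
    (hZ : ∀ n, Measurable (Z n))
    (h : ∀ t : ℝ, Tendsto (fun n => ∫ ω, exp ((t * Z n ω : ℝ) * I) ∂P) atTop (𝓝 1)) {ε : ℝ}
    (hε : 0 < ε) : Tendsto (fun n => (P {ω | ε ≤ |Z n ω|}).toReal) atTop (𝓝 0) := by
  refine tendsto_measure_le_abs_of_tendstoInDistribution_dirac hZ
    (tendstoInDistribution_of_tendsto_charFun hZ fun t => ?_) hε
  have hmap (n : ℕ) : charFun (P.map (Z n)) t = ∫ ω, exp ((t * Z n ω : ℝ) * I) ∂P := by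
    rw [charFun_apply_real, integral_map (hZ n).aemeasurable (by fun_prop)]
    simp only [ofReal_mul]
  simpa [hmap] using h t

end Convergence

section DirectionalDerivatives

open scoped Matrix.Norms.L2Operator

variable {E F G H : Type*} [NormedAddCommGroup E] [NormedSpace ℝ E] [NormedAddCommGroup F]
  [NormedSpace ℝ F] [NormedAddCommGroup G] [NormedSpace ℝ G] [NormedAddCommGroup H]
  [NormedSpace ℝ H] {x v : E}

/-- `f` is Fréchet differentiable at `x` and its derivative maps the direction `v` to `f'`. Unlike
for `HasLineDerivAt`, the differentiability requirement makes the chain rule available. -/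
def HasDirDerivAt (f : E → F) (f' : F) (x v : E) : Prop :=
  ∃ L : E →L[ℝ] F, HasFDerivAt f L x ∧ L v = f'

namespace HasDirDerivAt

lemma fderiv_apply {f : E → F} {f' : F} (hf : HasDirDerivAt f f' x v) : fderiv ℝ f x v = f' := by
  obtain ⟨L, hL, rfl⟩ := hf
  rw [hL.fderiv]

lemma congr_deriv {f : E → F} {f' g' : F} (hf : HasDirDerivAt f f' x v) (h : f' = g') :
    HasDirDerivAt f g' x v := h ▸ hf

lemma of_differentiableAt {f : E → F} (hf : DifferentiableAt ℝ f x) :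
    HasDirDerivAt f (fderiv ℝ f x v) x v := ⟨_, hf.hasFDerivAt, rfl⟩

lemma const (c : F) : HasDirDerivAt (fun _ : E => c) 0 x v := ⟨0, hasFDerivAt_const c x, rfl⟩

lemma const_sub (c : F) {f : E → F} {f' : F} (hf : HasDirDerivAt f f' x v) :
    HasDirDerivAt (fun y => c - f y) (-f') x v := by
  obtain ⟨L, hL, rfl⟩ := hf
  exact ⟨-L, hL.const_sub c, rfl⟩

lemma add {f g : E → F} {f' g' : F} (hf : HasDirDerivAt f f' x v) (hg : HasDirDerivAt g g' x v) :
    HasDirDerivAt (fun y => f y + g y) (f' + g') x v := by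
  obtain ⟨L, hL, rfl⟩ := hf
  obtain ⟨K, hK, rfl⟩ := hg
  exact ⟨L + K, hL.add hK, rfl⟩

lemma sub {f g : E → F} {f' g' : F} (hf : HasDirDerivAt f f' x v) (hg : HasDirDerivAt g g' x v) :
    HasDirDerivAt (fun y => f y - g y) (f' - g') x v := by
  obtain ⟨L, hL, rfl⟩ := hf
  obtain ⟨K, hK, rfl⟩ := hg
  exact ⟨L - K, hL.sub hK, rfl⟩

lemma const_mul (c : ℝ) {f : E → ℝ} {f' : ℝ} (hf : HasDirDerivAt f f' x v) :
    HasDirDerivAt (fun y => c * f y) (c * f') x v := by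
  obtain ⟨L, hL, rfl⟩ := hf
  exact ⟨c • L, hL.const_mul c, rfl⟩

lemma comp {g : F → G} {f : E → F} {f' : F} {g' : G} (hg : HasDirDerivAt g g' (f x) f')
    (hf : HasDirDerivAt f f' x v) : HasDirDerivAt (fun y => g (f y)) g' x v := by
  obtain ⟨L, hL, rfl⟩ := hf
  obtain ⟨K, hK, rfl⟩ := hg
  exact ⟨K ∘L L, hK.comp x hL, rfl⟩

lemma linearMap [FiniteDimensional ℝ F] (T : F →ₗ[ℝ] G) {f : E → F} {f' : F}
    (hf : HasDirDerivAt f f' x v) : HasDirDerivAt (fun y => T (f y)) (T f') x v := by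
  obtain ⟨L, hL, rfl⟩ := hf
  exact ⟨_, T.toContinuousLinearMap.hasFDerivAt.comp x hL, rfl⟩

lemma bilinear [FiniteDimensional ℝ F] [FiniteDimensional ℝ G] (B : F →ₗ[ℝ] G →ₗ[ℝ] H) {f : E → F}
    {g : E → G} {f' : F} {g' : G} (hf : HasDirDerivAt f f' x v) (hg : HasDirDerivAt g g' x v) :
    HasDirDerivAt (fun y => B (f y) (g y)) (B f' (g x) + B (f x) g') x v := by
  obtain ⟨L, hL, rfl⟩ := hf
  obtain ⟨K, hK, rfl⟩ := hg
  exact ⟨_, B.toContinuousBilinearMap.hasFDerivAt_of_bilinear hL hK, by simp [add_comm]⟩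

variable {m n : Type*} [Fintype m] [Fintype n]

lemma dotProduct {f g : E → m → ℝ} {f' g' : m → ℝ} (hf : HasDirDerivAt f f' x v)
    (hg : HasDirDerivAt g g' x v) :
    HasDirDerivAt (fun y => f y ⬝ᵥ g y) (f' ⬝ᵥ g x + f x ⬝ᵥ g') x v :=
  hf.bilinear (dotProductBilin ℝ ℝ) hg

variable [DecidableEq n]

lemma mulVec {A : E → Matrix m n ℝ} {A' : Matrix m n ℝ} {f : E → n → ℝ} {f' : n → ℝ}
    (hA : HasDirDerivAt A A' x v) (hf : HasDirDerivAt f f' x v) :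
    HasDirDerivAt (fun y => A y *ᵥ f y) (A' *ᵥ f x + A x *ᵥ f') x v :=
  hA.bilinear (mulVecBilin ℝ ℝ) hf

lemma matrix_mul {A B : E → Matrix n n ℝ} {A' B' : Matrix n n ℝ} (hA : HasDirDerivAt A A' x v)
    (hB : HasDirDerivAt B B' x v) :
    HasDirDerivAt (fun y => A y * B y) (A' * B x + A x * B') x v :=
  hA.bilinear (LinearMap.mul ℝ (Matrix n n ℝ)) hB

lemma trace {A : E → Matrix n n ℝ} {A' : Matrix n n ℝ} (hA : HasDirDerivAt A A' x v) :
    HasDirDerivAt (fun y => (A y).trace) A'.trace x v :=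
  hA.linearMap (traceLinearMap n ℝ ℝ)

lemma of_entries {A : E → Matrix m n ℝ} {A' : Matrix m n ℝ}
    (h : ∀ i j, HasDirDerivAt (fun y => A y i j) (A' i j) x v) : HasDirDerivAt A A' x v := by
  choose L hL hLv using h
  have hpi : HasDirDerivAt (fun y i j => A y i j) (fun i j => A' i j) x v :=
    ⟨ContinuousLinearMap.pi fun i => ContinuousLinearMap.pi fun j => L i j,
      hasFDerivAt_pi.2 fun i => hasFDerivAt_pi.2 fun j => hL i j, by ext i j; exact hLv i j⟩
  exact hpi.linearMap (ofLinearEquiv ℝ).toLinearMap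

lemma nonsing_inv {A : E → Matrix n n ℝ} {A' : Matrix n n ℝ} (hA : HasDirDerivAt A A' x v)
    (hu : IsUnit (A x)) :
    HasDirDerivAt (fun y => (A y)⁻¹) (-((A x)⁻¹ * A' * (A x)⁻¹)) x v := by
  obtain ⟨U, hU⟩ := hu
  have hinv : HasDirDerivAt Ring.inverse (-((A x)⁻¹ * A' * (A x)⁻¹)) (A x) A' := by
    rw [← hU]
    exact ⟨_, hasFDerivAt_ringInverse U, by simp [coe_units_inv]⟩
  simpa only [nonsing_inv_eq_ringInverse] using hinv.comp hA

end HasDirDerivAt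

variable {m : Type*} [Fintype m] [DecidableEq m]

lemma differentiable_det : Differentiable ℝ (det : Matrix m m ℝ → ℝ) := by
  have hentry (i j : m) : Differentiable ℝ fun A : Matrix m m ℝ => A i j :=
    (entryLinearMap ℝ ℝ i j).toContinuousLinearMap.differentiable
  simp_rw [funext (det_apply (n := m) (R := ℝ))]
  exact .fun_sum fun σ _ => .const_smul (fun A => (HasFDerivAt.finsetProd fun i _ =>
    (hentry (σ i) i A).hasFDerivAt).differentiableAt) _

lemma fderiv_det {A : Matrix m m ℝ} (hA : IsUnit A.det) (B : Matrix m m ℝ) :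
    fderiv ℝ det A B = A.det * (A⁻¹ * B).trace := by
  have hline : HasDerivAt (fun t : ℝ => A + t • B) B 0 := by
    simpa using ((hasDerivAt_id (0 : ℝ)).smul_const B).const_add A
  have hdet : HasFDerivAt det (fderiv ℝ det A) (A + (0 : ℝ) • B) := by
    simpa using (differentiable_det A).hasFDerivAt
  refine (hdet.comp_hasDerivAt 0 hline).unique ?_
  set C := A⁻¹ * B with hC
  let p : Polynomial ℝ := (1 + (Polynomial.X : Polynomial ℝ) • C.map Polynomial.C).det
  have hfactor (t : ℝ) : (A + t • B).det = A.det * p.eval t := by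
    have hmul : A + t • B = A * (1 + t • C) := by
      rw [hC, Matrix.mul_add, Matrix.mul_one, mul_smul_comm, mul_nonsing_inv_cancel_left _ _ hA]
    have hp : p.eval t = (1 + t • C).det := by
      rw [← Polynomial.coe_evalRingHom, RingHom.map_det]
      congr 1
      ext i j
      simpa [one_apply, apply_ite] using mul_comm (C i j) t
    rw [hmul, det_mul, hp]
  simpa only [Function.comp_def, hfactor, p, derivative_det_one_add_X_smul] using
    (p.hasDerivAt 0).const_mul A.det

lemma HasDirDerivAt.log_det {A : E → Matrix m m ℝ} {A' : Matrix m m ℝ}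
    (hA : HasDirDerivAt A A' x v) (hu : IsUnit (A x).det) :
    HasDirDerivAt (fun y => Real.log (A y).det) ((A x)⁻¹ * A').trace x v := by
  have hlog : HasDirDerivAt (fun B : Matrix m m ℝ => Real.log B.det) ((A x)⁻¹ * A').trace
      (A x) A' :=
    ⟨_, (differentiable_det (A x)).hasFDerivAt.log hu.ne_zero, by
      simp [fderiv_det hu, hu.ne_zero]⟩
  exact hlog.comp hA

lemma HasDirDerivAt.linQuad {S A : E → Matrix m m ℝ} {u r : E → m → ℝ} {S' A' : Matrix m m ℝ}
    {u' r' : m → ℝ} (hS : HasDirDerivAt S S' x v) (hA : HasDirDerivAt A A' x v)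
    (hu : HasDirDerivAt u u' x v) (hr : HasDirDerivAt r r' x v) (hsymm : (A x).IsHermitian) :
    HasDirDerivAt (fun y => linQuad (S y) (A y) (u y) (r y))
      (_root_.linQuad (S x) A' (u' + A x *ᵥ r') (r x) + u x ⬝ᵥ r' - 1 / 2 * (A x * S').trace)
      x v := by
  have hquad : r x ⬝ᵥ A x *ᵥ r' = A x *ᵥ r' ⬝ᵥ r x := dotProduct_comm _ _
  have hquad' : r' ⬝ᵥ A x *ᵥ r x = A x *ᵥ r' ⬝ᵥ r x := by
    rw [dotProduct_mulVec, ← mulVec_transpose, ← conjTranspose_eq_transpose_of_trivial, hsymm.eq]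
  refine ((hu.dotProduct hr).add
    (((hr.dotProduct (hA.mulVec hr)).sub (hA.matrix_mul hS).trace).const_mul _)).congr_deriv ?_
  simp only [_root_.linQuad, trace_add, add_dotProduct, dotProduct_add, hquad, hquad']
  ring

end DirectionalDerivatives

section GaussianLikelihood

open scoped Matrix.Norms.L2Operator

variable {E κ m : Type*} [NormedAddCommGroup E] [NormedSpace ℝ E] [Fintype κ] {θ : E}

/-- The entrywise derivative at `θ`, in direction `c`, of the matrix-valued function `G`. -/
def matDirDeriv (G : E → Matrix m m ℝ) (c θ : E) : Matrix m m ℝ :=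
  of fun i j => fderiv ℝ (fun t => G t i j) θ c

lemma isHermitian_matDirDeriv {G : E → Matrix m m ℝ}
    (hG : ∀ᶠ t in 𝓝 θ, (G t).IsHermitian) (c : E) : (matDirDeriv G c θ).IsHermitian := by
  refine IsHermitian.ext fun i j => ?_
  rw [star_trivial, matDirDeriv, of_apply, of_apply]
  refine DFunLike.congr_fun (EventuallyEq.fderiv_eq ?_) c
  filter_upwards [hG] with t ht
  simpa using ht.apply i j

@[simp]
lemma matDirDeriv_zero_right (G : E → Matrix m m ℝ) (θ : E) : matDirDeriv G 0 θ = 0 := by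
  ext i j
  simp [matDirDeriv]

@[simp]
lemma matDirDeriv_zero_left (c θ : E) : matDirDeriv (0 : E → Matrix m m ℝ) c θ = 0 := by
  ext i j
  simp [matDirDeriv]

lemma matDirDeriv_eq_sum {ι : Type*} [Fintype ι] [DecidableEq ι] (G : (ι → ℝ) → Matrix m m ℝ)
    (c θ : ι → ℝ) : matDirDeriv G c θ = ∑ k, c k • matDirDeriv G (Pi.single k 1) θ := by
  ext i j
  conv_lhs => rw [matDirDeriv, of_apply, pi_eq_sum_univ' c, map_sum]
  simp [matDirDeriv, Matrix.sum_apply, Pi.single, Pi.zero_def]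

lemma differentiableAt_matDirDeriv {G : E → Matrix m m ℝ} {i j : m}
    (hG : ContDiffAt ℝ 2 (fun t => G t i j) θ) (c : E) :
    DifferentiableAt ℝ (fun t => matDirDeriv G c t i j) θ :=
  ((hG.fderiv_right (m := 1) (by norm_num)).differentiableAt one_ne_zero).clm_apply
    (differentiableAt_const c)

variable [Fintype m]

lemma hasDirDerivAt_residual (X : Matrix m κ ℝ) (y : m → ℝ) (η v : (κ → ℝ) × E) :
    HasDirDerivAt (fun η : (κ → ℝ) × E => y - X *ᵥ η.1) (-(X *ᵥ v.1)) η v :=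
  have hfst : HasDirDerivAt Prod.fst v.1 η v := ⟨_, hasFDerivAt_fst, rfl⟩
  (hfst.linearMap X.mulVecLin).const_sub y

lemma HasDirDerivAt.comp_snd {F : Type*} [NormedAddCommGroup F] [NormedSpace ℝ F] {g : E → F}
    {g' : F} {η v : (κ → ℝ) × E} (hg : HasDirDerivAt g g' η.2 v.2) :
    HasDirDerivAt (fun η : (κ → ℝ) × E => g η.2) g' η v :=
  have hsnd : HasDirDerivAt Prod.snd v.2 η v := ⟨_, hasFDerivAt_snd, rfl⟩
  hg.comp hsnd

/-- The matrix of the quadratic part of the centred Hessian of `gaussianLogLik`: `P` is the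
precision matrix, `D₁`, `D₂` are the derivatives of the covariance in the two directions and `H` is
its mixed second derivative. -/
def hessMat (P D₁ D₂ H : Matrix m m ℝ) : Matrix m m ℝ :=
  P * H * P - P * D₁ * P * D₂ * P - P * D₂ * P * D₁ * P

/-- The vector of the linear part of the centred Hessian of `gaussianLogLik`: `x₁`, `x₂` are the
derivatives of the mean in the two directions, `P`, `D₁`, `D₂` are as for `hessMat`. -/
def hessVec (P D₁ D₂ : Matrix m m ℝ) (x₁ x₂ : m → ℝ) : m → ℝ :=
  -((P * D₁ * P) *ᵥ x₂ + (P * D₂ * P) *ᵥ x₁)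

lemma isHermitian_hessMat {P D₁ D₂ H : Matrix m m ℝ} (hP : P.IsHermitian) (h₁ : D₁.IsHermitian)
    (h₂ : D₂.IsHermitian) (hH : H.IsHermitian) : (hessMat P D₁ D₂ H).IsHermitian := by
  simp only [hessMat, IsHermitian, conjTranspose_sub, conjTranspose_mul, hP.eq, h₁.eq, h₂.eq,
    hH.eq, Matrix.mul_assoc]
  abel

variable [DecidableEq m] {G : E → Matrix m m ℝ} {X : Matrix m κ ℝ}

lemma hasDirDerivAt_matDirDeriv (hG : ∀ i j, DifferentiableAt ℝ (fun t => G t i j) θ) (c : E) :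
    HasDirDerivAt G (matDirDeriv G c θ) θ c :=
  .of_entries fun i j => .of_differentiableAt (hG i j)

lemma isHermitian_inv_mul_matDirDeriv_mul_inv (hG : ∀ᶠ t in 𝓝 θ, (G t).IsHermitian) (c : E) :
    ((G θ)⁻¹ * matDirDeriv G c θ * (G θ)⁻¹).IsHermitian := by
  simpa only [hG.self_of_nhds.inv.eq] using
    isHermitian_mul_mul_conjTranspose (G θ)⁻¹ (isHermitian_matDirDeriv hG c)

/-- The log-likelihood of `y ∼ N(Xβ, G(θ))` as a function of `η = (β, θ)`. -/
def gaussianLogLik (G : E → Matrix m m ℝ) (X : Matrix m κ ℝ) (y : m → ℝ) (η : (κ → ℝ) × E) : ℝ :=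
  -((Fintype.card m : ℝ) / 2) * Real.log (2 * Real.pi) - 1 / 2 * Real.log (G η.2).det
    - 1 / 2 * ((y - X *ᵥ η.1) ⬝ᵥ (G η.2)⁻¹ *ᵥ (y - X *ᵥ η.1))

/-- The derivative of `gaussianLogLik` in direction `v`. -/
def gaussianScore (G : E → Matrix m m ℝ) (X : Matrix m κ ℝ) (y : m → ℝ) (v η : (κ → ℝ) × E) : ℝ :=
  linQuad (G η.2) ((G η.2)⁻¹ * matDirDeriv G v.2 η.2 * (G η.2)⁻¹) ((G η.2)⁻¹ *ᵥ (X *ᵥ v.1))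
    (y - X *ᵥ η.1)

/-- The Fisher information of `gaussianLogLik` as a bilinear form in the directions `v` and `w`. -/
def fisherForm (G : E → Matrix m m ℝ) (X : Matrix m κ ℝ) (θ : E) (v w : (κ → ℝ) × E) : ℝ :=
  X *ᵥ v.1 ⬝ᵥ (G θ)⁻¹ *ᵥ (X *ᵥ w.1)
    + 1 / 2 * ((G θ)⁻¹ * matDirDeriv G v.2 θ * (G θ)⁻¹ * matDirDeriv G w.2 θ).trace

lemma fisherForm_comm (hG : (G θ).IsHermitian) (v w : (κ → ℝ) × E) :
    fisherForm G X θ v w = fisherForm G X θ w v := by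
  have hinv : ((G θ)⁻¹)ᵀ = (G θ)⁻¹ := by simpa using hG.inv.eq
  rw [fisherForm, fisherForm, dotProduct_mulVec, ← mulVec_transpose, hinv, dotProduct_comm,
    Matrix.mul_assoc, trace_mul_comm, ← Matrix.mul_assoc]

lemma linQuadVar_score_eq_fisherForm (hG : (G θ).PosDef) (v : (κ → ℝ) × E) :
    linQuadVar (G θ) ((G θ)⁻¹ * matDirDeriv G v.2 θ * (G θ)⁻¹) ((G θ)⁻¹ *ᵥ (X *ᵥ v.1)) =
      fisherForm G X θ v v := by
  have hdet : IsUnit (G θ).det := (isUnit_iff_isUnit_det _).1 hG.isUnit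
  rw [linQuadVar, fisherForm, mulVec_mulVec _ (G θ), mul_nonsing_inv _ hdet, one_mulVec,
    nonsing_inv_mul_cancel_right _ _ hdet, ← Matrix.mul_assoc, ← Matrix.mul_assoc,
    nonsing_inv_mul_cancel_right _ _ hdet, dotProduct_comm]

lemma hasDirDerivAt_gaussianLogLik {η : (κ → ℝ) × E}
    (hG : ∀ i j, DifferentiableAt ℝ (fun t => G t i j) η.2) (hpd : (G η.2).PosDef) (y : m → ℝ)
    (v : (κ → ℝ) × E) :
    HasDirDerivAt (gaussianLogLik G X y) (gaussianScore G X y v η) η v := by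
  have hdet : IsUnit (G η.2).det := (isUnit_iff_isUnit_det _).1 hpd.isUnit
  have hG' := (hasDirDerivAt_matDirDeriv hG v.2).comp_snd (κ := κ)
  have hzero : HasDirDerivAt (fun _ : (κ → ℝ) × E => (0 : Matrix m m ℝ)) 0 η v := .const 0
  have hquad := hzero.linQuad (hG'.nonsing_inv hpd.isUnit) (.const (0 : m → ℝ))
    (hasDirDerivAt_residual X y η v) hpd.inv.isHermitian
  have h := ((hG'.log_det hdet).const_mul (1 / 2)).const_sub
    (-((Fintype.card m : ℝ) / 2) * Real.log (2 * Real.pi)) |>.sub hquad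
  have hfun : gaussianLogLik G X y = fun η => -((Fintype.card m : ℝ) / 2) * Real.log (2 * Real.pi)
      - 1 / 2 * Real.log (G η.2).det - linQuad 0 (G η.2)⁻¹ 0 (y - X *ᵥ η.1) := by
    ext η
    simp [gaussianLogLik, linQuad]
  rw [hfun]
  refine h.congr_deriv ?_
  simp only [gaussianScore, linQuad, nonsing_inv_mul_cancel_right _ _ hdet, mulVec_neg, neg_mulVec,
    dotProduct_neg, neg_dotProduct, Matrix.mul_zero, trace_zero, zero_add, zero_dotProduct]
  ring

lemma hasDirDerivAt_gaussianScore {η : (κ → ℝ) × E}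
    (hG : ∀ i j, ContDiffAt ℝ 2 (fun t => G t i j) η.2) (hpd : ∀ᶠ t in 𝓝 η.2, (G t).PosDef)
    (y : m → ℝ) (v w : (κ → ℝ) × E) :
    HasDirDerivAt (gaussianScore G X y v)
      (linQuad (G η.2)
        (hessMat (G η.2)⁻¹ (matDirDeriv G w.2 η.2) (matDirDeriv G v.2 η.2)
          (matDirDeriv (matDirDeriv G v.2) w.2 η.2))
        (hessVec (G η.2)⁻¹ (matDirDeriv G w.2 η.2) (matDirDeriv G v.2 η.2) (X *ᵥ w.1) (X *ᵥ v.1))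
        (y - X *ᵥ η.1) - fisherForm G X η.2 w v) η w := by
  have hGd := (hasDirDerivAt_matDirDeriv (fun i j => (hG i j).differentiableAt two_ne_zero)
    w.2).comp_snd (κ := κ)
  have hGdd := (hasDirDerivAt_matDirDeriv (fun i j => differentiableAt_matDirDeriv (hG i j) v.2)
    w.2).comp_snd (κ := κ)
  have hinv := hGd.nonsing_inv hpd.self_of_nhds.isUnit
  have hsymm := isHermitian_inv_mul_matDirDeriv_mul_inv (hpd.mono fun _ h => h.isHermitian) v.2
  refine (hGd.linQuad ((hinv.matrix_mul hGdd).matrix_mul hinv) (hinv.mulVec (.const (X *ᵥ v.1)))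
    (hasDirDerivAt_residual X y η w) hsymm).congr_deriv ?_
  have hmat : (-((G η.2)⁻¹ * matDirDeriv G w.2 η.2 * (G η.2)⁻¹) * matDirDeriv G v.2 η.2
      + (G η.2)⁻¹ * matDirDeriv (matDirDeriv G v.2) w.2 η.2) * (G η.2)⁻¹
      + (G η.2)⁻¹ * matDirDeriv G v.2 η.2 * -((G η.2)⁻¹ * matDirDeriv G w.2 η.2 * (G η.2)⁻¹) =
        hessMat (G η.2)⁻¹ (matDirDeriv G w.2 η.2) (matDirDeriv G v.2 η.2)
          (matDirDeriv (matDirDeriv G v.2) w.2 η.2) := by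
    simp only [hessMat]
    noncomm_ring
  have hcross : ((G η.2)⁻¹ * matDirDeriv G v.2 η.2 * (G η.2)⁻¹ * matDirDeriv G w.2 η.2).trace =
      ((G η.2)⁻¹ * matDirDeriv G w.2 η.2 * (G η.2)⁻¹ * matDirDeriv G v.2 η.2).trace := by
    rw [Matrix.mul_assoc, trace_mul_comm, ← Matrix.mul_assoc]
  rw [hmat, hcross, fisherForm, hessVec, dotProduct_comm (X *ᵥ w.1)]
  simp only [mulVec_zero, add_zero, neg_mulVec, mulVec_neg, dotProduct_neg, neg_add]
  ring_nf

lemma fderiv_fderiv_gaussianLogLik {η : (κ → ℝ) × E}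
    (hG : ∀ i j, ContDiffAt ℝ 2 (fun t => G t i j) η.2) (hpd : ∀ᶠ t in 𝓝 η.2, (G t).PosDef)
    (y : m → ℝ) (v w : (κ → ℝ) × E) :
    fderiv ℝ (fun η' => fderiv ℝ (gaussianLogLik G X y) η' v) η w =
      linQuad (G η.2)
        (hessMat (G η.2)⁻¹ (matDirDeriv G w.2 η.2) (matDirDeriv G v.2 η.2)
          (matDirDeriv (matDirDeriv G v.2) w.2 η.2))
        (hessVec (G η.2)⁻¹ (matDirDeriv G w.2 η.2) (matDirDeriv G v.2 η.2) (X *ᵥ w.1) (X *ᵥ v.1))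
        (y - X *ᵥ η.1) - fisherForm G X η.2 w v := by
  rw [← (hasDirDerivAt_gaussianScore hG hpd y v w).fderiv_apply]
  have hdiff : ∀ᶠ t in 𝓝 η.2, ∀ i j, DifferentiableAt ℝ (fun t => G t i j) t :=
    eventually_all.2 fun i => eventually_all.2 fun j =>
      ((hG i j).eventually (by simp)).mono fun _ h => h.differentiableAt two_ne_zero
  refine DFunLike.congr_fun (EventuallyEq.fderiv_eq ?_) w
  filter_upwards [continuous_snd.continuousAt.eventually (hdiff.and hpd)] with η' h
  exact (hasDirDerivAt_gaussianLogLik h.1 h.2 y v).fderiv_apply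

end GaussianLikelihood

section OperatorNormBounds

open scoped Matrix.Norms.L2Operator

variable {m : Type*} [Fintype m]

lemma linQuadVar_nonneg {S A : Matrix m m ℝ} (hS : S.PosSemidef) (hA : A.IsHermitian)
    (u : m → ℝ) : 0 ≤ linQuadVar S A u := by
  classical
  obtain ⟨C, lam, hC, hlam⟩ := exists_mul_transpose_eq_and_diagonal hS hA
  rw [linQuadVar_of_diagonal hC hlam]
  positivity

variable [DecidableEq m]

lemma l2_opNorm_le_of_abs_spectrum_le {A : Matrix m m ℝ} (hA : A.IsHermitian) {c : ℝ} (hc : 0 ≤ c)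
    (h : ∀ x ∈ spectrum ℝ A, |x| ≤ c) : ‖A‖ ≤ c := by
  rw [← cfc_id ℝ A hA.isSelfAdjoint]
  exact norm_cfc_le hc h

lemma l2_opNorm_le_sSup_abs_spectrum {A : Matrix m m ℝ} (hA : A.IsHermitian) :
    ‖A‖ ≤ sSup ((fun x => |x|) '' spectrum ℝ A) := by
  refine l2_opNorm_le_of_abs_spectrum_le hA
    (Real.sSup_nonneg (Set.forall_mem_image.2 fun _ _ => abs_nonneg _)) fun x hx =>
      le_csSup ?_ (Set.mem_image_of_mem _ hx)
  rw [hA.spectrum_real_eq_range_eigenvalues]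
  exact ((Set.finite_range _).image _).bddAbove

lemma mulVec_dotProduct_self_le {k : Type*} [Fintype k] (A : Matrix k m ℝ)
    (x : m → ℝ) : A *ᵥ x ⬝ᵥ A *ᵥ x ≤ ‖A‖ ^ 2 * (x ⬝ᵥ x) := by
  have h := pow_le_pow_left₀ (norm_nonneg _) (l2_opNorm_mulVec A (WithLp.toLp 2 x)) 2
  rw [mul_pow, EuclideanSpace.real_norm_sq_eq, EuclideanSpace.real_norm_sq_eq] at h
  simpa [dotProduct, sq] using h

lemma dotProduct_self_le_l2_opNorm_mul_inv {S : Matrix m m ℝ} (hS : S.PosDef) (x : m → ℝ) :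
    x ⬝ᵥ x ≤ ‖S‖ * (x ⬝ᵥ S⁻¹ *ᵥ x) := by
  obtain ⟨C, hC⟩ := exists_mul_transpose_eq hS.posSemidef
  have hunit : IsUnit C.det := by
    have := (isUnit_iff_isUnit_det _).1 hS.isUnit
    rw [← hC, det_mul, det_transpose] at this
    exact isUnit_of_mul_isUnit_left this
  have hinv : x ⬝ᵥ S⁻¹ *ᵥ x = C⁻¹ *ᵥ x ⬝ᵥ C⁻¹ *ᵥ x := by
    rw [← hC, Matrix.mul_inv_rev, ← transpose_nonsing_inv, ← mulVec_mulVec, dotProduct_mulVec,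
      vecMul_transpose]
  calc x ⬝ᵥ x = C *ᵥ (C⁻¹ *ᵥ x) ⬝ᵥ C *ᵥ (C⁻¹ *ᵥ x) := by
        rw [mulVec_mulVec, mul_nonsing_inv _ hunit, one_mulVec]
    _ ≤ ‖C‖ ^ 2 * (C⁻¹ *ᵥ x ⬝ᵥ C⁻¹ *ᵥ x) := mulVec_dotProduct_self_le _ _
    _ = ‖S‖ * (x ⬝ᵥ S⁻¹ *ᵥ x) := by rw [sq, l2_opNorm_mul_self_of_mul_transpose_eq hC, hinv]

lemma linQuadVar_le {S A : Matrix m m ℝ} (hS : S.PosSemidef) (hA : A.IsHermitian) (u : m → ℝ) :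
    linQuadVar S A u ≤ ‖S‖ * (u ⬝ᵥ u) + Fintype.card m * (‖A‖ * ‖S‖) ^ 2 / 2 := by
  obtain ⟨C, lam, hC, hlam⟩ := exists_mul_transpose_eq_and_diagonal hS hA
  have hlinear : ∑ i, (Cᵀ *ᵥ u) i ^ 2 ≤ ‖S‖ * (u ⬝ᵥ u) := by
    have h := mulVec_dotProduct_self_le Cᵀ u
    rw [← conjTranspose_eq_transpose_of_trivial, l2_opNorm_conjTranspose, sq ‖C‖,
      l2_opNorm_mul_self_of_mul_transpose_eq hC, conjTranspose_eq_transpose_of_trivial] at h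
    simpa only [dotProduct, sq] using h
  have hquad : ∑ i, lam i ^ 2 ≤ Fintype.card m * (‖A‖ * ‖S‖) ^ 2 := by
    rw [← nsmul_eq_mul, ← Finset.card_univ]
    exact Finset.sum_le_card_nsmul _ _ _ fun i _ =>
      sq_le_sq.2 ((abs_le_l2_opNorm_mul_of_diagonal hC hlam i).trans (le_abs_self _))
  rw [linQuadVar_of_diagonal hC hlam, Finset.sum_add_distrib, ← Finset.sum_div]
  gcongr

lemma l2_opNorm_mul_mul_le (A B C : Matrix m m ℝ) : ‖A * B * C‖ ≤ ‖A‖ * ‖B‖ * ‖C‖ :=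
  (l2_opNorm_mul _ _).trans (mul_le_mul_of_nonneg_right (l2_opNorm_mul _ _) (norm_nonneg _))

variable {P D₁ D₂ H : Matrix m m ℝ} {K : ℝ}

lemma l2_opNorm_hessMat_le (hP : ‖P‖ ≤ K) (h₁ : ‖D₁‖ ≤ K) (h₂ : ‖D₂‖ ≤ K) (hH : ‖H‖ ≤ K) :
    ‖hessMat P D₁ D₂ H‖ ≤ K ^ 3 + 2 * K ^ 5 := by
  have hK : 0 ≤ K := (norm_nonneg _).trans hP
  have htriple {A B : Matrix m m ℝ} (hA : ‖A‖ ≤ K) (hB : ‖B‖ ≤ K) : ‖P * A * P * B * P‖ ≤ K ^ 5 :=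
    calc ‖P * A * P * B * P‖ ≤ ‖P‖ * ‖A‖ * ‖P‖ * ‖B‖ * ‖P‖ :=
          (l2_opNorm_mul_mul_le _ _ _).trans (by gcongr; exact l2_opNorm_mul_mul_le _ _ _)
      _ ≤ K * K * K * K * K := by gcongr
      _ = K ^ 5 := by ring
  have hsingle : ‖P * H * P‖ ≤ K ^ 3 :=
    calc ‖P * H * P‖ ≤ ‖P‖ * ‖H‖ * ‖P‖ := l2_opNorm_mul_mul_le _ _ _
      _ ≤ K * K * K := by gcongr
      _ = K ^ 3 := by ring
  calc ‖hessMat P D₁ D₂ H‖ ≤ ‖P * H * P‖ + ‖P * D₁ * P * D₂ * P‖ + ‖P * D₂ * P * D₁ * P‖ :=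
        (norm_sub_le _ _).trans (by gcongr; exact norm_sub_le _ _)
    _ ≤ K ^ 3 + K ^ 5 + K ^ 5 := by gcongr <;> apply htriple <;> assumption
    _ = K ^ 3 + 2 * K ^ 5 := by ring

lemma hessVec_dotProduct_self_le (hP : ‖P‖ ≤ K) (h₁ : ‖D₁‖ ≤ K) (h₂ : ‖D₂‖ ≤ K)
    (x₁ x₂ : m → ℝ) :
    hessVec P D₁ D₂ x₁ x₂ ⬝ᵥ hessVec P D₁ D₂ x₁ x₂ ≤ 2 * K ^ 6 * (x₁ ⬝ᵥ x₁ + x₂ ⬝ᵥ x₂) := by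
  have hK : 0 ≤ K := (norm_nonneg _).trans hP
  have hpart {D : Matrix m m ℝ} (hD : ‖D‖ ≤ K) (x : m → ℝ) :
      (P * D * P) *ᵥ x ⬝ᵥ (P * D * P) *ᵥ x ≤ K ^ 6 * (x ⬝ᵥ x) := by
    have hnorm : ‖P * D * P‖ ≤ K * K * K := (l2_opNorm_mul_mul_le _ _ _).trans (by gcongr)
    calc (P * D * P) *ᵥ x ⬝ᵥ (P * D * P) *ᵥ x ≤ ‖P * D * P‖ ^ 2 * (x ⬝ᵥ x) :=
          mulVec_dotProduct_self_le _ _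
      _ ≤ (K * K * K) ^ 2 * (x ⬝ᵥ x) := by
          gcongr
          simpa using dotProduct_star_self_nonneg x
      _ = K ^ 6 * (x ⬝ᵥ x) := by ring
  have hparallelogram (a b : m → ℝ) : (a + b) ⬝ᵥ (a + b) ≤ 2 * (a ⬝ᵥ a) + 2 * (b ⬝ᵥ b) := by
    have h : 0 ≤ (a - b) ⬝ᵥ (a - b) := by simpa using dotProduct_star_self_nonneg (a - b)
    simp only [sub_dotProduct, dotProduct_sub, add_dotProduct, dotProduct_add] at h ⊢
    linarith
  rw [hessVec, neg_dotProduct_neg]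
  linarith [hparallelogram ((P * D₁ * P) *ᵥ x₂) ((P * D₂ * P) *ᵥ x₁), hpart h₁ x₂, hpart h₂ x₁]

lemma linQuadVar_hess_le {S : Matrix m m ℝ} (hS : S.PosDef) (hD₁ : D₁.IsHermitian)
    (hD₂ : D₂.IsHermitian) (hH : H.IsHermitian) (hSK : ‖S‖ ≤ K) (hSinv : ‖S⁻¹‖ ≤ K)
    (hD₁K : ‖D₁‖ ≤ K) (hD₂K : ‖D₂‖ ≤ K) (hHK : ‖H‖ ≤ K) (x₁ x₂ : m → ℝ) :
    linQuadVar S (hessMat S⁻¹ D₁ D₂ H) (hessVec S⁻¹ D₁ D₂ x₁ x₂) ≤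
      2 * K ^ 8 * (x₁ ⬝ᵥ S⁻¹ *ᵥ x₁ + x₂ ⬝ᵥ S⁻¹ *ᵥ x₂)
        + Fintype.card m * (K ^ 4 + 2 * K ^ 6) ^ 2 / 2 := by
  have hK : 0 ≤ K := (norm_nonneg _).trans hSK
  have hlength (x : m → ℝ) : x ⬝ᵥ x ≤ K * (x ⬝ᵥ S⁻¹ *ᵥ x) :=
    (dotProduct_self_le_l2_opNorm_mul_inv hS x).trans
      (mul_le_mul_of_nonneg_right hSK (hS.inv.posSemidef.dotProduct_mulVec_nonneg x))
  have hvec : hessVec S⁻¹ D₁ D₂ x₁ x₂ ⬝ᵥ hessVec S⁻¹ D₁ D₂ x₁ x₂ ≤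
      2 * K ^ 6 * (K * (x₁ ⬝ᵥ S⁻¹ *ᵥ x₁) + K * (x₂ ⬝ᵥ S⁻¹ *ᵥ x₂)) :=
    (hessVec_dotProduct_self_le hSinv hD₁K hD₂K x₁ x₂).trans
      (by gcongr <;> exact hlength _)
  have hmat := l2_opNorm_hessMat_le hSinv hD₁K hD₂K hHK
  have hvec_nonneg : 0 ≤ hessVec S⁻¹ D₁ D₂ x₁ x₂ ⬝ᵥ hessVec S⁻¹ D₁ D₂ x₁ x₂ := by
    simpa using dotProduct_star_self_nonneg (hessVec S⁻¹ D₁ D₂ x₁ x₂)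
  calc linQuadVar S (hessMat S⁻¹ D₁ D₂ H) (hessVec S⁻¹ D₁ D₂ x₁ x₂)
      ≤ ‖S‖ * (hessVec S⁻¹ D₁ D₂ x₁ x₂ ⬝ᵥ hessVec S⁻¹ D₁ D₂ x₁ x₂)
          + Fintype.card m * (‖hessMat S⁻¹ D₁ D₂ H‖ * ‖S‖) ^ 2 / 2 :=
        linQuadVar_le hS.posSemidef (isHermitian_hessMat hS.inv.isHermitian hD₁ hD₂ hH) _
    _ ≤ K * (2 * K ^ 6 * (K * (x₁ ⬝ᵥ S⁻¹ *ᵥ x₁) + K * (x₂ ⬝ᵥ S⁻¹ *ᵥ x₂)))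
          + Fintype.card m * ((K ^ 3 + 2 * K ^ 5) * K) ^ 2 / 2 := by gcongr
    _ = _ := by ring

end OperatorNormBounds

namespace SpatialModel

open scoped Matrix.Norms.L2Operator

variable {d p q : ℕ} {M : SpatialModel d p q}

lemma A1.contDiffAt_Γ (hA1 : M.A1) (n : ℕ) (i j : Fin (M.N n)) :
    ContDiffAt ℝ 2 (fun θ => M.Γ n θ i j) M.θ0 :=
  (hA1.1 n i j).contDiffAt (M.hΘ.mem_nhds M.hθ0)

lemma A1.eventually_posDef_Γ (hA1 : M.A1) (n : ℕ) : ∀ᶠ θ in 𝓝 M.θ0, (M.Γ n θ).PosDef :=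
  (M.hΘ.eventually_mem M.hθ0).mono (hA1.2 n)

lemma A1.eventually_isHermitian_Γ (hA1 : M.A1) (n : ℕ) :
    ∀ᶠ θ in 𝓝 M.θ0, (M.Γ n θ).IsHermitian :=
  (hA1.eventually_posDef_Γ n).mono fun _ h => h.isHermitian

lemma A1.posDef_Γ (hA1 : M.A1) (n : ℕ) : (M.Γ n M.θ0).PosDef :=
  hA1.2 n _ M.hθ0

lemma A1.isHermitian_matDirDeriv_Γ (hA1 : M.A1) (n : ℕ) (c : Fin q → ℝ) :
    (matDirDeriv (M.Γ n) c M.θ0).IsHermitian :=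
  isHermitian_matDirDeriv (hA1.eventually_isHermitian_Γ n) c

lemma A1.isHermitian_matDirDeriv_matDirDeriv_Γ (hA1 : M.A1) (n : ℕ) (c c' : Fin q → ℝ) :
    (matDirDeriv (matDirDeriv (M.Γ n) c) c' M.θ0).IsHermitian :=
  isHermitian_matDirDeriv ((hA1.eventually_isHermitian_Γ n).eventually_nhds.mono fun _ h =>
    isHermitian_matDirDeriv h c) c'

/-- `K` bounds the operator norms of `Γ`, `Γ⁻¹`, `Γ_k` and `Γ_{kk'}` at the true parameter. -/
structure IsNormBound (M : SpatialModel d p q) (K : ℝ) (n : ℕ) : Prop where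
  norm_Γ_le : ‖M.Γ n M.θ0‖ ≤ K
  norm_inv_Γ_le : ‖(M.Γ n M.θ0)⁻¹‖ ≤ K
  norm_Γd_le : ∀ k, ‖M.Γd n k M.θ0‖ ≤ K
  norm_Γdd_le : ∀ k k', ‖M.Γdd n k k' M.θ0‖ ≤ K

lemma A2.exists_eventually_norm_Γ_le (hA2 : M.A2) (hA1 : M.A1) :
    ∃ K, ∀ᶠ n in atTop, ‖M.Γ n M.θ0‖ ≤ K := by
  obtain ⟨C, hC⟩ := hA2.1
  refine ⟨C + 1, (hC.eventually_le_const (lt_add_one C)).mono fun n hn => ?_⟩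
  have habs : ∀ x ∈ spectrum ℝ (M.Γ n M.θ0), |x| = x := by
    rw [(hA1.posDef_Γ n).isHermitian.spectrum_real_eq_range_eigenvalues]
    rintro _ ⟨i, rfl⟩
    exact abs_of_pos ((hA1.posDef_Γ n).eigenvalues_pos i)
  refine (l2_opNorm_le_sSup_abs_spectrum (hA1.posDef_Γ n).isHermitian).trans ?_
  rwa [Set.image_congr habs, Set.image_id']

lemma exists_eventually_l2_opNorm_le_of_tendsto {N : ℕ → ℕ}
    {A : ∀ n, Matrix (Fin (N n)) (Fin (N n)) ℝ} (hA : ∀ n, (A n).IsHermitian)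
    (h : ∃ C, Tendsto (fun n => sSup ((fun x => |x|) '' spectrum ℝ (A n))) atTop (𝓝 C)) :
    ∃ K, ∀ᶠ n in atTop, ‖A n‖ ≤ K := by
  obtain ⟨C, hC⟩ := h
  exact ⟨C + 1, (hC.eventually_le_const (lt_add_one C)).mono fun n hn =>
    (l2_opNorm_le_sSup_abs_spectrum (hA n)).trans hn⟩

lemma A6.exists_norm_inv_Γ_le (hA6 : M.A6) (hA1 : M.A1) :
    ∃ K, ∀ n, ‖(M.Γ n M.θ0)⁻¹‖ ≤ K := by
  obtain ⟨C, hC⟩ := hA6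
  exact ⟨|C|, fun n => l2_opNorm_le_of_abs_spectrum_le (hA1.posDef_Γ n).inv.isHermitian
    (abs_nonneg C) fun x hx => (hC n x hx).le.trans (le_abs_self C)⟩

lemma exists_eventually_isNormBound (hA1 : M.A1) (hA2 : M.A2) (hA6 : M.A6) :
    ∃ K, ∀ᶠ n in atTop, M.IsNormBound K n := by
  obtain ⟨K₀, h₀⟩ := hA2.exists_eventually_norm_Γ_le hA1
  obtain ⟨K₁, h₁⟩ := hA6.exists_norm_inv_Γ_le hA1
  choose K₂ h₂ using fun k => exists_eventually_l2_opNorm_le_of_tendsto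
    (fun n => hA1.isHermitian_matDirDeriv_Γ n (Pi.single k 1)) (hA2.2.1 k)
  choose K₃ h₃ using fun k k' => exists_eventually_l2_opNorm_le_of_tendsto
    (fun n => hA1.isHermitian_matDirDeriv_matDirDeriv_Γ n (Pi.single k' 1) (Pi.single k 1))
    (hA2.2.2 k k')
  obtain ⟨B₂, hB₂⟩ := (Set.finite_range K₂).bddAbove
  obtain ⟨B₃, hB₃⟩ := (Set.finite_range fun k : Fin q × Fin q => K₃ k.1 k.2).bddAbove
  refine ⟨max (max K₀ K₁) (max B₂ B₃), ?_⟩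
  filter_upwards [h₀, eventually_all.2 h₂, eventually_all.2 fun k => eventually_all.2 (h₃ k)]
    with n hn₀ hn₂ hn₃
  exact {
    norm_Γ_le := hn₀.trans (by simp)
    norm_inv_Γ_le := (h₁ n).trans (by simp)
    norm_Γd_le := fun k => (hn₂ k).trans ((hB₂ ⟨k, rfl⟩).trans (by simp))
    norm_Γdd_le := fun k k' => (hn₃ k k').trans ((hB₃ ⟨(k, k'), rfl⟩).trans (by simp)) }

lemma IsNormBound.nonneg {K : ℝ} {n : ℕ} (h : M.IsNormBound K n) : 0 ≤ K :=
  (norm_nonneg _).trans h.norm_Γ_le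

lemma IsNormBound.norm_matDirDeriv_le {K : ℝ} {n : ℕ} (h : M.IsNormBound K n) (c : Fin q → ℝ) :
    ‖matDirDeriv (M.Γ n) c M.θ0‖ ≤ (∑ k, |c k|) * K := by
  rw [matDirDeriv_eq_sum, Finset.sum_mul]
  refine norm_sum_le_of_le _ fun k _ => ?_
  rw [norm_smul, Real.norm_eq_abs]
  exact mul_le_mul_of_nonneg_left (h.norm_Γd_le k) (abs_nonneg _)

lemma IsNormBound.norm_matDirDeriv_paramBasis_le {K : ℝ} {n : ℕ} (h : M.IsNormBound K n)
    (i : Fin p ⊕ Fin q) : ‖matDirDeriv (M.Γ n) (paramBasis p q i).2 M.θ0‖ ≤ K := by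
  obtain j | k := i
  · simpa [paramBasis] using h.nonneg
  · exact h.norm_Γd_le k

lemma IsNormBound.norm_matDirDeriv_matDirDeriv_paramBasis_le {K : ℝ} {n : ℕ}
    (h : M.IsNormBound K n) (i i' : Fin p ⊕ Fin q) :
    ‖matDirDeriv (matDirDeriv (M.Γ n) (paramBasis p q i').2) (paramBasis p q i).2 M.θ0‖ ≤ K := by
  obtain j | k := i
  · simpa [paramBasis] using h.nonneg
  obtain j' | k' := i'
  · have hzero : matDirDeriv (M.Γ n) (paramBasis p q (Sum.inl j')).2 = 0 := by
      ext θ a b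
      simp [paramBasis, matDirDeriv]
    simpa [hzero] using h.nonneg
  · exact h.norm_Γdd_le k k'

/-- The parameter direction `(b, c) ∈ ℝ^p × ℝ^q` with coordinates `t` in the basis `paramBasis`. -/
abbrev paramDir (p q : ℕ) : (Fin p ⊕ Fin q → ℝ) ≃ₗ[ℝ] (Fin p → ℝ) × (Fin q → ℝ) :=
  LinearEquiv.sumArrowLequivProdArrow (Fin p) (Fin q) ℝ ℝ

lemma paramDir_single (i : Fin p ⊕ Fin q) : paramDir p q (Pi.single i 1) = paramBasis p q i := by
  obtain j | k := i <;> ext <;> simp [paramBasis, Pi.single_apply]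

lemma paramDir_eq_sum (t : Fin p ⊕ Fin q → ℝ) :
    paramDir p q t = ∑ i, t i • paramBasis p q i := by
  conv_lhs => rw [pi_eq_sum_univ' t, map_sum]
  refine Finset.sum_congr rfl fun i _ => ?_
  rw [map_smul, ← paramDir_single]

lemma dotProduct_Iβ_mulVec (n : ℕ) (b b' : Fin p → ℝ) :
    b ⬝ᵥ M.Iβ n *ᵥ b' = M.X n *ᵥ b ⬝ᵥ (M.Γ n M.θ0)⁻¹ *ᵥ (M.X n *ᵥ b') := by
  rw [Iβ, Matrix.mul_assoc, ← mulVec_mulVec, ← mulVec_mulVec, dotProduct_mulVec, vecMul_transpose]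

lemma dotProduct_Iθ_mulVec (n : ℕ) (c c' : Fin q → ℝ) :
    c ⬝ᵥ M.Iθ n *ᵥ c' =
      1 / 2 * ((M.Γ n M.θ0)⁻¹ * matDirDeriv (M.Γ n) c M.θ0 * (M.Γ n M.θ0)⁻¹ *
        matDirDeriv (M.Γ n) c' M.θ0).trace := by
  have htmat (k k' : Fin q) : M.tmat n k k' =
      ((M.Γ n M.θ0)⁻¹ * matDirDeriv (M.Γ n) (Pi.single k 1) M.θ0 * (M.Γ n M.θ0)⁻¹ *
        matDirDeriv (M.Γ n) (Pi.single k' 1) M.θ0).trace := rfl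
  rw [matDirDeriv_eq_sum _ c, matDirDeriv_eq_sum _ c']
  simp only [Matrix.sum_mul, Matrix.mul_smul, Matrix.smul_mul, trace_sum,
    trace_smul, smul_eq_mul, ← htmat, dotProduct, mulVec, Iθ, of_apply, Finset.mul_sum]
  rw [Finset.sum_comm]
  exact Finset.sum_congr rfl fun k' _ => Finset.sum_congr rfl fun k _ => by ring

/-- The Fisher information matrix `I(η) = diag{I(β), I(θ)}` at the true parameter. -/
def fisherInfo (M : SpatialModel d p q) (n : ℕ) : Matrix (Fin p ⊕ Fin q) (Fin p ⊕ Fin q) ℝ :=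
  fromBlocks (M.Iβ n) 0 0 (M.Iθ n)

lemma dotProduct_fisherInfo_mulVec (n : ℕ) (s t : Fin p ⊕ Fin q → ℝ) :
    s ⬝ᵥ M.fisherInfo n *ᵥ t =
      fisherForm (M.Γ n) (M.X n) M.θ0 (paramDir p q s) (paramDir p q t) := by
  have hsplit (r : Fin p ⊕ Fin q → ℝ) : r = Sum.elim (r ∘ Sum.inl) (r ∘ Sum.inr) :=
    (Sum.elim_comp_inl_inr r).symm
  rw [fisherInfo, hsplit s, hsplit t, fromBlocks_mulVec, sumElim_dotProduct_sumElim]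
  simp only [zero_mulVec, add_zero, zero_add, Sum.elim_comp_inl, Sum.elim_comp_inr,
    dotProduct_Iβ_mulVec, dotProduct_Iθ_mulVec]
  rfl

lemma fisherInfo_apply (n : ℕ) (i i' : Fin p ⊕ Fin q) :
    M.fisherInfo n i i' =
      fisherForm (M.Γ n) (M.X n) M.θ0 (paramBasis p q i) (paramBasis p q i') := by
  rw [← paramDir_single, ← paramDir_single, ← dotProduct_fisherInfo_mulVec]
  simp

lemma A1.posSemidef_fisherInfo (hA1 : M.A1) (n : ℕ) : (M.fisherInfo n).PosSemidef := by
  refine .of_dotProduct_mulVec_nonneg (IsHermitian.ext fun i i' => ?_) fun t => ?_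
  · rw [star_trivial, fisherInfo_apply, fisherInfo_apply]
    exact fisherForm_comm (hA1.posDef_Γ n).isHermitian _ _
  · rw [star_trivial, dotProduct_fisherInfo_mulVec,
      ← linQuadVar_score_eq_fisherForm (hA1.posDef_Γ n)]
    exact linQuadVar_nonneg (hA1.posDef_Γ n).posSemidef
      (isHermitian_inv_mul_matDirDeriv_mul_inv (hA1.eventually_isHermitian_Γ n) _) _

lemma loglik_eq_gaussianLogLik (n : ℕ) (ω : M.Ωs) :
    (fun η => M.loglik n η ω) = gaussianLogLik (M.Γ n) (M.X n) (M.y n ω) := by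
  ext η
  simp [loglik, gaussianLogLik]

lemma A1.dotProduct_score (hA1 : M.A1) (n : ℕ) (t : Fin p ⊕ Fin q → ℝ) (ω : M.Ωs) :
    t ⬝ᵥ M.score n (M.β0, M.θ0) ω =
      gaussianScore (M.Γ n) (M.X n) (M.y n ω) (paramDir p q t) (M.β0, M.θ0) := by
  rw [← (hasDirDerivAt_gaussianLogLik (fun i j => (hA1.contDiffAt_Γ n i j).differentiableAt
    two_ne_zero) (hA1.posDef_Γ n) _ _).fderiv_apply, ← loglik_eq_gaussianLogLik, paramDir_eq_sum]
  simp [dotProduct, score]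

lemma measurable_score (hdata : M.GaussianData) (hA1 : M.A1) (n : ℕ) :
    Measurable (M.score n (M.β0, M.θ0)) := by
  refine measurable_pi_lambda _ fun i => ?_
  have h := hA1.dotProduct_score n (Pi.single i 1)
  simp only [single_one_dotProduct] at h
  simp only [h, gaussianScore]
  have := hdata.1 n
  fun_prop

/-- The matrix of the quadratic part of the centred Hessian entry `(i, i')`. -/
def hessQuadMat (M : SpatialModel d p q) (n : ℕ) (i i' : Fin p ⊕ Fin q) :
    Matrix (Fin (M.N n)) (Fin (M.N n)) ℝ :=
  hessMat (M.Γ n M.θ0)⁻¹ (matDirDeriv (M.Γ n) (paramBasis p q i).2 M.θ0)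
    (matDirDeriv (M.Γ n) (paramBasis p q i').2 M.θ0)
    (matDirDeriv (matDirDeriv (M.Γ n) (paramBasis p q i').2) (paramBasis p q i).2 M.θ0)

/-- The vector of the linear part of the centred Hessian entry `(i, i')`. -/
def hessLinVec (M : SpatialModel d p q) (n : ℕ) (i i' : Fin p ⊕ Fin q) : Fin (M.N n) → ℝ :=
  hessVec (M.Γ n M.θ0)⁻¹ (matDirDeriv (M.Γ n) (paramBasis p q i).2 M.θ0)
    (matDirDeriv (M.Γ n) (paramBasis p q i').2 M.θ0) (M.X n *ᵥ (paramBasis p q i).1)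
    (M.X n *ᵥ (paramBasis p q i').1)

lemma A1.hess_apply (hA1 : M.A1) (n : ℕ) (ω : M.Ωs) (i i' : Fin p ⊕ Fin q) :
    M.hess n (M.β0, M.θ0) ω i i' =
      linQuad (M.Γ n M.θ0) (M.hessQuadMat n i i') (M.hessLinVec n i i')
        (M.y n ω - M.X n *ᵥ M.β0) - M.fisherInfo n i i' := by
  rw [fisherInfo_apply, hess, of_apply, loglik_eq_gaussianLogLik]
  exact fderiv_fderiv_gaussianLogLik (hA1.contDiffAt_Γ n) (hA1.eventually_posDef_Γ n) _ _ _

lemma A1.isHermitian_hessQuadMat (hA1 : M.A1) (n : ℕ) (i i' : Fin p ⊕ Fin q) :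
    (M.hessQuadMat n i i').IsHermitian :=
  isHermitian_hessMat (hA1.posDef_Γ n).inv.isHermitian (hA1.isHermitian_matDirDeriv_Γ n _)
    (hA1.isHermitian_matDirDeriv_Γ n _) (hA1.isHermitian_matDirDeriv_matDirDeriv_Γ n _ _)

lemma IsNormBound.norm_hessQuadMat_le {K : ℝ} {n : ℕ} (h : M.IsNormBound K n)
    (i i' : Fin p ⊕ Fin q) : ‖M.hessQuadMat n i i'‖ ≤ K ^ 3 + 2 * K ^ 5 :=
  l2_opNorm_hessMat_le h.norm_inv_Γ_le (h.norm_matDirDeriv_paramBasis_le i)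
    (h.norm_matDirDeriv_paramBasis_le i') (h.norm_matDirDeriv_matDirDeriv_paramBasis_le i i')

lemma A1.mulVec_paramBasis_dotProduct_le (hA1 : M.A1) (n : ℕ) (i : Fin p ⊕ Fin q) :
    M.X n *ᵥ (paramBasis p q i).1 ⬝ᵥ (M.Γ n M.θ0)⁻¹ *ᵥ (M.X n *ᵥ (paramBasis p q i).1) ≤
      M.fisherInfo n i i := by
  obtain j | k := i
  · rw [fisherInfo_apply, fisherForm]
    simp [paramBasis]
  · simpa [paramBasis] using (hA1.posSemidef_fisherInfo n).diag_nonneg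

lemma IsNormBound.linQuadVar_hessQuadMat_le {K : ℝ} {n : ℕ} (h : M.IsNormBound K n) (hA1 : M.A1)
    (i i' : Fin p ⊕ Fin q) :
    linQuadVar (M.Γ n M.θ0) (M.hessQuadMat n i i') (M.hessLinVec n i i') ≤
      2 * K ^ 8 * (M.fisherInfo n i i + M.fisherInfo n i' i') +
        M.N n * (K ^ 4 + 2 * K ^ 6) ^ 2 / 2 := by
  have hle := linQuadVar_hess_le (hA1.posDef_Γ n)
    (hA1.isHermitian_matDirDeriv_Γ n _) (hA1.isHermitian_matDirDeriv_Γ n _)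
    (hA1.isHermitian_matDirDeriv_matDirDeriv_Γ n _ _) h.norm_Γ_le h.norm_inv_Γ_le
    (h.norm_matDirDeriv_paramBasis_le i) (h.norm_matDirDeriv_paramBasis_le i')
    (h.norm_matDirDeriv_matDirDeriv_paramBasis_le i i') (M.X n *ᵥ (paramBasis p q i).1)
    (M.X n *ᵥ (paramBasis p q i').1)
  rw [Fintype.card_fin] at hle
  refine hle.trans ?_
  gcongr 2 * K ^ 8 * (?_ + ?_) + _
  exacts [hA1.mulVec_paramBasis_dotProduct_le n i, hA1.mulVec_paramBasis_dotProduct_le n i']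

variable {K : ℝ} {J : Matrix (Fin p ⊕ Fin q) (Fin p ⊕ Fin q) ℝ}

lemma tendsto_integral_cexp_linQuad_residual (hdata : M.GaussianData) (hA1 : M.A1)
    {A : ∀ n, Matrix (Fin (M.N n)) (Fin (M.N n)) ℝ} {u : ∀ n, Fin (M.N n) → ℝ} {V : ℝ}
    (hA : ∀ n, (A n).IsHermitian)
    (hnorm : Tendsto (fun n => ‖A n‖ * ‖M.Γ n M.θ0‖) atTop (𝓝 0))
    (hV : Tendsto (fun n => linQuadVar (M.Γ n M.θ0) (A n) (u n)) atTop (𝓝 V)) :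
    Tendsto (fun n => ∫ ω, Complex.exp
      (linQuad (M.Γ n M.θ0) (A n) (u n) (M.y n ω - M.X n *ᵥ M.β0) * Complex.I) ∂M.P) atTop
      (𝓝 (Complex.exp (-(V / 2 : ℝ)))) := by
  refine (tendsto_integral_cexp_linQuad hdata.2 (fun n => (hA1.posDef_Γ n).posSemidef) hA hnorm
    hV).congr fun n => integral_map (hdata.1 n).aemeasurable ?_
  exact Continuous.aestronglyMeasurable (by fun_prop)

lemma tendsto_natCast_N (M : SpatialModel d p q) : Tendsto (fun n => (M.N n : ℝ)) atTop atTop :=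
  tendsto_natCast_atTop_atTop.comp M.hN

lemma tendsto_smul_norm_mul_norm_Γ {r : ℕ → ℝ} {B : ℝ} (hr : Tendsto r atTop (𝓝 0))
    {A : ∀ n, Matrix (Fin (M.N n)) (Fin (M.N n)) ℝ} (hA : ∀ᶠ n in atTop, ‖A n‖ ≤ B)
    (hK : ∀ᶠ n in atTop, M.IsNormBound K n) :
    Tendsto (fun n => ‖r n • A n‖ * ‖M.Γ n M.θ0‖) atTop (𝓝 0) := by
  have hlim : Tendsto (fun n => ‖r n‖ * B * K) atTop (𝓝 0) := by
    simpa using (hr.norm.mul_const B).mul_const K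
  refine squeeze_zero' (.of_forall fun n => by positivity) ?_ hlim
  filter_upwards [hA, hK] with n hn hKn
  rw [norm_smul]
  exact mul_le_mul (mul_le_mul_of_nonneg_left hn (norm_nonneg _)) hKn.norm_Γ_le (norm_nonneg _)
    (mul_nonneg (norm_nonneg _) ((norm_nonneg _).trans hn))

lemma tendsto_integral_cexp_dotProduct_score (hdata : M.GaussianData) (hA1 : M.A1)
    (hK : ∀ᶠ n in atTop, M.IsNormBound K n)
    (hJ : Tendsto (fun n => (M.N n : ℝ)⁻¹ • M.fisherInfo n) atTop (𝓝 J))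
    (t : Fin p ⊕ Fin q → ℝ) :
    Tendsto (fun n => ∫ ω, Complex.exp
      ((t ⬝ᵥ (√(M.N n))⁻¹ • M.score n (M.β0, M.θ0) ω : ℝ) * Complex.I) ∂M.P) atTop
      (𝓝 (Complex.exp (-(t ⬝ᵥ J *ᵥ t / 2 : ℝ)))) := by
  have hnorm : ∀ᶠ n in atTop,
      ‖(M.Γ n M.θ0)⁻¹ * matDirDeriv (M.Γ n) (paramDir p q t).2 M.θ0 * (M.Γ n M.θ0)⁻¹‖ ≤
        K * ((∑ k, |(paramDir p q t).2 k|) * K) * K := by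
    filter_upwards [hK] with n hn
    have hK₀ := hn.nonneg
    refine (l2_opNorm_mul_mul_le _ _ _).trans ?_
    gcongr
    exacts [hn.norm_inv_Γ_le, hn.norm_matDirDeriv_le _, hn.norm_inv_Γ_le]
  have hV : Tendsto (fun n => linQuadVar (M.Γ n M.θ0)
      ((√(M.N n))⁻¹ •
        ((M.Γ n M.θ0)⁻¹ * matDirDeriv (M.Γ n) (paramDir p q t).2 M.θ0 * (M.Γ n M.θ0)⁻¹))
      ((√(M.N n))⁻¹ • (M.Γ n M.θ0)⁻¹ *ᵥ (M.X n *ᵥ (paramDir p q t).1)))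
      atTop (𝓝 (t ⬝ᵥ J *ᵥ t)) := by
    have hcont : Continuous fun B : Matrix (Fin p ⊕ Fin q) (Fin p ⊕ Fin q) ℝ => t ⬝ᵥ B *ᵥ t := by
      fun_prop
    refine ((hcont.tendsto J).comp hJ).congr fun n => ?_
    rw [linQuadVar_smul, linQuadVar_score_eq_fisherForm (hA1.posDef_Γ n),
      ← dotProduct_fisherInfo_mulVec, inv_pow, Real.sq_sqrt (Nat.cast_nonneg _)]
    simp [smul_mulVec]
  have hr : Tendsto (fun n => (√(M.N n))⁻¹) atTop (𝓝 0) :=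
    (Real.tendsto_sqrt_atTop.comp M.tendsto_natCast_N).inv_tendsto_atTop
  refine (tendsto_integral_cexp_linQuad_residual hdata hA1 (fun n =>
    (isHermitian_inv_mul_matDirDeriv_mul_inv (hA1.eventually_isHermitian_Γ n) _).smul
      (IsSelfAdjoint.all _)) (tendsto_smul_norm_mul_norm_Γ hr hnorm hK) hV).congr fun n => ?_
  simp only [dotProduct_smul, hA1.dotProduct_score, gaussianScore, linQuad_smul, smul_eq_mul]

lemma posSemidef_of_tendsto_fisherInfo (hA1 : M.A1)
    (hJ : Tendsto (fun n => (M.N n : ℝ)⁻¹ • M.fisherInfo n) atTop (𝓝 J)) : J.PosSemidef := by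
  have hpos (n : ℕ) : ((M.N n : ℝ)⁻¹ • M.fisherInfo n).PosSemidef :=
    (hA1.posSemidef_fisherInfo n).smul (by positivity)
  refine .of_dotProduct_mulVec_nonneg ?_ fun t => ?_
  · exact tendsto_nhds_unique (((continuous_id.matrix_conjTranspose).tendsto J).comp hJ)
      (hJ.congr fun n => (hpos n).isHermitian.eq.symm)
  · have hcont : Continuous fun B : Matrix (Fin p ⊕ Fin q) (Fin p ⊕ Fin q) ℝ =>
      star t ⬝ᵥ B *ᵥ t := by fun_prop
    exact ge_of_tendsto' ((hcont.tendsto J).comp hJ) fun n =>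
      (hpos n).dotProduct_mulVec_nonneg t

theorem tendstoInDistribution_score (hdata : M.GaussianData) (hA1 : M.A1)
    (hK : ∀ᶠ n in atTop, M.IsNormBound K n)
    (hJ : Tendsto (fun n => (M.N n : ℝ)⁻¹ • M.fisherInfo n) atTop (𝓝 J)) :
    ∃ μ : Measure ((Fin p ⊕ Fin q) → ℝ), IsGaussianVector μ 0 J ∧
      _root_.TendstoInDistribution M.P
        (fun n ω => (√(M.N n))⁻¹ • M.score n (M.β0, M.θ0) ω) μ := by
  have hpos := posSemidef_of_tendsto_fisherInfo hA1 hJ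
  obtain ⟨μ, hμ⟩ := exists_isGaussianVector 0 hpos
  have := hμ.1
  refine ⟨μ, hμ, tendstoInDistribution_pi_of_tendsto_integral_cexp
    (fun n => (measurable_score hdata hA1 n).const_smul (√(M.N n))⁻¹) fun t => ?_⟩
  rw [hμ.integral_cexp_dotProduct hpos]
  exact tendsto_integral_cexp_dotProduct_score hdata hA1 hK hJ t

lemma tendsto_linQuadVar_hess (hA1 : M.A1) (hK : ∀ᶠ n in atTop, M.IsNormBound K n)
    (hJ : Tendsto (fun n => (M.N n : ℝ)⁻¹ • M.fisherInfo n) atTop (𝓝 J)) (i i' : Fin p ⊕ Fin q) :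
    Tendsto (fun n => (M.N n : ℝ)⁻¹ ^ 2 *
      linQuadVar (M.Γ n M.θ0) (M.hessQuadMat n i i') (M.hessLinVec n i i')) atTop (𝓝 0) := by
  have hinv := M.tendsto_natCast_N.inv_tendsto_atTop
  have hentry (k : Fin p ⊕ Fin q) :
      Tendsto (fun n => (M.N n : ℝ)⁻¹ * M.fisherInfo n k k) atTop (𝓝 (J k k)) :=
    ((continuous_id.matrix_elem k k).tendsto J).comp hJ
  have hlim := hinv.mul ((((hentry i).add (hentry i')).const_mul (2 * K ^ 8)).add_const
    ((K ^ 4 + 2 * K ^ 6) ^ 2 / 2))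
  rw [zero_mul] at hlim
  refine squeeze_zero' (.of_forall fun n => ?_) ?_ hlim
  · exact mul_nonneg (by positivity) (linQuadVar_nonneg (hA1.posDef_Γ n).posSemidef
      (hA1.isHermitian_hessQuadMat n i i') _)
  · filter_upwards [hK, M.tendsto_natCast_N.eventually_gt_atTop 0] with n hn hN
    calc (M.N n : ℝ)⁻¹ ^ 2 *
          linQuadVar (M.Γ n M.θ0) (M.hessQuadMat n i i') (M.hessLinVec n i i')
        ≤ (M.N n : ℝ)⁻¹ ^ 2 * (2 * K ^ 8 * (M.fisherInfo n i i + M.fisherInfo n i' i') +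
            M.N n * (K ^ 4 + 2 * K ^ 6) ^ 2 / 2) := by
          gcongr
          exact hn.linQuadVar_hessQuadMat_le hA1 i i'
      _ = (M.N n : ℝ)⁻¹ * (2 * K ^ 8 * ((M.N n : ℝ)⁻¹ * M.fisherInfo n i i +
            (M.N n : ℝ)⁻¹ * M.fisherInfo n i' i') + (K ^ 4 + 2 * K ^ 6) ^ 2 / 2) := by
          field_simp

lemma tendsto_integral_cexp_linQuad_hess (hdata : M.GaussianData) (hA1 : M.A1)
    (hK : ∀ᶠ n in atTop, M.IsNormBound K n)
    (hJ : Tendsto (fun n => (M.N n : ℝ)⁻¹ • M.fisherInfo n) atTop (𝓝 J)) (i i' : Fin p ⊕ Fin q)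
    (t : ℝ) :
    Tendsto (fun n => ∫ ω, Complex.exp ((t * (M.N n : ℝ)⁻¹ *
      linQuad (M.Γ n M.θ0) (M.hessQuadMat n i i') (M.hessLinVec n i i')
        (M.y n ω - M.X n *ᵥ M.β0) : ℝ) * Complex.I) ∂M.P) atTop (𝓝 1) := by
  have hr : Tendsto (fun n => t * (M.N n : ℝ)⁻¹) atTop (𝓝 0) := by
    simpa using M.tendsto_natCast_N.inv_tendsto_atTop.const_mul t
  have hV : Tendsto (fun n => linQuadVar (M.Γ n M.θ0)
      ((t * (M.N n : ℝ)⁻¹) • M.hessQuadMat n i i')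
      ((t * (M.N n : ℝ)⁻¹) • M.hessLinVec n i i')) atTop (𝓝 0) := by
    simpa only [linQuadVar_smul, mul_pow, mul_assoc, mul_zero] using
      (tendsto_linQuadVar_hess hA1 hK hJ i i').const_mul (t ^ 2)
  have h := tendsto_integral_cexp_linQuad_residual hdata hA1
    (fun n => (hA1.isHermitian_hessQuadMat n i i').smul (IsSelfAdjoint.all _))
    (tendsto_smul_norm_mul_norm_Γ hr (hK.mono fun n hn => hn.norm_hessQuadMat_le i i') hK) hV
  simpa only [linQuad_smul, zero_div, Complex.ofReal_zero, neg_zero, Complex.exp_zero] using h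

lemma tendsto_integral_cexp_hess_add (hdata : M.GaussianData) (hA1 : M.A1)
    (hK : ∀ᶠ n in atTop, M.IsNormBound K n)
    (hJ : Tendsto (fun n => (M.N n : ℝ)⁻¹ • M.fisherInfo n) atTop (𝓝 J)) (i i' : Fin p ⊕ Fin q)
    (t : ℝ) :
    Tendsto (fun n => ∫ ω, Complex.exp ((t * ((M.N n : ℝ)⁻¹ * M.hess n (M.β0, M.θ0) ω i i' +
      J i i') : ℝ) * Complex.I) ∂M.P) atTop (𝓝 1) := by
  have hentry : Tendsto (fun n => (M.N n : ℝ)⁻¹ * M.fisherInfo n i i') atTop (𝓝 (J i i')) :=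
    ((continuous_id.matrix_elem i i').tendsto J).comp hJ
  have hcont : Continuous fun x : ℝ => Complex.exp ((t * (J i i' - x) : ℝ) * Complex.I) := by
    fun_prop
  have hphase := (hcont.tendsto (J i i')).comp hentry
  have h := hphase.mul (tendsto_integral_cexp_linQuad_hess hdata hA1 hK hJ i i' t)
  rw [sub_self, mul_zero, Complex.ofReal_zero, zero_mul, Complex.exp_zero, one_mul] at h
  refine h.congr fun n => ?_
  rw [← integral_const_mul]
  refine integral_congr_ae (.of_forall fun ω => ?_)
  simp only [Function.comp_apply, ← Complex.exp_add, hA1.hess_apply]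
  push_cast
  ring_nf

theorem tendstoInProbMatrix_hess (hdata : M.GaussianData) (hA1 : M.A1)
    (hK : ∀ᶠ n in atTop, M.IsNormBound K n)
    (hJ : Tendsto (fun n => (M.N n : ℝ)⁻¹ • M.fisherInfo n) atTop (𝓝 J)) :
    TendstoInProbMatrix M.P (fun n ω => (M.N n : ℝ)⁻¹ • M.hess n (M.β0, M.θ0) ω) (-J) := by
  intro ε hε i i'
  have hmeas (n : ℕ) : Measurable fun ω =>
      (M.N n : ℝ)⁻¹ * M.hess n (M.β0, M.θ0) ω i i' + J i i' := by
    have := hdata.1 n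
    simp only [hA1.hess_apply]
    fun_prop
  simpa only [Matrix.smul_apply, Matrix.neg_apply, smul_eq_mul, sub_neg_eq_add] using
    tendsto_measure_le_abs_of_tendsto_integral_cexp hmeas
      (tendsto_integral_cexp_hess_add hdata hA1 hK hJ i i') hε

lemma A7.tendsto_fisherInfo {Jβ : Matrix (Fin p) (Fin p) ℝ} {Jθ : Matrix (Fin q) (Fin q) ℝ}
    (hA7 : M.A7 Jβ Jθ) :
    Tendsto (fun n => (M.N n : ℝ)⁻¹ • M.fisherInfo n) atTop (𝓝 (fromBlocks Jβ 0 0 Jθ)) := by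
  have hcont : Continuous fun B : Matrix (Fin p) (Fin p) ℝ × Matrix (Fin q) (Fin q) ℝ =>
      fromBlocks B.1 0 0 B.2 := by fun_prop
  simpa [fisherInfo, fromBlocks_smul, Function.comp_def] using
    (hcont.tendsto (Jβ, Jθ)).comp (hA7.2.2.1.prodMk_nhds hA7.2.2.2)

end SpatialModel

theorem score_and_hessian_asymptotics_general
    {d p q : ℕ} (M : SpatialModel d p q) (hdata : M.GaussianData) (hA1 : M.A1) {K : ℝ}
    (hK : ∀ᶠ n in atTop, M.IsNormBound K n) {J : Matrix (Fin p ⊕ Fin q) (Fin p ⊕ Fin q) ℝ}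
    (hJ : Tendsto (fun n => (M.N n : ℝ)⁻¹ • M.fisherInfo n) atTop (𝓝 J)) :
    (∃ μ : Measure ((Fin p ⊕ Fin q) → ℝ),
      IsGaussianVector μ 0 J ∧
      _root_.TendstoInDistribution M.P
        (fun n ω => (√(M.N n))⁻¹ • M.score n (M.β0, M.θ0) ω) μ) ∧
    TendstoInProbMatrix M.P (fun n ω => (M.N n : ℝ)⁻¹ • M.hess n (M.β0, M.θ0) ω) (-J) :=
  ⟨tendstoInDistribution_score hdata hA1 hK hJ, tendstoInProbMatrix_hess hdata hA1 hK hJ⟩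

/-- **Lemma 1 (asymptotics of the score and Hessian).**
Under (A.1)–(A.7), for data generated from the model with parameter `η = (β, θ)`,
`N_n^{−1/2} ℓ'(η) →d N(0, J(η))` and `N_n^{−1} ℓ''(η) →p −J(η)`, where
`J(η) = diag{J(β), J(θ)}`. -/
theorem score_and_hessian_asymptotics
    {d p q : ℕ} (M : SpatialModel d p q) (hdata : M.GaussianData)
    (Jβ : Matrix (Fin p) (Fin p) ℝ) (Jθ : Matrix (Fin q) (Fin q) ℝ)
    (hA1 : M.A1) (hA2 : M.A2) (hA3 : M.A3) (hA4 : M.A4) (hA5 : M.A5) (hA6 : M.A6)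
    (hA7 : M.A7 Jβ Jθ) :
    (∃ μ : Measure ((Fin p ⊕ Fin q) → ℝ),
      IsGaussianVector μ 0 (Matrix.fromBlocks Jβ 0 0 Jθ) ∧
      TendstoInDistribution M.P
        (fun n ω => (Real.sqrt (M.N n))⁻¹ • M.score n (M.β0, M.θ0) ω) μ) ∧
    TendstoInProbMatrix M.P
      (fun n ω => (M.N n : ℝ)⁻¹ • M.hess n (M.β0, M.θ0) ω)
      (-(Matrix.fromBlocks Jβ 0 0 Jθ)) := by
  obtain ⟨K, hK⟩ := exists_eventually_isNormBound hA1 hA2 hA6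
  exact score_and_hessian_asymptotics_general M hdata hA1 hK hA7.tendsto_fisherInfo
end
end

section
/- Under conditions (A.12)–(A.13), the tapered covariance matrices satisfy: (i) ‖Γ − Γ_T‖_∞ = O(N_n^{−1/2}); (ii) ‖Γ_k − Γ_{k,T}‖_∞ = O(N_n^{−1/2}) for each k = 1,…,q; (iii) ‖Γ_{kk'} − Γ_{kk',T}‖_∞ = O(N_n^{−1/2}) for each k, k' = 1,…,q, where ‖A‖_∞ = max_i ∑_j |a_{ij}| is the maximum absolute row sum norm. -/
open MeasureTheory Filter Matrix Asymptotics
open scoped ENNReal NNReal Topology BigOperators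

noncomputable section

/-!
Since `1 - K_T(d, ω) = min (d / ω) 1 ≤ d / ω`, every row sum of `Γ - Γ_T` is at most
`ω⁻¹ ∑ⱼ dᵢⱼ |γ(dᵢⱼ)|`, so it suffices to bound `∑ⱼ dᵢⱼ γ₀(dᵢⱼ)` uniformly over `c`-separated
configurations. The balls of radius `c / 2` around the sites are disjoint, and each contains a ball
of radius `c / 4` whose points lie no farther from site `i` than site `j` does. There `u γ₀(u)` is
at least half its value at `dᵢⱼ`, because `γ₀` is nonincreasing, and hence the sum is at most a
constant times `∫ ‖x‖ γ₀(‖x‖) dx`, which in polar coordinates is the moment `∫ u ^ m γ₀(u) du` for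
`m = dim E`.
-/

section Packing

variable {E : Type*} [NormedAddCommGroup E] [NormedSpace ℝ E]

lemma exists_ball_subset_ball_inter_ball_zero {x : E} {r : ℝ} (hr : 0 ≤ r) (hx : r ≤ ‖x‖) :
    ∃ y : E, Metric.ball y (r / 2) ⊆ Metric.ball x r ∩ Metric.ball 0 ‖x‖ := by
  obtain ⟨y, hxy, hy⟩ := exists_dist_le_le (x := x) (z := 0) (δ := r / 2) (ε := ‖x‖ - r / 2)
    (by positivity) (by linarith) (by simp)
  rw [dist_comm] at hxy
  exact ⟨y, Set.subset_inter (Metric.ball_subset_ball' (by linarith))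
    (Metric.ball_subset_ball' (by linarith))⟩

variable [FiniteDimensional ℝ E] [MeasurableSpace E] [BorelSpace E]
  {μ : Measure E} [μ.IsAddHaarMeasure] {f : ℝ → ℝ} {K : ℝ}

lemma measureReal_ball_mul_comp_norm_le_setIntegral_ball {x : E} {r : ℝ} (hr : 0 < r)
    (hx : 2 * r ≤ ‖x‖) (hK : 0 ≤ K) (hf_nonneg : ∀ u, 0 ≤ u → 0 ≤ f u)
    (hf : ∀ d u, 0 < u → d / 2 ≤ u → u ≤ d → f d ≤ K * f u)
    (hint : Integrable (fun y ↦ f ‖y‖) μ) :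
    μ.real (Metric.ball 0 (r / 2)) * f ‖x‖ ≤ K * ∫ y in Metric.ball x r, f ‖y‖ ∂μ := by
  obtain ⟨z, hz⟩ := exists_ball_subset_ball_inter_ball_zero hr.le (by linarith : r ≤ ‖x‖)
  have hbound : ∀ y ∈ Metric.ball z (r / 2), f ‖x‖ ≤ K * f ‖y‖ := fun y hy ↦ by
    have hyx : ‖y - x‖ < r := mem_ball_iff_norm.1 (hz hy).1
    have hy_lt : ‖y‖ < ‖x‖ := mem_ball_zero_iff.1 (hz hy).2
    have hy_gt : ‖x‖ - ‖y‖ < r := (norm_sub_norm_le x y).trans_lt (norm_sub_rev x y ▸ hyx)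
    exact hf _ _ (by linarith) (by linarith) hy_lt.le
  calc μ.real (Metric.ball 0 (r / 2)) * f ‖x‖
      = ∫ _ in Metric.ball z (r / 2), f ‖x‖ ∂μ := by
        rw [setIntegral_const, smul_eq_mul, Measure.addHaar_real_ball_center μ z]
    _ ≤ ∫ y in Metric.ball z (r / 2), K * f ‖y‖ ∂μ :=
        setIntegral_mono_on (integrableOn_const measure_ball_lt_top.ne)
          (hint.integrableOn.const_mul K) measurableSet_ball hbound
    _ = K * ∫ y in Metric.ball z (r / 2), f ‖y‖ ∂μ := integral_const_mul _ _
    _ ≤ K * ∫ y in Metric.ball x r, f ‖y‖ ∂μ := by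
        gcongr
        · exact .of_forall fun y ↦ hf_nonneg _ (norm_nonneg y)
        · exact hint.integrableOn
        · exact hz.trans Set.inter_subset_left

lemma measureReal_ball_mul_sum_comp_norm_le_integral {ι : Type*} (s : Finset ι) {p : ι → E}
    {c : ℝ} (hc : 0 < c) (hp : (s : Set ι).Pairwise fun i j ↦ c ≤ dist (p i) (p j))
    (hp_norm : ∀ j ∈ s, c ≤ ‖p j‖) (hK : 0 ≤ K) (hf_nonneg : ∀ u, 0 ≤ u → 0 ≤ f u)
    (hf : ∀ d u, 0 < u → d / 2 ≤ u → u ≤ d → f d ≤ K * f u)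
    (hint : Integrable (fun y ↦ f ‖y‖) μ) :
    μ.real (Metric.ball 0 (c / 4)) * ∑ j ∈ s, f ‖p j‖ ≤ K * ∫ y, f ‖y‖ ∂μ := by
  have hdisj : (s : Set ι).Pairwise (Function.onFun Disjoint fun j ↦ Metric.ball (p j) (c / 2)) :=
    hp.mono' fun i j hij ↦ Metric.ball_disjoint_ball (by linarith)
  calc μ.real (Metric.ball 0 (c / 4)) * ∑ j ∈ s, f ‖p j‖
      = ∑ j ∈ s, μ.real (Metric.ball 0 (c / 2 / 2)) * f ‖p j‖ := by
        rw [Finset.mul_sum, div_div]; norm_num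
    _ ≤ ∑ j ∈ s, K * ∫ y in Metric.ball (p j) (c / 2), f ‖y‖ ∂μ :=
        Finset.sum_le_sum fun j hj ↦ measureReal_ball_mul_comp_norm_le_setIntegral_ball
          (by positivity) (by linarith [hp_norm j hj]) hK hf_nonneg hf hint
    _ = K * ∫ y in ⋃ j ∈ s, Metric.ball (p j) (c / 2), f ‖y‖ ∂μ := by
        rw [← Finset.mul_sum, integral_biUnion_finset _ (fun _ _ ↦ measurableSet_ball) hdisj
          fun _ _ ↦ hint.integrableOn]
    _ ≤ K * ∫ y, f ‖y‖ ∂μ := by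
        gcongr
        exacts [.of_forall fun y ↦ hf_nonneg _ (norm_nonneg y), Measure.restrict_le_self]

lemma integrable_norm_mul_comp_norm [Nontrivial E]
    (hint : IntegrableOn (fun u ↦ u ^ Module.finrank ℝ E * f u) (Set.Ioi 0)) :
    Integrable (fun x : E ↦ ‖x‖ * f ‖x‖) μ := by
  refine (integrable_fun_norm_addHaar μ (f := fun u ↦ u * f u)).2 ?_
  simpa only [smul_eq_mul, ← mul_assoc, pow_sub_one_mul (Module.finrank_pos (R := ℝ) (M := E)).ne']
    using hint

lemma sum_dist_mul_abs_comp_dist_le {ι : Type*} [Fintype ι] {p : ι → E} {c : ℝ} (hc : 0 < c)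
    (hp : Pairwise fun i j ↦ c ≤ dist (p i) (p j)) {g γ₀ : ℝ → ℝ}
    (hanti : AntitoneOn γ₀ (Set.Ioi 0)) (hint : Integrable (fun x ↦ ‖x‖ * γ₀ ‖x‖) μ)
    (hg : ∀ u, 0 < u → |g u| ≤ γ₀ u) (i : ι) :
    ∑ j, dist (p i) (p j) * |g (dist (p i) (p j))| ≤
      2 * (∫ x, ‖x‖ * γ₀ ‖x‖ ∂μ) / μ.real (Metric.ball 0 (c / 4)) := by
  classical
  have hγ₀ : ∀ u, 0 < u → 0 ≤ γ₀ u := fun u hu ↦ (abs_nonneg _).trans (hg u hu)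
  have hnonneg : ∀ u, 0 ≤ u → 0 ≤ u * γ₀ u := fun u hu ↦ by
    rcases hu.eq_or_lt with rfl | hu
    · simp
    · exact mul_nonneg hu.le (hγ₀ u hu)
  have hhalf : ∀ d u, 0 < u → d / 2 ≤ u → u ≤ d → d * γ₀ d ≤ 2 * (u * γ₀ u) :=
    fun d u hu hdu hud ↦ by
      have hd : 0 < d := hu.trans_le hud
      rw [← mul_assoc]
      exact mul_le_mul (by linarith) (hanti hu hd hud) (hγ₀ d hd) (by positivity)
  have hball : 0 < μ.real (Metric.ball (0 : E) (c / 4)) :=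
    ENNReal.toReal_pos (Metric.measure_ball_pos μ _ (by positivity)).ne' measure_ball_lt_top.ne
  have hpacking := measureReal_ball_mul_sum_comp_norm_le_integral (μ := μ) (Finset.univ.erase i)
    (p := fun j ↦ p j - p i) hc (fun j _ k _ hjk ↦ by simpa using hp hjk)
    (fun j hj ↦ by simpa [dist_eq_norm] using hp (Finset.ne_of_mem_erase hj))
    zero_le_two hnonneg hhalf hint
  calc ∑ j, dist (p i) (p j) * |g (dist (p i) (p j))|
      = ∑ j ∈ Finset.univ.erase i, dist (p i) (p j) * |g (dist (p i) (p j))| :=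
        (Finset.sum_erase _ (by simp)).symm
    _ ≤ ∑ j ∈ Finset.univ.erase i, ‖p j - p i‖ * γ₀ ‖p j - p i‖ := by
        refine Finset.sum_le_sum fun j hj ↦ ?_
        rw [← dist_eq_norm, dist_comm (p j)]
        exact mul_le_mul_of_nonneg_left
          (hg _ (hc.trans_le (hp (Finset.ne_of_mem_erase hj).symm))) dist_nonneg
    _ ≤ 2 * (∫ x, ‖x‖ * γ₀ ‖x‖ ∂μ) / μ.real (Metric.ball 0 (c / 4)) := by
        rwa [le_div_iff₀' hball]

end Packing

section Tapering

variable {ι : Type*}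

/-- The maximum absolute row sum norm `‖A‖_∞ = max_i ∑_j |a_{ij}|`, with value `0` when there are
no rows; written with `⨆` over `ℝ`, as Mathlib's version is a non-global norm instance. -/
def rowSumNorm [Fintype ι] (A : Matrix ι ι ℝ) : ℝ := ⨆ i, ∑ j, |A i j|

/-- The matrix `[g(‖pᵢ - pⱼ‖)]` of an isotropic function `g` at the sites `p`. With `g = γ(·; θ)` or
one of its parameter derivatives it is `Γ`, `Γ_k` or `Γ_{kk'}`. -/
def isotropicMatrix {X : Type*} [Dist X] (g : ℝ → ℝ) (p : ι → X) : Matrix ι ι ℝ :=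
  Matrix.of fun i j ↦ g (dist (p i) (p j))

/-- The linear tapering function `K_T(d, ω) = (1 - d / ω)_+`, with the threshold first so that
`isotropicMatrix (linearTaper ω) p` is the taper matrix `Δ(ω)`. -/
def linearTaper (ω d : ℝ) : ℝ := max (1 - d / ω) 0

lemma one_sub_linearTaper (ω d : ℝ) : 1 - linearTaper ω d = min (d / ω) 1 := by
  rw [linearTaper, ← min_sub_sub_left, sub_sub_cancel, sub_zero]

lemma abs_sub_mul_linearTaper_le (a : ℝ) {ω d : ℝ} (hω : 0 ≤ ω) (hd : 0 ≤ d) :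
    |a - a * linearTaper ω d| ≤ |a| * (d / ω) := by
  have hmin : 0 ≤ min (d / ω) 1 := le_min (by positivity) zero_le_one
  rw [← mul_one_sub, one_sub_linearTaper, abs_mul, abs_of_nonneg hmin]
  gcongr
  exact min_le_left _ _

variable [Fintype ι]

lemma rowSumNorm_nonneg (A : Matrix ι ι ℝ) : 0 ≤ rowSumNorm A :=
  Real.iSup_nonneg fun _ ↦ Finset.sum_nonneg fun _ _ ↦ abs_nonneg _

lemma rowSumNorm_sub_hadamard_linearTaper_le {X : Type*} [PseudoMetricSpace X] {p : ι → X}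
    {g : ℝ → ℝ} {ω C : ℝ} (hω : 0 ≤ ω) (hC : 0 ≤ C)
    (hrow : ∀ i, ∑ j, dist (p i) (p j) * |g (dist (p i) (p j))| ≤ C) :
    rowSumNorm (isotropicMatrix g p - isotropicMatrix g p ⊙ isotropicMatrix (linearTaper ω) p) ≤
      C / ω := by
  refine Real.iSup_le (fun i ↦ ?_) (by positivity)
  calc ∑ j, |g (dist (p i) (p j)) - g (dist (p i) (p j)) * linearTaper ω (dist (p i) (p j))|
      ≤ ∑ j, |g (dist (p i) (p j))| * (dist (p i) (p j) / ω) :=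
        Finset.sum_le_sum fun j _ ↦ abs_sub_mul_linearTaper_le _ hω dist_nonneg
    _ = (∑ j, dist (p i) (p j) * |g (dist (p i) (p j))|) / ω := by
        rw [Finset.sum_div]
        exact Finset.sum_congr rfl fun j _ ↦ by ring
    _ ≤ C / ω := by gcongr; exact hrow i

end Tapering

lemma inv_isBigO_of_le_mul {α : Type*} {l : Filter α} {ω a : α → ℝ} {c : ℝ} (hc : 0 < c)
    (hω : ∀ n, 0 < ω n) (h : ∀ n, c ≤ ω n * a n) : (fun n ↦ (ω n)⁻¹) =O[l] a := by
  refine .of_bound c⁻¹ (.of_forall fun n ↦ ?_)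
  rw [Real.norm_of_nonneg (inv_nonneg.2 (hω n).le), le_inv_mul_iff₀ hc, ← div_eq_mul_inv,
    div_le_iff₀' (hω n)]
  exact (h n).trans (by gcongr; exacts [(hω n).le, le_abs_self _])

theorem tapering_error_rowsum_norm_general
    {E : Type*} [NormedAddCommGroup E] [NormedSpace ℝ E] [FiniteDimensional ℝ E] [Nontrivial E]
    {α : Type*} {l : Filter α} {ι : α → Type*} [∀ n, Fintype (ι n)] {sites : ∀ n, ι n → E}
    {c : ℝ} (hc : 0 < c) (hsep : ∀ n, Pairwise fun i j ↦ c ≤ dist (sites n i) (sites n j))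
    {ω : α → ℝ} (hω : ∀ᶠ n in l, 0 < ω n) {γ₀ : ℝ → ℝ} (hanti : AntitoneOn γ₀ (Set.Ioi 0))
    (hint : IntegrableOn (fun u ↦ u ^ Module.finrank ℝ E * γ₀ u) (Set.Ioi 0))
    {g : ℝ → ℝ} (hg : ∀ u, 0 < u → |g u| ≤ γ₀ u) :
    (fun n ↦ rowSumNorm (isotropicMatrix g (sites n) -
      isotropicMatrix g (sites n) ⊙ isotropicMatrix (linearTaper (ω n)) (sites n)))
      =O[l] fun n ↦ (ω n)⁻¹ := by
  borelize E
  set C := 2 * (∫ x : E, ‖x‖ * γ₀ ‖x‖ ∂Measure.addHaar) /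
    Measure.addHaar.real (Metric.ball (0 : E) (c / 4))
  have hrow (n : α) (i : ι n) :
      ∑ j, dist (sites n i) (sites n j) * |g (dist (sites n i) (sites n j))| ≤ C :=
    sum_dist_mul_abs_comp_dist_le hc (hsep n) hanti (integrable_norm_mul_comp_norm hint) hg i
  refine .of_bound |C| (hω.mono fun n hn ↦ ?_)
  rw [Real.norm_of_nonneg (rowSumNorm_nonneg _), Real.norm_of_nonneg (by positivity),
    ← div_eq_mul_inv]
  exact rowSumNorm_sub_hadamard_linearTaper_le hn.le (abs_nonneg C)
    fun i ↦ (hrow n i).trans (le_abs_self C)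

/-- **Lemma 2 (tapering error in the maximum absolute row sum norm).**
Under (A.12)–(A.13), for a second-order stationary isotropic covariance function on `ℝ²`
with minimum-separated sampling sites, the difference between the covariance matrix
(resp. its first and second parameter derivatives) and its tapered version, measured in
the maximum absolute row sum norm `‖A‖_∞ = max_i ∑_j |a_{ij}|`, is `O(N_n^{−1/2})`. -/
theorem tapering_error_rowsum_norm
    (q : ℕ) (N : ℕ → ℕ) (hN : Tendsto N atTop atTop)
    (sites : ∀ n, Fin (N n) → EuclideanSpace ℝ (Fin 2))
    (hsep : ∃ c : ℝ, 0 < c ∧ ∀ n, ∀ i j : Fin (N n), i ≠ j →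
      c ≤ dist (sites n i) (sites n j))
    (γr : ℝ → (Fin q → ℝ) → ℝ) (θ : Fin q → ℝ)
    (ω : ℕ → ℝ)
    -- (A.12)
    (hA12 : ∃ c1 c2 : ℝ, 0 < c1 ∧ ∀ n,
      c1 ≤ ω n * (Real.sqrt (N n))⁻¹ ∧ ω n * (Real.sqrt (N n))⁻¹ ≤ c2)
    -- (A.13)
    (hA13 : ∃ γ0 : ℝ → ℝ,
      (∀ u, 0 ≤ γ0 u) ∧ AntitoneOn γ0 (Set.Ioi 0) ∧
      IntegrableOn (fun u => u ^ 2 * γ0 u) (Set.Ioi 0) ∧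
      ∀ u : ℝ, 0 < u →
        |γr u θ| ≤ γ0 u ∧
        ∀ k k' : Fin q,
          |fderiv ℝ (fun t => γr u t) θ (Pi.single k 1)| ≤ γ0 u ∧
          |fderiv ℝ (fun t =>
              fderiv ℝ (fun t' => γr u t') t (Pi.single k' 1)) θ (Pi.single k 1)| ≤ γ0 u) :
    -- (i) ‖Γ − Γ_T‖_∞ = O(N_n^{−1/2})
    ((fun n => ⨆ i : Fin (N n), ∑ j : Fin (N n),
        |γr (dist (sites n i) (sites n j)) θ -
          γr (dist (sites n i) (sites n j)) θ *
            max (1 - dist (sites n i) (sites n j) / ω n) 0|)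
      =O[atTop] fun n => (Real.sqrt (N n))⁻¹) ∧
    -- (ii) ‖Γ_k − Γ_{k,T}‖_∞ = O(N_n^{−1/2})
    (∀ k : Fin q,
      (fun n => ⨆ i : Fin (N n), ∑ j : Fin (N n),
        |fderiv ℝ (fun t => γr (dist (sites n i) (sites n j)) t) θ (Pi.single k 1) -
          fderiv ℝ (fun t => γr (dist (sites n i) (sites n j)) t) θ (Pi.single k 1) *
            max (1 - dist (sites n i) (sites n j) / ω n) 0|)
      =O[atTop] fun n => (Real.sqrt (N n))⁻¹) ∧
    -- (iii) ‖Γ_{kk'} − Γ_{kk',T}‖_∞ = O(N_n^{−1/2})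
    (∀ k k' : Fin q,
      (fun n => ⨆ i : Fin (N n), ∑ j : Fin (N n),
        |fderiv ℝ (fun t => fderiv ℝ (fun t' => γr (dist (sites n i) (sites n j)) t') t
              (Pi.single k' 1)) θ (Pi.single k 1) -
          fderiv ℝ (fun t => fderiv ℝ (fun t' => γr (dist (sites n i) (sites n j)) t') t
              (Pi.single k' 1)) θ (Pi.single k 1) *
            max (1 - dist (sites n i) (sites n j) / ω n) 0|)
      =O[atTop] fun n => (Real.sqrt (N n))⁻¹) := by
  obtain ⟨c₁, _, hc₁, hω⟩ := hA12
  obtain ⟨c, hc, hsep⟩ := hsep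
  obtain ⟨γ₀, -, hanti, hint, hγ₀⟩ := hA13
  have hω_pos (n : ℕ) : 0 < ω n :=
    pos_of_mul_pos_left (hc₁.trans_le (hω n).1) (by positivity)
  have hω_inv : (fun n ↦ (ω n)⁻¹) =O[atTop] fun n ↦ (Real.sqrt (N n))⁻¹ :=
    inv_isBigO_of_le_mul hc₁ hω_pos fun n ↦ (hω n).1
  have hrow (g : ℝ → ℝ) (hg : ∀ u, 0 < u → |g u| ≤ γ₀ u) :=
    (tapering_error_rowsum_norm_general hc (fun n i j hij ↦ hsep n i j hij)
      (.of_forall hω_pos) hanti (by simpa using hint) hg).trans hω_inv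
  exact ⟨hrow (fun u ↦ γr u θ) fun u hu ↦ (hγ₀ u hu).1,
    fun k ↦ hrow (fun u ↦ fderiv ℝ (fun t ↦ γr u t) θ (Pi.single k 1))
      fun u hu ↦ ((hγ₀ u hu).2 k k).1,
    fun k k' ↦ hrow (fun u ↦ fderiv ℝ (fun t ↦ fderiv ℝ (fun t' ↦ γr u t') t
      (Pi.single k' 1)) θ (Pi.single k 1)) fun u hu ↦ ((hγ₀ u hu).2 k k').2⟩
end
end

section
/- Under conditions (A.1)–(A.4), (A.6) and (A.12)–(A.13), the tapered covariance matrices satisfy: (C.1) the largest eigenvalue of Γ_T and the largest absolute eigenvalues of Γ_{k,T} and Γ_{kk',T} converge to the same finite constants C, C_k, C_{kk'} as the corresponding untapered matrices; (C.2) ‖Γ_{k,T}‖_F^{−2} = O(N_n^{−1/2−δ}) for each k, with the same δ > 0 as in (A.3); (C.3) the spectral norm of Γ_T^{−1} is bounded by a finite constant uniformly in n; (C.4) for each k, k', a_{kk',T} = lim_n t_{kk',T}(t_{kk,T} t_{k'k',T})^{−1/2} exists and equals a_{kk'} = lim_n t_{kk'}(t_{kk} t_{k'k'})^{−1/2}; that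 is, the matrix A_T = (a_{kk',T}) equals A = (a_{kk'}) and is nonsingular. -/
open MeasureTheory Filter Matrix Asymptotics
open scoped ENNReal NNReal Topology BigOperators

noncomputable section

/-- The covariance matrix generated by an isotropic covariance function `γr` at the
sampling sites. -/
def covMat {q m : ℕ} (sites : Fin m → EuclideanSpace ℝ (Fin 2))
    (γr : ℝ → (Fin q → ℝ) → ℝ) (θ : Fin q → ℝ) : Matrix (Fin m) (Fin m) ℝ :=
  Matrix.of fun i j => γr (dist (sites i) (sites j)) θ

/-- The entrywise partial derivative `Γ_k = ∂Γ/∂θ_k`. -/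
def covMatD {q m : ℕ} (sites : Fin m → EuclideanSpace ℝ (Fin 2))
    (γr : ℝ → (Fin q → ℝ) → ℝ) (k : Fin q) (θ : Fin q → ℝ) : Matrix (Fin m) (Fin m) ℝ :=
  Matrix.of fun i j =>
    fderiv ℝ (fun t => γr (dist (sites i) (sites j)) t) θ (Pi.single k 1)

/-- The entrywise second partial derivative `Γ_{kk'} = ∂²Γ/∂θ_k∂θ_{k'}`. -/
def covMatDD {q m : ℕ} (sites : Fin m → EuclideanSpace ℝ (Fin 2))
    (γr : ℝ → (Fin q → ℝ) → ℝ) (k k' : Fin q) (θ : Fin q → ℝ) : Matrix (Fin m) (Fin m) ℝ :=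
  Matrix.of fun i j =>
    fderiv ℝ (fun t => fderiv ℝ (fun t' => γr (dist (sites i) (sites j)) t') t
      (Pi.single k' 1)) θ (Pi.single k 1)

/-- The tapering matrix `Δ(ω)` built from `K_T(d, ω) = (1 − d/ω)₊`. -/
def taperMat {m : ℕ} (sites : Fin m → EuclideanSpace ℝ (Fin 2)) (ω : ℝ) :
    Matrix (Fin m) (Fin m) ℝ :=
  Matrix.of fun i j => max (1 - dist (sites i) (sites j) / ω) 0

/-- `tr(Γ⁻¹ Γ_k Γ⁻¹ Γ_{k'})`. -/
def tQuad {m : ℕ} (G Gk Gk' : Matrix (Fin m) (Fin m) ℝ) : ℝ :=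
  (G⁻¹ * Gk * G⁻¹ * Gk').trace

/-!
Since the sites are separated by `c` and the tapering weight differs from `1` by at most `d / ω`,
the `i`-th absolute row sum of `Γ ∘ Δ(ω) - Γ` is at most `ω⁻¹ ∑ⱼ dᵢⱼ γ₀(dᵢⱼ)`, and packing disjoint
balls of radius `c / 4` near the sites bounds the last sum by a multiple of `∫ ‖y‖ γ₀(‖y‖) dy`,
which is finite because `∫ u² γ₀(u) du` is. Gershgorin's theorem turns this into
`‖Γ ∘ Δ(ω) - Γ‖ = O(ω⁻¹) = O(N ^ (-1/2))` in the spectral norm. Hence spectra and inverses are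
perturbed by `o(1)`, while Frobenius norms are perturbed by `√N · O(N ^ (-1/2)) = O(1)`, which is
negligible against `‖Γ_k‖_F → ∞`. Finally `t_kk ≥ ‖Γ_k‖_F² / ‖Γ‖²`, so the perturbation of the
traces, which is `o(‖Γ_k‖_F ‖Γ_k'‖_F)`, is negligible in the ratio `t_kk' / √(t_kk t_k'k')`.
-/

section SpectralNorm

open scoped Matrix.Norms.L2Operator MatrixOrder

variable {n : Type*} [Fintype n] [DecidableEq n] {A B : Matrix n n ℝ}

lemma sSup_abs_spectrum_eq_l2_opNorm (hA : A.IsHermitian) :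
    sSup ((fun x => |x|) '' spectrum ℝ A) = ‖A‖ := by
  cases isEmpty_or_nonempty n
  · simp [Subsingleton.elim A 0]
  · exact (IsometricContinuousFunctionalCalculus.isGreatest_norm_spectrum
      (𝕜 := ℝ) A hA.isSelfAdjoint).csSup_eq

lemma abs_le_l2_opNorm_of_mem_spectrum {x : ℝ} (hA : A.IsHermitian) (hx : x ∈ spectrum ℝ A) :
    |x| ≤ ‖A‖ := by
  rw [← sSup_abs_spectrum_eq_l2_opNorm hA]
  exact le_csSup (Matrix.finite_real_spectrum.image _).bddAbove (Set.mem_image_of_mem _ hx)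

lemma l2_opNorm_le_of_forall_mem_spectrum {r : ℝ} (hA : A.IsHermitian) (hr : 0 ≤ r)
    (h : ∀ x ∈ spectrum ℝ A, |x| ≤ r) : ‖A‖ ≤ r := by
  rw [← sSup_abs_spectrum_eq_l2_opNorm hA]
  exact Real.sSup_le (Set.forall_mem_image.2 h) hr

lemma l2_opNorm_eq_sSup_spectrum (hA : A.PosSemidef) : ‖A‖ = sSup (spectrum ℝ A) := by
  have hnonneg := (posSemidef_iff_isHermitian_and_spectrum_nonneg.1 hA).2
  rw [← sSup_abs_spectrum_eq_l2_opNorm hA.isHermitian,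
    Set.image_congr fun x hx => abs_of_nonneg (hnonneg hx), Set.image_id']

lemma sSup_spectrum_le_add_l2_opNorm_sub (hA : A.IsHermitian) (hB : B.IsHermitian) :
    sSup (spectrum ℝ B) ≤ sSup (spectrum ℝ A) + ‖B - A‖ := by
  cases isEmpty_or_nonempty n
  · simp [Subsingleton.elim B A]
  have hA_le : A ≤ algebraMap ℝ _ (sSup (spectrum ℝ A)) :=
    le_algebraMap_of_spectrum_le (fun x hx => le_csSup Matrix.finite_real_spectrum.bddAbove hx)
      hA.isSelfAdjoint
  have hsub_le : B - A ≤ algebraMap ℝ _ ‖B - A‖ :=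
    le_algebraMap_of_spectrum_le
      (fun x hx => (le_abs_self x).trans (abs_le_l2_opNorm_of_mem_spectrum (hB.sub hA) hx))
      (hB.sub hA).isSelfAdjoint
  have hB_le : B ≤ algebraMap ℝ _ (sSup (spectrum ℝ A) + ‖B - A‖) := by
    simpa only [add_sub_cancel, map_add] using add_le_add hA_le hsub_le
  refine csSup_le ?_ ((le_algebraMap_iff_spectrum_le hB.isSelfAdjoint).1 hB_le)
  exact ContinuousFunctionalCalculus.spectrum_nonempty (R := ℝ) B hB.isSelfAdjoint

lemma abs_sSup_spectrum_sub_le (hA : A.IsHermitian) (hB : B.IsHermitian) :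
    |sSup (spectrum ℝ B) - sSup (spectrum ℝ A)| ≤ ‖B - A‖ := by
  have hBA := sSup_spectrum_le_add_l2_opNorm_sub hA hB
  have hAB := sSup_spectrum_le_add_l2_opNorm_sub hB hA
  rw [norm_sub_rev] at hAB
  exact abs_sub_le_iff.2 ⟨by linarith, by linarith⟩

lemma l2_opNorm_le_of_forall_sum_abs_le {r : ℝ} (hA : A.IsHermitian) (hr : 0 ≤ r)
    (h : ∀ i, ∑ j, |A i j| ≤ r) : ‖A‖ ≤ r := by
  refine l2_opNorm_le_of_forall_mem_spectrum hA hr fun x hx => ?_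
  rw [← Matrix.spectrum_toLin', ← Module.End.hasEigenvalue_iff_mem_spectrum] at hx
  obtain ⟨i, hi⟩ := eigenvalue_mem_ball hx
  rw [mem_closedBall_iff_norm] at hi
  calc |x| ≤ |A i i| + |x - A i i| := by simpa using abs_add_le (A i i) (x - A i i)
    _ ≤ |A i i| + ∑ j ∈ Finset.univ.erase i, |A i j| := by gcongr; simpa using hi
    _ = ∑ j, |A i j| := Finset.add_sum_erase _ (fun j => |A i j|) (Finset.mem_univ i)
    _ ≤ r := h i

lemma isUnit_and_l2_opNorm_inv_le (hA : IsUnit A) (h : ‖A⁻¹‖ * ‖B - A‖ ≤ 1 / 2) :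
    IsUnit B ∧ ‖B⁻¹‖ ≤ 2 * ‖A⁻¹‖ := by
  have hAdet := (Matrix.isUnit_iff_isUnit_det A).1 hA
  have hB : IsUnit B := by
    have hsmall : ‖A⁻¹ * (A - B)‖ < 1 := by
      rw [norm_sub_rev] at h
      linarith [norm_mul_le A⁻¹ (A - B)]
    have hfactor : A * (1 - A⁻¹ * (A - B)) = B := by
      rw [mul_sub, mul_one, Matrix.mul_nonsing_inv_cancel_left _ _ hAdet, sub_sub_cancel]
    exact hfactor ▸ hA.mul (isUnit_one_sub_of_norm_lt_one hsmall)
  refine ⟨hB, ?_⟩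
  have hresolvent : B⁻¹ = A⁻¹ - A⁻¹ * (B - A) * B⁻¹ := by
    rw [← Matrix.inv_sub_inv (iff_of_true hA hB), sub_sub_cancel]
  have hstep : ‖B⁻¹‖ ≤ ‖A⁻¹‖ + 1 / 2 * ‖B⁻¹‖ := by
    calc ‖B⁻¹‖ ≤ ‖A⁻¹‖ + ‖A⁻¹ * (B - A) * B⁻¹‖ := by
          conv_lhs => rw [hresolvent]
          exact norm_sub_le _ _
      _ ≤ ‖A⁻¹‖ + ‖A⁻¹‖ * ‖B - A‖ * ‖B⁻¹‖ := by
          gcongr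
          exact (norm_mul_le _ _).trans (by gcongr; exact norm_mul_le _ _)
      _ ≤ ‖A⁻¹‖ + 1 / 2 * ‖B⁻¹‖ := by gcongr
  linarith

end SpectralNorm

section FrobeniusNorm

variable {ι : Type*} [Fintype ι] (A B : Matrix ι ι ℝ)

lemma frobNorm_nonneg : 0 ≤ frobNorm A := Real.sqrt_nonneg _

lemma frobNorm_sq : frobNorm A ^ 2 = ∑ i, ∑ j, A i j ^ 2 := Real.sq_sqrt (by positivity)

lemma frobNorm_sq_eq_trace : frobNorm A ^ 2 = (A * Aᵀ).trace := by
  simp only [frobNorm_sq, Matrix.trace, Matrix.diag_apply, Matrix.mul_apply,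
    Matrix.transpose_apply, ← sq]

lemma frobNorm_transpose : frobNorm Aᵀ = frobNorm A := by
  rw [frobNorm, Finset.sum_comm]
  rfl

section

open scoped Matrix.Norms.Frobenius

lemma frobNorm_eq_norm : frobNorm A = ‖A‖ := by
  simp [frobNorm, Matrix.frobenius_norm_def, Real.sqrt_eq_rpow]

lemma abs_frobNorm_sub_frobNorm_le : |frobNorm A - frobNorm B| ≤ frobNorm (A - B) := by
  simpa only [frobNorm_eq_norm] using abs_norm_sub_norm_le A B

end

lemma abs_trace_mul_le_frobNorm_mul_frobNorm :
    |(A * B).trace| ≤ frobNorm A * frobNorm B := by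
  refine abs_le_of_sq_le_sq ?_ (mul_nonneg (frobNorm_nonneg A) (frobNorm_nonneg B))
  rw [mul_pow, ← frobNorm_transpose B, frobNorm_sq, frobNorm_sq]
  simp only [Matrix.trace, Matrix.diag_apply, Matrix.mul_apply, ← Finset.sum_product',
    Finset.univ_product_univ]
  exact Finset.sum_mul_sq_le_sq_mul_sq _ (fun p : ι × ι => A p.1 p.2) fun p => Bᵀ p.1 p.2

variable [DecidableEq ι]

open scoped Matrix.Norms.L2Operator

lemma frobNorm_mul_le_l2_opNorm_mul_frobNorm : frobNorm (A * B) ≤ ‖A‖ * frobNorm B := by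
  have hcol (j : ι) : ∑ i, (A * B) i j ^ 2 ≤ ‖A‖ ^ 2 * ∑ i, B i j ^ 2 := by
    have hmulVec := Matrix.l2_opNorm_mulVec A (WithLp.toLp 2 fun i => B i j)
    have hsq := pow_le_pow_left₀ (norm_nonneg _) hmulVec 2
    simp only [mul_pow, EuclideanSpace.real_norm_sq_eq] at hsq
    exact hsq
  refine le_of_sq_le_sq ?_ (mul_nonneg (norm_nonneg A) (frobNorm_nonneg B))
  rw [← frobNorm_transpose, ← frobNorm_transpose B, mul_pow, frobNorm_sq, frobNorm_sq,
    Finset.mul_sum]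
  exact Finset.sum_le_sum fun j _ => hcol j

lemma frobNorm_mul_le_frobNorm_mul_l2_opNorm : frobNorm (A * B) ≤ frobNorm A * ‖B‖ := by
  rw [← frobNorm_transpose, Matrix.transpose_mul, mul_comm, ← frobNorm_transpose A,
    ← Matrix.l2_opNorm_conjTranspose B, Matrix.conjTranspose_eq_transpose_of_trivial]
  exact frobNorm_mul_le_l2_opNorm_mul_frobNorm Bᵀ Aᵀ

lemma frobNorm_one : frobNorm (1 : Matrix ι ι ℝ) = √(Fintype.card ι) := by
  simp [frobNorm, Matrix.one_apply]

lemma frobNorm_le_l2_opNorm_mul_sqrt_card : frobNorm A ≤ ‖A‖ * √(Fintype.card ι) := by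
  simpa [frobNorm_one] using frobNorm_mul_le_l2_opNorm_mul_frobNorm A 1

lemma abs_trace_mul_mul_mul_le (P X Q Y : Matrix ι ι ℝ) :
    |(P * X * Q * Y).trace| ≤ ‖P‖ * ‖Q‖ * (frobNorm X * frobNorm Y) := by
  calc |(P * X * Q * Y).trace| = |((P * X) * (Q * Y)).trace| := by rw [mul_assoc (P * X)]
    _ ≤ frobNorm (P * X) * frobNorm (Q * Y) := abs_trace_mul_le_frobNorm_mul_frobNorm _ _
    _ ≤ (‖P‖ * frobNorm X) * (‖Q‖ * frobNorm Y) :=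
        mul_le_mul (frobNorm_mul_le_l2_opNorm_mul_frobNorm P X)
          (frobNorm_mul_le_l2_opNorm_mul_frobNorm Q Y) (frobNorm_nonneg _)
          (mul_nonneg (norm_nonneg P) (frobNorm_nonneg X))
    _ = ‖P‖ * ‖Q‖ * (frobNorm X * frobNorm Y) := by ring

end FrobeniusNorm

section TraceForm

open scoped Matrix.Norms.L2Operator MatrixOrder

variable {m : ℕ} {G X : Matrix (Fin m) (Fin m) ℝ}

lemma tQuad_self_eq_frobNorm_sq (hG : G.PosDef) (hX : X.IsHermitian) :
    tQuad G X X = frobNorm ((CFC.sqrt G)⁻¹ * X * (CFC.sqrt G)⁻¹) ^ 2 := by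
  have hSS := CFC.sqrt_mul_sqrt_self G (Matrix.nonneg_iff_posSemidef.2 hG.posSemidef)
  have hS := (Matrix.nonneg_iff_posSemidef.1 (CFC.sqrt_nonneg G)).isHermitian
  set S := CFC.sqrt G
  have hZ : (S⁻¹ * X * S⁻¹)ᵀ = S⁻¹ * X * S⁻¹ := by
    rw [← Matrix.conjTranspose_eq_transpose_of_trivial]
    simp only [Matrix.conjTranspose_mul, hS.inv.eq, hX.eq, mul_assoc]
  calc tQuad G X X = ((S⁻¹ * (S⁻¹ * X * S⁻¹)) * (S⁻¹ * X)).trace := by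
        simp only [tQuad, ← hSS, Matrix.mul_inv_rev, mul_assoc]
    _ = ((S⁻¹ * X * S⁻¹) * (S⁻¹ * X * S⁻¹)).trace := by
        rw [mul_assoc S⁻¹, Matrix.trace_mul_comm S⁻¹]
        simp only [mul_assoc]
    _ = frobNorm (S⁻¹ * X * S⁻¹) ^ 2 := by rw [frobNorm_sq_eq_trace, hZ]

lemma tQuad_self_nonneg (hG : G.PosDef) (hX : X.IsHermitian) : 0 ≤ tQuad G X X :=
  tQuad_self_eq_frobNorm_sq hG hX ▸ sq_nonneg _

lemma frobNorm_le_l2_opNorm_mul_sqrt_tQuad (hG : G.PosDef) (hX : X.IsHermitian) :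
    frobNorm X ≤ ‖G‖ * √(tQuad G X X) := by
  have hG_nonneg : 0 ≤ G := Matrix.nonneg_iff_posSemidef.2 hG.posSemidef
  have hSS := CFC.sqrt_mul_sqrt_self G hG_nonneg
  have hS := (Matrix.nonneg_iff_posSemidef.1 (CFC.sqrt_nonneg G)).isHermitian
  have hS_unit : IsUnit (CFC.sqrt G).det :=
    (Matrix.isUnit_iff_isUnit_det _).1 ((CFC.isUnit_sqrt_iff G hG_nonneg).2 hG.isUnit)
  rw [tQuad_self_eq_frobNorm_sq hG hX, Real.sqrt_sq (frobNorm_nonneg _)]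
  set S := CFC.sqrt G
  set Z := S⁻¹ * X * S⁻¹
  have hX_eq : S * Z * S = X := by
    simp only [Z, mul_assoc, Matrix.nonsing_inv_mul S hS_unit, mul_one,
      Matrix.mul_nonsing_inv_cancel_left _ _ hS_unit]
  have hS_norm : ‖S * S‖ = ‖S‖ * ‖S‖ := by
    simpa only [hS.eq] using Matrix.l2_opNorm_conjTranspose_mul_self S
  calc frobNorm X = frobNorm (S * Z * S) := by rw [hX_eq]
    _ ≤ frobNorm (S * Z) * ‖S‖ := frobNorm_mul_le_frobNorm_mul_l2_opNorm _ _
    _ ≤ ‖S‖ * frobNorm Z * ‖S‖ := by gcongr; exact frobNorm_mul_le_l2_opNorm_mul_frobNorm S Z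
    _ = ‖G‖ * frobNorm Z := by rw [← hSS, hS_norm]; ring

lemma tQuad_sub_tQuad (G G' X X' Y Y' : Matrix (Fin m) (Fin m) ℝ) :
    tQuad G' X' Y' - tQuad G X Y =
      ((G'⁻¹ - G⁻¹) * X' * G'⁻¹ * Y').trace + (G⁻¹ * (X' - X) * G'⁻¹ * Y').trace +
        (G⁻¹ * X * (G'⁻¹ - G⁻¹) * Y').trace + (G⁻¹ * X * G⁻¹ * (Y' - Y)).trace := by
  simp only [tQuad, sub_mul, mul_sub, Matrix.trace_sub]
  ring

end TraceForm

section RatioLimits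

variable {α : Type*} {l : Filter α} {u u' v v' : α → ℝ}

lemma isEquivalent_sqrt (h : u ~[l] v) : (fun a => √(u a)) ~[l] fun a => √(v a) := by
  obtain ⟨φ, hφ, huv⟩ := h.exists_eq_mul
  refine isEquivalent_iff_exists_eq_mul.2 ⟨fun a => √(φ a), by simpa using hφ.sqrt, ?_⟩
  filter_upwards [huv, hφ.eventually_const_le one_pos] with a ha hφa
  simp only [ha, Pi.mul_apply, Real.sqrt_mul hφa]

lemma tendsto_div_of_isLittleO_sub {c : ℝ} (hu : (fun a => u' a - u a) =o[l] v) (hv : v' ~[l] v)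
    (h : Tendsto (fun a => u a / v a) l (𝓝 c)) : Tendsto (fun a => u' a / v' a) l (𝓝 c) := by
  have huv : Tendsto (fun a => u' a / v a) l (𝓝 c) := by
    simpa only [← add_div, sub_add_cancel, zero_add] using hu.tendsto_div_nhds_zero.add h
  exact (IsEquivalent.refl.div hv).symm.tendsto_nhds huv

end RatioLimits

section Perturbation

open scoped Matrix.Norms.L2Operator

variable {α : Type*} {l : Filter α} {ι : α → Type*} [∀ a, Fintype (ι a)]
  {A B : ∀ a, Matrix (ι a) (ι a) ℝ}

lemma isEquivalent_frobNorm
    (hAB : (fun a => frobNorm (B a - A a)) =o[l] fun a => frobNorm (A a)) :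
    (fun a => frobNorm (B a)) ~[l] fun a => frobNorm (A a) :=
  IsBigO.trans_isLittleO
    (.of_norm_le fun a => abs_frobNorm_sub_frobNorm_le (B a) (A a)) hAB

variable [∀ a, DecidableEq (ι a)]

lemma isLittleO_frobNorm_sub {ω : α → ℝ}
    (hAB : (fun a => ‖B a - A a‖) =O[l] fun a => (ω a)⁻¹)
    (hω : (fun a => √(Fintype.card (ι a))) =O[l] ω)
    (hA : (fun _ => (1 : ℝ)) =o[l] fun a => frobNorm (A a)) :
    (fun a => frobNorm (B a - A a)) =o[l] fun a => frobNorm (A a) := by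
  have hfrob : (fun a => frobNorm (B a - A a)) =O[l]
      fun a => ‖B a - A a‖ * √(Fintype.card (ι a)) := .of_norm_le fun a => by
    rw [Real.norm_of_nonneg (frobNorm_nonneg _)]
    exact frobNorm_le_l2_opNorm_mul_sqrt_card _
  have hone : (fun a => (ω a)⁻¹ * ω a) =O[l] fun _ => (1 : ℝ) := .of_norm_le fun a => by
    rw [norm_mul, norm_inv]
    exact inv_mul_le_one
  exact (hfrob.trans ((hAB.mul hω).trans hone)).trans_isLittleO hA

lemma isBigO_trace_mul_mul_mul (P X Q Y : ∀ a, Matrix (ι a) (ι a) ℝ) :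
    (fun a => (P a * X a * Q a * Y a).trace) =O[l]
      fun a => ‖P a‖ * ‖Q a‖ * (frobNorm (X a) * frobNorm (Y a)) :=
  .of_norm_le fun a => abs_trace_mul_mul_mul_le (P a) (X a) (Q a) (Y a)

lemma tendsto_sSup_spectrum (hA : ∀ a, (A a).IsHermitian) (hB : ∀ a, (B a).IsHermitian)
    (hAB : (fun a => ‖B a - A a‖) =o[l] fun _ => (1 : ℝ)) {c : ℝ}
    (h : Tendsto (fun a => sSup (spectrum ℝ (A a))) l (𝓝 c)) :
    Tendsto (fun a => sSup (spectrum ℝ (B a))) l (𝓝 c) := by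
  have hdiff : (fun a => sSup (spectrum ℝ (B a)) - sSup (spectrum ℝ (A a))) =o[l]
      fun _ => (1 : ℝ) :=
    IsBigO.trans_isLittleO (.of_norm_le fun a => abs_sSup_spectrum_sub_le (hA a) (hB a)) hAB
  simpa using h.add ((isLittleO_one_iff ℝ).1 hdiff)

lemma tendsto_sSup_abs_spectrum (hA : ∀ a, (A a).IsHermitian) (hB : ∀ a, (B a).IsHermitian)
    (hAB : (fun a => ‖B a - A a‖) =o[l] fun _ => (1 : ℝ)) {c : ℝ}
    (h : Tendsto (fun a => sSup ((fun x => |x|) '' spectrum ℝ (A a))) l (𝓝 c)) :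
    Tendsto (fun a => sSup ((fun x => |x|) '' spectrum ℝ (B a))) l (𝓝 c) := by
  simp only [sSup_abs_spectrum_eq_l2_opNorm (hA _)] at h
  simp only [sSup_abs_spectrum_eq_l2_opNorm (hB _)]
  have hdiff : (fun a => ‖B a‖ - ‖A a‖) =o[l] fun _ => (1 : ℝ) :=
    IsBigO.trans_isLittleO (.of_norm_le fun a => abs_norm_sub_norm_le (B a) (A a)) hAB
  simpa using h.add ((isLittleO_one_iff ℝ).1 hdiff)

lemma isBigO_one_l2_opNorm_of_tendsto_sSup_spectrum (hA : ∀ a, (A a).PosSemidef) {c : ℝ}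
    (h : Tendsto (fun a => sSup (spectrum ℝ (A a))) l (𝓝 c)) :
    (fun a => ‖A a‖) =O[l] fun _ => (1 : ℝ) := by
  simpa only [l2_opNorm_eq_sSup_spectrum (hA _)] using h.isBigO_one ℝ

lemma eventually_isUnit_and_isBigO_one_l2_opNorm_inv (hA : ∀ a, IsUnit (A a))
    (hA_inv : (fun a => ‖(A a)⁻¹‖) =O[l] fun _ => (1 : ℝ))
    (hAB : (fun a => ‖B a - A a‖) =o[l] fun _ => (1 : ℝ)) :
    (∀ᶠ a in l, IsUnit (B a)) ∧ (fun a => ‖(B a)⁻¹‖) =O[l] fun _ => (1 : ℝ) := by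
  have hsmall : (fun a => ‖(A a)⁻¹‖ * ‖B a - A a‖) =o[l] fun _ => (1 : ℝ) := by
    simpa using hA_inv.mul_isLittleO hAB
  have hB : ∀ᶠ a in l, IsUnit (B a) ∧ ‖(B a)⁻¹‖ ≤ 2 * ‖(A a)⁻¹‖ := by
    filter_upwards [((isLittleO_one_iff ℝ).1 hsmall).eventually_le_const one_half_pos] with a ha
    exact isUnit_and_l2_opNorm_inv_le (hA a) ha
  refine ⟨hB.mono fun a ha => ha.1, IsBigO.trans (.of_bound 2 ?_) hA_inv⟩
  simpa only [norm_norm] using hB.mono fun a ha => ha.2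

lemma isLittleO_one_l2_opNorm_inv_sub_inv (hA : ∀ a, IsUnit (A a))
    (hA_inv : (fun a => ‖(A a)⁻¹‖) =O[l] fun _ => (1 : ℝ))
    (hAB : (fun a => ‖B a - A a‖) =o[l] fun _ => (1 : ℝ)) :
    (fun a => ‖(B a)⁻¹ - (A a)⁻¹‖) =o[l] fun _ => (1 : ℝ) := by
  obtain ⟨hB, hB_inv⟩ := eventually_isUnit_and_isBigO_one_l2_opNorm_inv hA hA_inv hAB
  have hprod : (fun a => ‖(A a)⁻¹‖ * ‖B a - A a‖ * ‖(B a)⁻¹‖) =o[l] fun _ => (1 : ℝ) := by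
    simpa using (hA_inv.mul_isLittleO hAB).mul_isBigO hB_inv
  refine IsBigO.trans_isLittleO (.of_norm_eventuallyLE ?_) hprod
  filter_upwards [hB] with a ha
  rw [norm_norm, norm_sub_rev, Matrix.inv_sub_inv (iff_of_true (hA a) ha)]
  exact (norm_mul_le _ _).trans (by gcongr; exact norm_mul_le _ _)

end Perturbation

section TraceFormPerturbation

open scoped Matrix.Norms.L2Operator

variable {α : Type*} {l : Filter α} {m : α → ℕ}
  {G G' X X' Y Y' : ∀ a, Matrix (Fin (m a)) (Fin (m a)) ℝ}

lemma isBigO_frobNorm_sqrt_tQuad (hG : ∀ a, (G a).PosDef)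
    (hG_norm : (fun a => ‖G a‖) =O[l] fun _ => (1 : ℝ)) (hX : ∀ a, (X a).IsHermitian) :
    (fun a => frobNorm (X a)) =O[l] fun a => √(tQuad (G a) (X a) (X a)) := by
  refine IsBigO.trans (.of_norm_le fun a => ?_)
    (by simpa using hG_norm.mul (isBigO_refl (fun a => √(tQuad (G a) (X a) (X a))) l))
  rw [Real.norm_of_nonneg (frobNorm_nonneg _)]
  exact frobNorm_le_l2_opNorm_mul_sqrt_tQuad (hG a) (hX a)

lemma isLittleO_tQuad_sub_tQuad
    (hG : (fun a => ‖(G a)⁻¹‖) =O[l] fun _ => (1 : ℝ))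
    (hG' : (fun a => ‖(G' a)⁻¹‖) =O[l] fun _ => (1 : ℝ))
    (hGG' : (fun a => ‖(G' a)⁻¹ - (G a)⁻¹‖) =o[l] fun _ => (1 : ℝ))
    (hX : (fun a => frobNorm (X' a - X a)) =o[l] fun a => frobNorm (X a))
    (hY : (fun a => frobNorm (Y' a - Y a)) =o[l] fun a => frobNorm (Y a)) :
    (fun a => tQuad (G' a) (X' a) (Y' a) - tQuad (G a) (X a) (Y a)) =o[l]
      fun a => frobNorm (X a) * frobNorm (Y a) := by
  have hX' := (isEquivalent_frobNorm hX).isBigO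
  have hY' := (isEquivalent_frobNorm hY).isBigO
  have hX₀ := isBigO_refl (fun a => frobNorm (X a)) l
  simp only [tQuad_sub_tQuad]
  refine ((IsLittleO.add ?_ ?_).add ?_).add ?_ <;>
    refine (isBigO_trace_mul_mul_mul _ _ _ _).trans_isLittleO ?_
  · simpa using (hGG'.mul_isBigO hG').mul_isBigO (hX'.mul hY')
  · simpa using (hG.mul hG').mul_isLittleO (hX.mul_isBigO hY')
  · simpa using (hG.mul_isLittleO hGG').mul_isBigO (hX₀.mul hY')
  · simpa using (hG.mul hG).mul_isLittleO (hX₀.mul_isLittleO hY)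

lemma tendsto_tQuad_div_sqrt (hG : ∀ a, (G a).PosDef)
    (hG_norm : (fun a => ‖G a‖) =O[l] fun _ => (1 : ℝ))
    (hG_inv : (fun a => ‖(G a)⁻¹‖) =O[l] fun _ => (1 : ℝ))
    (hGG' : (fun a => ‖G' a - G a‖) =o[l] fun _ => (1 : ℝ))
    (hX : ∀ a, (X a).IsHermitian) (hY : ∀ a, (Y a).IsHermitian)
    (hXX' : (fun a => frobNorm (X' a - X a)) =o[l] fun a => frobNorm (X a))
    (hYY' : (fun a => frobNorm (Y' a - Y a)) =o[l] fun a => frobNorm (Y a)) {c : ℝ}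
    (h : Tendsto (fun a => tQuad (G a) (X a) (Y a) /
      √(tQuad (G a) (X a) (X a) * tQuad (G a) (Y a) (Y a))) l (𝓝 c)) :
    Tendsto (fun a => tQuad (G' a) (X' a) (Y' a) /
      √(tQuad (G' a) (X' a) (X' a) * tQuad (G' a) (Y' a) (Y' a))) l (𝓝 c) := by
  obtain ⟨-, hG'_inv⟩ :=
    eventually_isUnit_and_isBigO_one_l2_opNorm_inv (fun a => (hG a).isUnit) hG_inv hGG'
  have hGG'_inv := isLittleO_one_l2_opNorm_inv_sub_inv (fun a => (hG a).isUnit) hG_inv hGG'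
  have hX_sqrt := isBigO_frobNorm_sqrt_tQuad hG hG_norm hX
  have hY_sqrt := isBigO_frobNorm_sqrt_tQuad hG hG_norm hY
  have hX_nonneg (a) := tQuad_self_nonneg (hG a) (hX a)
  have hY_nonneg (a) := tQuad_self_nonneg (hG a) (hY a)
  have hXY := (isLittleO_tQuad_sub_tQuad hG_inv hG'_inv hGG'_inv hXX' hYY').trans_isBigO
    (hX_sqrt.mul hY_sqrt)
  have hXX := (isLittleO_tQuad_sub_tQuad hG_inv hG'_inv hGG'_inv hXX' hXX').trans_isBigO
    (hX_sqrt.mul hX_sqrt)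
  have hYY := (isLittleO_tQuad_sub_tQuad hG_inv hG'_inv hGG'_inv hYY' hYY').trans_isBigO
    (hY_sqrt.mul hY_sqrt)
  simp only [Real.mul_self_sqrt (hX_nonneg _)] at hXX
  simp only [Real.mul_self_sqrt (hY_nonneg _)] at hYY
  simp only [← Real.sqrt_mul (hX_nonneg _)] at hXY
  exact tendsto_div_of_isLittleO_sub hXY (isEquivalent_sqrt (IsEquivalent.mul hXX hYY)) h

end TraceFormPerturbation

section Packing

variable {E : Type*} [NormedAddCommGroup E] [NormedSpace ℝ E]

/-- The ball of radius `c / 4` that touches the sphere of radius `‖x‖` from inside at `x`. -/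
lemma exists_ball_near_norm_le {x : E} {c : ℝ} (hc : 0 < c) (hx : c ≤ ‖x‖) :
    ∃ p : E, ∀ y ∈ Metric.ball p (c / 4), dist y x < c / 2 ∧ ‖x‖ / 2 ≤ ‖y‖ ∧ ‖y‖ ≤ ‖x‖ := by
  have hx_pos : 0 < ‖x‖ := hc.trans_le hx
  have hratio : c / 4 / ‖x‖ ≤ 1 := (div_le_one hx_pos).2 (by linarith)
  have hp_norm : ‖(1 - c / 4 / ‖x‖) • x‖ = ‖x‖ - c / 4 := by
    rw [norm_smul, Real.norm_of_nonneg (sub_nonneg.2 hratio), sub_mul, one_mul,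
      div_mul_cancel₀ _ hx_pos.ne']
  have hp_dist : dist ((1 - c / 4 / ‖x‖) • x) x = c / 4 := by
    rw [dist_eq_norm, sub_smul, one_smul, sub_sub_cancel_left, norm_neg, norm_smul,
      Real.norm_of_nonneg (by positivity), div_mul_cancel₀ _ hx_pos.ne']
  refine ⟨(1 - c / 4 / ‖x‖) • x, fun y hy => ?_⟩
  have hyp : ‖y - (1 - c / 4 / ‖x‖) • x‖ < c / 4 := by rwa [← dist_eq_norm]
  have hyx := dist_triangle y ((1 - c / 4 / ‖x‖) • x) x
  have hy_upper := norm_sub_norm_le y ((1 - c / 4 / ‖x‖) • x)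
  have hy_lower := norm_sub_norm_le ((1 - c / 4 / ‖x‖) • x) y
  rw [norm_sub_rev] at hy_lower
  rw [Metric.mem_ball] at hy
  refine ⟨by linarith, by linarith, by linarith⟩

variable [FiniteDimensional ℝ E] [MeasurableSpace E] [BorelSpace E]
  {μ : Measure E} [μ.IsAddHaarMeasure]

lemma exists_ball_measureReal_mul_le_setIntegral {x : E} {c : ℝ} {φ : ℝ → ℝ} (hc : 0 < c)
    (hx : c ≤ ‖x‖) (hφ : ∀ u, 0 < u → 0 ≤ φ u) (hφ_anti : AntitoneOn φ (Set.Ioi 0))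
    (hint : Integrable (fun y => ‖y‖ * φ ‖y‖) μ) :
    ∃ p : E, (∀ y ∈ Metric.ball p (c / 4), dist y x < c / 2) ∧
      μ.real (Metric.ball 0 (c / 4)) * (‖x‖ * φ ‖x‖) ≤
        2 * ∫ y in Metric.ball p (c / 4), ‖y‖ * φ ‖y‖ ∂μ := by
  obtain ⟨p, hp⟩ := exists_ball_near_norm_le hc hx
  refine ⟨p, fun y hy => (hp y hy).1, ?_⟩
  have hx_pos : 0 < ‖x‖ := hc.trans_le hx
  have hpointwise (y) (hy : y ∈ Metric.ball p (c / 4)) :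
      ‖x‖ / 2 * φ ‖x‖ ≤ ‖y‖ * φ ‖y‖ := by
    obtain ⟨-, hxy, hyx⟩ := hp y hy
    have hy_pos : 0 < ‖y‖ := (half_pos hx_pos).trans_le hxy
    exact mul_le_mul hxy (hφ_anti hy_pos hx_pos hyx) (hφ _ hx_pos) hy_pos.le
  have hball : μ.real (Metric.ball p (c / 4)) * (‖x‖ / 2 * φ ‖x‖) ≤
      ∫ y in Metric.ball p (c / 4), ‖y‖ * φ ‖y‖ ∂μ := by
    rw [← smul_eq_mul, ← setIntegral_const]
    exact setIntegral_mono_on (integrableOn_const measure_ball_lt_top.ne) hint.integrableOn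
      measurableSet_ball hpointwise
  rw [Measure.addHaar_real_ball_center] at hball
  linarith

lemma measureReal_ball_mul_sum_le {ι : Type*} {s : Finset ι} {t : ι → E} {c : ℝ} {φ : ℝ → ℝ}
    (hc : 0 < c) (ht : ∀ i ∈ s, c ≤ ‖t i‖)
    (hsep : (s : Set ι).Pairwise fun i j => c ≤ dist (t i) (t j))
    (hφ : ∀ u, 0 < u → 0 ≤ φ u) (hφ_anti : AntitoneOn φ (Set.Ioi 0))
    (hint : Integrable (fun y => ‖y‖ * φ ‖y‖) μ) :
    μ.real (Metric.ball 0 (c / 4)) * ∑ i ∈ s, ‖t i‖ * φ ‖t i‖ ≤ 2 * ∫ y, ‖y‖ * φ ‖y‖ ∂μ := by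
  choose! p hp_near hp_int using fun i hi =>
    exists_ball_measureReal_mul_le_setIntegral hc (ht i hi) hφ hφ_anti hint
  have hdisj : (s : Set ι).PairwiseDisjoint fun i => Metric.ball (p i) (c / 4) := by
    refine fun i hi j hj hij => Set.disjoint_left.2 fun y hyi hyj => ?_
    linarith [hsep hi hj hij, dist_triangle_left (t i) (t j) y, hp_near i hi y hyi,
      hp_near j hj y hyj]
  have hnonneg (y : E) : 0 ≤ ‖y‖ * φ ‖y‖ := by
    rcases (norm_nonneg y).eq_or_lt with hy | hy
    · simp [← hy]
    · exact mul_nonneg hy.le (hφ _ hy)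
  calc μ.real (Metric.ball 0 (c / 4)) * ∑ i ∈ s, ‖t i‖ * φ ‖t i‖
      ≤ 2 * ∑ i ∈ s, ∫ y in Metric.ball (p i) (c / 4), ‖y‖ * φ ‖y‖ ∂μ := by
        rw [Finset.mul_sum, Finset.mul_sum]
        exact Finset.sum_le_sum hp_int
    _ = 2 * ∫ y in ⋃ i ∈ s, Metric.ball (p i) (c / 4), ‖y‖ * φ ‖y‖ ∂μ := by
        rw [integral_biUnion_finset s (fun _ _ => measurableSet_ball) hdisj
          fun _ _ => hint.integrableOn]
    _ ≤ 2 * ∫ y, ‖y‖ * φ ‖y‖ ∂μ :=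
        mul_le_mul_of_nonneg_left (setIntegral_le_integral hint (.of_forall hnonneg)) zero_le_two

end Packing

lemma exists_forall_sum_dist_mul_le {E : Type*} [NormedAddCommGroup E] [NormedSpace ℝ E]
    [FiniteDimensional ℝ E] {α : Type*} {ι : α → Type*} [∀ a, Fintype (ι a)]
    {sites : ∀ a, ι a → E} {c : ℝ} (hc : 0 < c)
    (hsep : ∀ a, Pairwise fun i j => c ≤ dist (sites a i) (sites a j)) {φ : ℝ → ℝ}
    (hφ : ∀ u, 0 < u → 0 ≤ φ u) (hφ_anti : AntitoneOn φ (Set.Ioi 0))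
    (hint : IntegrableOn (fun u => u ^ Module.finrank ℝ E * φ u) (Set.Ioi 0)) :
    ∃ K, ∀ a i, ∑ j, dist (sites a i) (sites a j) * φ (dist (sites a i) (sites a j)) ≤ K := by
  classical
  cases subsingleton_or_nontrivial E
  · refine ⟨0, fun a i => (Finset.sum_eq_zero fun j _ => ?_).le⟩
    rw [Subsingleton.elim (sites a i) (sites a j), dist_self, zero_mul]
  borelize E
  set μ : Measure E := Measure.addHaar
  have hint_norm : Integrable (fun y => ‖y‖ * φ ‖y‖) μ := by
    refine (integrable_fun_norm_addHaar μ (f := fun u => u * φ u)).2 ?_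
    simpa only [smul_eq_mul, ← mul_assoc, pow_sub_one_mul Module.finrank_pos.ne'] using hint
  have hball_pos : 0 < μ.real (Metric.ball 0 (c / 4)) :=
    ENNReal.toReal_pos (Metric.measure_ball_pos μ 0 (by positivity)).ne' measure_ball_lt_top.ne
  refine ⟨(2 * ∫ y, ‖y‖ * φ ‖y‖ ∂μ) / μ.real (Metric.ball 0 (c / 4)), fun a i => ?_⟩
  rw [le_div_iff₀' hball_pos, ← Finset.sum_erase (a := i) _ (by simp)]
  simp only [dist_comm (sites a i), dist_eq_norm]
  refine measureReal_ball_mul_sum_le hc (fun j hj => ?_) (fun j _ k _ hjk => ?_) hφ hφ_anti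
    hint_norm
  · simpa only [dist_eq_norm] using hsep a (Finset.ne_of_mem_erase hj)
  · simpa only [dist_sub_right] using hsep a hjk

/-- The matrix `[φ(‖s_i − s_j‖)]_{i,j}` of an isotropic function `φ` at the sampling sites. The
covariance matrix, its `θ`-derivatives and their tapered versions all have this form. -/
def isotropicMat {E ι : Type*} [PseudoMetricSpace E] (sites : ι → E) (φ : ℝ → ℝ) :
    Matrix ι ι ℝ :=
  Matrix.of fun i j => φ (dist (sites i) (sites j))

/-- The product of `φ` with the tapering function `K_T(·, ω)`. Tapering `φ` amounts to taking the
Hadamard product of `isotropicMat sites φ` with `Δ(ω)`. -/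
def taper (φ : ℝ → ℝ) (ω : ℝ) : ℝ → ℝ := fun u => φ u * max (1 - u / ω) 0

lemma isHermitian_isotropicMat {E ι : Type*} [PseudoMetricSpace E] (sites : ι → E) (φ : ℝ → ℝ) :
    (isotropicMat sites φ).IsHermitian := by
  ext i j
  simp only [isotropicMat, Matrix.conjTranspose_apply, Matrix.of_apply, star_trivial, dist_comm]

lemma abs_taper_sub_le (φ : ℝ → ℝ) {ω u : ℝ} (hω : 0 < ω) (hu : 0 ≤ u) :
    |taper φ ω u - φ u| ≤ u * |φ u| / ω := by
  have hweight : |max (1 - u / ω) 0 - 1| ≤ u / ω := by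
    have hratio : 0 ≤ u / ω := by positivity
    refine abs_le.2 ⟨?_, ?_⟩
    · linarith [le_max_left (1 - u / ω) 0]
    · linarith [max_le (show 1 - u / ω ≤ 1 by linarith) zero_le_one]
  calc |taper φ ω u - φ u| = |φ u| * |max (1 - u / ω) 0 - 1| := by
        rw [← abs_mul, mul_sub_one, taper]
    _ ≤ |φ u| * (u / ω) := by gcongr
    _ = u * |φ u| / ω := by ring

section Tapering

open scoped Matrix.Norms.L2Operator

lemma l2_opNorm_isotropicMat_taper_sub_le {E ι : Type*} [PseudoMetricSpace E] [Fintype ι]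
    [DecidableEq ι] {sites : ι → E} {φ : ℝ → ℝ} {ω K : ℝ} (hω : 0 < ω) (hK : 0 ≤ K)
    (h : ∀ i, ∑ j, dist (sites i) (sites j) * |φ (dist (sites i) (sites j))| ≤ K) :
    ‖isotropicMat sites (taper φ ω) - isotropicMat sites φ‖ ≤ K / ω := by
  refine l2_opNorm_le_of_forall_sum_abs_le
    ((isHermitian_isotropicMat _ _).sub (isHermitian_isotropicMat _ _)) (by positivity) fun i => ?_
  calc ∑ j, |taper φ ω (dist (sites i) (sites j)) - φ (dist (sites i) (sites j))|
      ≤ ∑ j, dist (sites i) (sites j) * |φ (dist (sites i) (sites j))| / ω :=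
        Finset.sum_le_sum fun j _ => abs_taper_sub_le φ hω dist_nonneg
    _ ≤ K / ω := by
        rw [← Finset.sum_div]
        gcongr
        exact h i

variable {E : Type*} [NormedAddCommGroup E] [NormedSpace ℝ E] [FiniteDimensional ℝ E]
  {α : Type*} {l : Filter α} {ι : α → Type*} [∀ a, Fintype (ι a)] [∀ a, DecidableEq (ι a)]
  {sites : ∀ a, ι a → E} {ω : α → ℝ} {c : ℝ} {φ φ₀ : ℝ → ℝ}

lemma isBigO_l2_opNorm_isotropicMat_taper_sub (hc : 0 < c)
    (hsep : ∀ a, Pairwise fun i j => c ≤ dist (sites a i) (sites a j))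
    (hω : ∀ᶠ a in l, 0 < ω a) (hφ₀ : AntitoneOn φ₀ (Set.Ioi 0))
    (hint : IntegrableOn (fun u => u ^ Module.finrank ℝ E * φ₀ u) (Set.Ioi 0))
    (hφ : ∀ u, 0 < u → |φ u| ≤ φ₀ u) :
    (fun a => ‖isotropicMat (sites a) (taper φ (ω a)) - isotropicMat (sites a) φ‖) =O[l]
      fun a => (ω a)⁻¹ := by
  obtain ⟨K, hK⟩ := exists_forall_sum_dist_mul_le hc hsep
    (fun u hu => (abs_nonneg _).trans (hφ u hu)) hφ₀ hint
  refine .of_bound (max K 0) ?_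
  filter_upwards [hω] with a ha
  rw [norm_norm, Real.norm_of_nonneg (inv_nonneg.2 ha.le), ← div_eq_mul_inv]
  refine l2_opNorm_isotropicMat_taper_sub_le ha (le_max_right K 0) fun i => ?_
  refine (Finset.sum_le_sum fun j _ => ?_).trans ((hK a i).trans (le_max_left K 0))
  rcases (dist_nonneg (x := sites a i) (y := sites a j)).eq_or_lt with hij | hij
  · simp [← hij]
  · gcongr
    exact hφ _ hij

end Tapering

section ScalarAsymptotics

variable {α : Type*} {l : Filter α}

lemma isLittleO_one_of_inv_sq_isTheta {f r : α → ℝ} (h : (fun a => (f a)⁻¹ ^ 2) =Θ[l] r)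
    (hr : Tendsto (fun a => (r a)⁻¹) l atTop) : (fun _ => (1 : ℝ)) =o[l] f := by
  have hr_inv : (fun _ => (1 : ℝ)) =o[l] fun a => (r a)⁻¹ :=
    (isLittleO_const_left_of_ne one_ne_zero).2 (tendsto_norm_atTop_atTop.comp hr)
  have hf_sq : (fun _ => (1 : ℝ) ^ 2) =o[l] fun a => f a ^ 2 := by
    simpa using hr_inv.trans_isTheta h.inv.symm
  exact hf_sq.of_pow two_ne_zero

lemma tendsto_inv_natCast_rpow_atTop {N : α → ℕ} (hN : Tendsto N l atTop) {β : ℝ} (hβ : β < 0) :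
    Tendsto (fun a => ((N a : ℝ) ^ β)⁻¹) l atTop := by
  simp only [← Real.rpow_neg (Nat.cast_nonneg _)]
  exact (tendsto_rpow_atTop (neg_pos.2 hβ)).comp (tendsto_natCast_atTop_atTop.comp hN)

lemma isLittleO_one_inv_of_isBigO_sqrt {N : α → ℕ} {ω : α → ℝ} (hN : Tendsto N l atTop)
    (hω : (fun a => √(N a)) =O[l] ω) : (fun a => (ω a)⁻¹) =o[l] fun _ => (1 : ℝ) := by
  have hsqrt : (fun _ => (1 : ℝ)) =o[l] fun a => √(N a) :=
    (isLittleO_const_left_of_ne one_ne_zero).2 <| tendsto_norm_atTop_atTop.comp <|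
      Real.tendsto_sqrt_atTop.comp <| tendsto_natCast_atTop_atTop.comp hN
  simpa using (hsqrt.trans_isBigO hω).inv_rev (.of_forall fun _ h => absurd h one_ne_zero)

lemma pos_and_isBigO_sqrt_of_le_mul_inv_sqrt {N : α → ℕ} {ω : α → ℝ} {c : ℝ} (hc : 0 < c)
    (h : ∀ a, c ≤ ω a * (√(N a))⁻¹) : (∀ a, 0 < ω a) ∧ (fun a => √(N a)) =O[l] ω := by
  have hsqrt (a) : 0 < √(N a) := by
    by_contra! hle
    simpa [le_antisymm hle (Real.sqrt_nonneg _)] using hc.trans_le (h a)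
  have hω (a) : 0 < ω a := pos_of_mul_pos_left (hc.trans_le (h a)) (inv_nonneg.2 (hsqrt a).le)
  refine ⟨hω, .of_bound c⁻¹ (.of_forall fun a => ?_)⟩
  rw [Real.norm_of_nonneg (hsqrt a).le, Real.norm_of_nonneg (hω a).le, le_inv_mul_iff₀ hc]
  exact (le_mul_inv_iff₀ (hsqrt a)).1 (h a)

lemma isTheta_of_exists_eq_const_mul {f r : α → ℝ} (h : ∃ D, 0 < D ∧ ∀ a, f a = D * r a) :
    f =Θ[l] r := by
  obtain ⟨D, hD, hf⟩ := h
  exact funext hf ▸ (isTheta_refl r l).const_mul_left hD.ne'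

end ScalarAsymptotics

open scoped Matrix.Norms.L2Operator in
/-- `g`, `g₁` and `g₂` play the roles of `γ(·; θ)`, of its first and of its second derivatives in
`θ`, and `β` that of the exponent `-1/2 - δ` of (A.3). -/
theorem tapered_matrices_inherit_conditions_general {E : Type*} [NormedAddCommGroup E]
    [NormedSpace ℝ E] [FiniteDimensional ℝ E] {κ₁ κ₂ : Type*} {N : ℕ → ℕ}
    (hN : Tendsto N atTop atTop) {sites : ∀ n, Fin (N n) → E} {c : ℝ} (hc : 0 < c)
    (hsep : ∀ n, Pairwise fun i j => c ≤ dist (sites n i) (sites n j))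
    {g : ℝ → ℝ} {g₁ : κ₁ → ℝ → ℝ} {g₂ : κ₂ → ℝ → ℝ} {ω : ℕ → ℝ}
    -- (A.1)
    (hpos : ∀ n, (isotropicMat (sites n) g).PosDef)
    -- (A.2)
    {C : ℝ} {C₁ : κ₁ → ℝ} {C₂ : κ₂ → ℝ}
    (hC : Tendsto (fun n => sSup (spectrum ℝ (isotropicMat (sites n) g))) atTop (𝓝 C))
    (hC₁ : ∀ k, Tendsto (fun n => sSup ((fun x => |x|) ''
      spectrum ℝ (isotropicMat (sites n) (g₁ k)))) atTop (𝓝 (C₁ k)))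
    (hC₂ : ∀ k, Tendsto (fun n => sSup ((fun x => |x|) ''
      spectrum ℝ (isotropicMat (sites n) (g₂ k)))) atTop (𝓝 (C₂ k)))
    -- (A.3)
    {β : ℝ} (hβ : β < 0)
    (hfrob : ∀ k, (fun n => (frobNorm (isotropicMat (sites n) (g₁ k)))⁻¹ ^ 2) =Θ[atTop]
      fun n => (N n : ℝ) ^ β)
    -- (A.4)
    {a : κ₁ → κ₁ → ℝ}
    (hratio : ∀ k k', Tendsto (fun n =>
      tQuad (isotropicMat (sites n) g) (isotropicMat (sites n) (g₁ k))
          (isotropicMat (sites n) (g₁ k')) /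
        √(tQuad (isotropicMat (sites n) g) (isotropicMat (sites n) (g₁ k))
            (isotropicMat (sites n) (g₁ k)) *
          tQuad (isotropicMat (sites n) g) (isotropicMat (sites n) (g₁ k'))
            (isotropicMat (sites n) (g₁ k')))) atTop (𝓝 (a k k')))
    -- (A.6)
    {C₀ : ℝ} (hinv : ∀ n, ∀ x ∈ spectrum ℝ (isotropicMat (sites n) g)⁻¹, |x| ≤ C₀)
    -- (A.12)
    (hω : ∀ n, 0 < ω n) (hNω : (fun n => √(N n)) =O[atTop] ω)
    -- (A.13)
    {γ₀ : ℝ → ℝ} (hγ₀ : AntitoneOn γ₀ (Set.Ioi 0))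
    (hint : IntegrableOn (fun u => u ^ Module.finrank ℝ E * γ₀ u) (Set.Ioi 0))
    (hg : ∀ u, 0 < u → |g u| ≤ γ₀ u) (hg₁ : ∀ k u, 0 < u → |g₁ k u| ≤ γ₀ u)
    (hg₂ : ∀ k u, 0 < u → |g₂ k u| ≤ γ₀ u) :
    -- (C.1)
    (Tendsto (fun n => sSup (spectrum ℝ (isotropicMat (sites n) (taper g (ω n))))) atTop (𝓝 C) ∧
      (∀ k, Tendsto (fun n => sSup ((fun x => |x|) ''
        spectrum ℝ (isotropicMat (sites n) (taper (g₁ k) (ω n))))) atTop (𝓝 (C₁ k))) ∧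
      ∀ k, Tendsto (fun n => sSup ((fun x => |x|) ''
        spectrum ℝ (isotropicMat (sites n) (taper (g₂ k) (ω n))))) atTop (𝓝 (C₂ k))) ∧
    -- (C.2)
    (∀ k, (fun n => (frobNorm (isotropicMat (sites n) (taper (g₁ k) (ω n))))⁻¹ ^ 2) =Θ[atTop]
      fun n => (N n : ℝ) ^ β) ∧
    -- (C.3)
    (∃ C₀', ∀ n, ∀ x ∈ spectrum ℝ (isotropicMat (sites n) (taper g (ω n)))⁻¹, |x| ≤ C₀') ∧
    -- (C.4)
    ∀ k k', Tendsto (fun n =>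
      tQuad (isotropicMat (sites n) (taper g (ω n))) (isotropicMat (sites n) (taper (g₁ k) (ω n)))
          (isotropicMat (sites n) (taper (g₁ k') (ω n))) /
        √(tQuad (isotropicMat (sites n) (taper g (ω n)))
            (isotropicMat (sites n) (taper (g₁ k) (ω n)))
            (isotropicMat (sites n) (taper (g₁ k) (ω n))) *
          tQuad (isotropicMat (sites n) (taper g (ω n)))
            (isotropicMat (sites n) (taper (g₁ k') (ω n)))
            (isotropicMat (sites n) (taper (g₁ k') (ω n))))) atTop (𝓝 (a k k')) := by
  have hherm (φ : ℝ → ℝ) (n) := isHermitian_isotropicMat (sites n) φ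
  have hherm_taper (φ : ℝ → ℝ) (n) := isHermitian_isotropicMat (sites n) (taper φ (ω n))
  have hsub (φ : ℝ → ℝ) (hφ : ∀ u, 0 < u → |φ u| ≤ γ₀ u) :=
    isBigO_l2_opNorm_isotropicMat_taper_sub hc hsep (.of_forall hω) hγ₀ hint hφ (l := atTop)
  have hsub_one (φ : ℝ → ℝ) (hφ : ∀ u, 0 < u → |φ u| ≤ γ₀ u) :=
    (hsub φ hφ).trans_isLittleO (isLittleO_one_inv_of_isBigO_sqrt hN hNω)
  have hfrob_sub (k) := isLittleO_frobNorm_sub (hsub (g₁ k) (hg₁ k)) (by simpa using hNω)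
    (isLittleO_one_of_inv_sq_isTheta (hfrob k) (tendsto_inv_natCast_rpow_atTop hN hβ))
  have hG_inv : (fun n => ‖(isotropicMat (sites n) g)⁻¹‖) =O[atTop] fun _ => (1 : ℝ) :=
    .of_bound (max C₀ 0) <| .of_forall fun n => by
      simpa using l2_opNorm_le_of_forall_mem_spectrum (hherm g n).inv (le_max_right C₀ 0)
        fun x hx => (hinv n x hx).trans (le_max_left C₀ 0)
  obtain ⟨-, hGT_inv⟩ := eventually_isUnit_and_isBigO_one_l2_opNorm_inv
    (fun n => (hpos n).isUnit) hG_inv (hsub_one g hg)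
  obtain ⟨C₀', hC₀'⟩ := isBigO_one_nat_atTop_iff.1 hGT_inv
  have hG := isBigO_one_l2_opNorm_of_tendsto_sSup_spectrum (fun n => (hpos n).posSemidef) hC
  refine ⟨⟨tendsto_sSup_spectrum (hherm g) (hherm_taper g) (hsub_one g hg) hC,
    fun k => tendsto_sSup_abs_spectrum (hherm _) (hherm_taper _) (hsub_one _ (hg₁ k)) (hC₁ k),
    fun k => tendsto_sSup_abs_spectrum (hherm _) (hherm_taper _) (hsub_one _ (hg₂ k)) (hC₂ k)⟩,
    fun k => ((isEquivalent_frobNorm (hfrob_sub k)).inv.pow 2).isTheta.trans (hfrob k),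
    ⟨C₀', fun n x hx => (abs_le_l2_opNorm_of_mem_spectrum (hherm_taper g n).inv hx).trans
      (by simpa using hC₀' n)⟩,
    fun k k' => tendsto_tQuad_div_sqrt hpos hG hG_inv (hsub_one g hg) (hherm _) (hherm _)
      (hfrob_sub k) (hfrob_sub k') (hratio k k')⟩

/-- **Lemma 3 (the tapered covariance matrices inherit (A.2), (A.3)(i), (A.4)(i), (A.6)).**
Under (A.1)–(A.4), (A.6) and (A.12)–(A.13): (C.1) the extreme (absolute) eigenvalues of
`Γ_T`, `Γ_{k,T}`, `Γ_{kk',T}` converge to the same constants as the untapered versions;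
(C.2) `‖Γ_{k,T}‖_F^{−2} = O(N_n^{−1/2−δ})`; (C.3) the spectral norm of `Γ_T⁻¹` is
uniformly bounded; (C.4) `a_{kk',T} = lim t_{kk',T}(t_{kk,T}t_{k'k',T})^{−1/2}` exists and
equals `a_{kk'}`, so `A_T = A` is nonsingular. -/
theorem tapered_matrices_inherit_conditions
    (q : ℕ) (N : ℕ → ℕ) (hN : Tendsto N atTop atTop)
    (sites : ∀ n, Fin (N n) → EuclideanSpace ℝ (Fin 2))
    (hsep : ∃ c : ℝ, 0 < c ∧ ∀ n, ∀ i j : Fin (N n), i ≠ j →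
      c ≤ dist (sites n i) (sites n j))
    (γr : ℝ → (Fin q → ℝ) → ℝ)
    (Θ : Set (Fin q → ℝ)) (hΘ : IsOpen Θ) (θ0 : Fin q → ℝ) (hθ0 : θ0 ∈ Θ)
    (ω : ℕ → ℝ)
    -- (A.1)
    (hA1 : (∀ n (i j : Fin (N n)),
        ContDiffOn ℝ 2 (fun θ => γr (dist (sites n i) (sites n j)) θ) Θ) ∧
      ∀ n, ∀ θ ∈ Θ, (covMat (sites n) γr θ).PosDef)
    -- (A.2), with limiting constants C, Ck, Ckk
    (C : ℝ) (Ck : Fin q → ℝ) (Ckk : Fin q → Fin q → ℝ)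
    (hA2 : Tendsto (fun n => sSup (spectrum ℝ (covMat (sites n) γr θ0))) atTop (𝓝 C) ∧
      (∀ k, Tendsto (fun n => sSup ((fun x => |x|) ''
        spectrum ℝ (covMatD (sites n) γr k θ0))) atTop (𝓝 (Ck k))) ∧
      ∀ k k', Tendsto (fun n => sSup ((fun x => |x|) ''
        spectrum ℝ (covMatDD (sites n) γr k k' θ0))) atTop (𝓝 (Ckk k k')))
    -- (A.3), with exponent δ
    (δ : ℝ) (hδ : 0 < δ)
    (hA3 : (∀ k, ∃ D : ℝ, 0 < D ∧ ∀ n,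
        (frobNorm (covMatD (sites n) γr k θ0))⁻¹ ^ 2 =
          D * (N n : ℝ) ^ (-(1 / 2) - δ : ℝ)) ∧
      ∀ k k', k ≠ k' →
        (∃ D : ℝ, 0 < D ∧ ∀ n,
          (frobNorm (covMatD (sites n) γr k θ0 + covMatD (sites n) γr k' θ0))⁻¹ ^ 2 =
            D * (N n : ℝ) ^ (-(1 / 2) - δ : ℝ)) ∨
        (∃ D : ℝ, 0 < D ∧ ∀ n,
          (frobNorm (covMatD (sites n) γr k θ0 - covMatD (sites n) γr k' θ0))⁻¹ ^ 2 =
            D * (N n : ℝ) ^ (-(1 / 2) - δ : ℝ)))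
    -- (A.4), with limiting matrix A
    (Amat : Matrix (Fin q) (Fin q) ℝ)
    (hA4 : Amat.det ≠ 0 ∧
      (∀ k k', Tendsto (fun n =>
          tQuad (covMat (sites n) γr θ0) (covMatD (sites n) γr k θ0)
              (covMatD (sites n) γr k' θ0) /
            Real.sqrt
              (tQuad (covMat (sites n) γr θ0) (covMatD (sites n) γr k θ0)
                  (covMatD (sites n) γr k θ0) *
                tQuad (covMat (sites n) γr θ0) (covMatD (sites n) γr k' θ0)
                  (covMatD (sites n) γr k' θ0))) atTop (𝓝 (Amat k k'))) ∧
      ∀ k k', ∃ B : ℝ, ∀ n,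
        |tQuad (covMat (sites n) γr θ0) (covMatD (sites n) γr k θ0)
            (covMatD (sites n) γr k θ0) /
          tQuad (covMat (sites n) γr θ0) (covMatD (sites n) γr k' θ0)
            (covMatD (sites n) γr k' θ0)| ≤ B)
    -- (A.6)
    (hA6 : ∃ C0 : ℝ, ∀ n, ∀ x ∈ spectrum ℝ ((covMat (sites n) γr θ0)⁻¹), |x| < C0)
    -- (A.12)
    (hA12 : ∃ c1 c2 : ℝ, 0 < c1 ∧ ∀ n,
      c1 ≤ ω n * (Real.sqrt (N n))⁻¹ ∧ ω n * (Real.sqrt (N n))⁻¹ ≤ c2)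
    -- (A.13)
    (hA13 : ∃ γ0 : ℝ → ℝ,
      (∀ u, 0 ≤ γ0 u) ∧ AntitoneOn γ0 (Set.Ioi 0) ∧
      IntegrableOn (fun u => u ^ 2 * γ0 u) (Set.Ioi 0) ∧
      ∀ u : ℝ, 0 < u →
        |γr u θ0| ≤ γ0 u ∧
        ∀ k k' : Fin q,
          |fderiv ℝ (fun t => γr u t) θ0 (Pi.single k 1)| ≤ γ0 u ∧
          |fderiv ℝ (fun t =>
              fderiv ℝ (fun t' => γr u t') t (Pi.single k' 1)) θ0 (Pi.single k 1)| ≤ γ0 u) :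
    -- (C.1)
    (Tendsto (fun n => sSup (spectrum ℝ
        (Matrix.hadamard (covMat (sites n) γr θ0) (taperMat (sites n) (ω n))))) atTop (𝓝 C) ∧
      (∀ k, Tendsto (fun n => sSup ((fun x => |x|) '' spectrum ℝ
        (Matrix.hadamard (covMatD (sites n) γr k θ0) (taperMat (sites n) (ω n))))) atTop (𝓝 (Ck k))) ∧
      ∀ k k', Tendsto (fun n => sSup ((fun x => |x|) '' spectrum ℝ
        (Matrix.hadamard (covMatDD (sites n) γr k k' θ0) (taperMat (sites n) (ω n))))) atTop
        (𝓝 (Ckk k k'))) ∧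
    -- (C.2)
    (∀ k, (fun n =>
        (frobNorm (Matrix.hadamard (covMatD (sites n) γr k θ0) (taperMat (sites n) (ω n))))⁻¹ ^ 2)
      =O[atTop] fun n => (N n : ℝ) ^ (-(1 / 2) - δ : ℝ)) ∧
    -- (C.3)
    (∃ C0 : ℝ, ∀ n, ∀ x ∈
      spectrum ℝ ((Matrix.hadamard (covMat (sites n) γr θ0) (taperMat (sites n) (ω n)))⁻¹), |x| ≤ C0) ∧
    -- (C.4): the tapered ratios converge to the same nonsingular matrix A
    (∀ k k', Tendsto (fun n =>
        tQuad (Matrix.hadamard (covMat (sites n) γr θ0) (taperMat (sites n) (ω n)))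
            (Matrix.hadamard (covMatD (sites n) γr k θ0) (taperMat (sites n) (ω n)))
            (Matrix.hadamard (covMatD (sites n) γr k' θ0) (taperMat (sites n) (ω n))) /
          Real.sqrt
            (tQuad (Matrix.hadamard (covMat (sites n) γr θ0) (taperMat (sites n) (ω n)))
                (Matrix.hadamard (covMatD (sites n) γr k θ0) (taperMat (sites n) (ω n)))
                (Matrix.hadamard (covMatD (sites n) γr k θ0) (taperMat (sites n) (ω n))) *
              tQuad (Matrix.hadamard (covMat (sites n) γr θ0) (taperMat (sites n) (ω n)))
                (Matrix.hadamard (covMatD (sites n) γr k' θ0) (taperMat (sites n) (ω n)))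
                (Matrix.hadamard (covMatD (sites n) γr k' θ0) (taperMat (sites n) (ω n)))))
        atTop (𝓝 (Amat k k'))) := by
  obtain ⟨c, hc, hsep⟩ := hsep
  obtain ⟨c1, _, hc1, hA12⟩ := hA12
  obtain ⟨γ0, -, hanti, hint, hbd⟩ := hA13
  obtain ⟨C0, hC0⟩ := hA6
  obtain ⟨hω, hNω⟩ := pos_and_isBigO_sqrt_of_le_mul_inv_sqrt (l := atTop) hc1 fun n => (hA12 n).1
  obtain ⟨⟨hC, hCk, hCkk⟩, hfrob_taper, hinv, hratio⟩ :=
    tapered_matrices_inherit_conditions_general (g := fun u => γr u θ0)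
      (g₁ := fun k u => fderiv ℝ (fun t => γr u t) θ0 (Pi.single k 1))
      (g₂ := fun (p : Fin q × Fin q) u =>
        fderiv ℝ (fun t => fderiv ℝ (fun t' => γr u t') t (Pi.single p.2 1)) θ0
          (Pi.single p.1 1)) hN hc
      (fun n i j => hsep n i j) (fun n => hA1.2 n θ0 hθ0) hA2.1 hA2.2.1
      (fun p => hA2.2.2 p.1 p.2) (by linarith)
      (fun k => isTheta_of_exists_eq_const_mul (hA3.1 k)) hA4.2.1 (fun n x hx => (hC0 n x hx).le)
      hω hNω hanti (by simpa using hint) (fun u hu => (hbd u hu).1)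
      (fun k u hu => ((hbd u hu).2 k k).1) (fun p u hu => ((hbd u hu).2 p.1 p.2).2)
  exact ⟨⟨hC, hCk, fun k k' => hCkk (k, k')⟩, fun k => (hfrob_taper k).isBigO, hinv, hratio⟩
end
end

section
/- Let c > 0 and let γ₀ : (0,∞) → [0,∞) be nonincreasing with ∫₀^∞ u²γ₀(u)du < ∞. Then there exists a constant C, depending only on c and γ₀ (not on N or the configuration of points), such that for any finite set of points s_1,…,s_N ∈ ℝ² with ‖s_i − s_j‖ ≥ c for all i ≠ j: (i) max_i ∑_{j ≠ i} ‖s_i − s_j‖ γ₀(‖s_i − s_j‖) ≤ C; and consequently (ii) for every ω > 0, max_i ∑_{j ≠ i} γ₀(‖s_i − s_j‖)·(1 − (1 − ‖s_i − s_j‖/ω)_+) ≤ C/ω, where (x)_+ = max{x, 0}. -/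
open MeasureTheory Filter
open scoped Topology BigOperators

noncomputable section

/-! Fix a point of the configuration, translate it to the origin and halve all the other points.
If `x` is one of the translated points, then `c ≤ ‖x‖`, so every `y` in the ball of radius `c / 4`
about `x / 2` satisfies `‖x‖ / 4 ≤ ‖y‖ ≤ ‖x‖`, and monotonicity of `γ` gives
`‖x‖ γ(‖x‖) ≤ 4 ‖y‖ γ(‖y‖)`. These balls are pairwise disjoint and have equal measure, so summing
the averages of this inequality over them bounds the row sum by a multiple of `∫ ‖y‖ γ(‖y‖) dy`,
which polar coordinates reduce to `∫ uⁿ γ(u) du` in dimension `n`. The tapered sum follows from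
`1 - (1 - t)₊ ≤ t`. -/

theorem sum_mul_measureReal_le_integral {α ι : Type*} [MeasurableSpace α] {μ : Measure α}
    {s : Finset ι} {A : ι → Set α} {a : ι → ℝ} {f : α → ℝ}
    (hA : ∀ j ∈ s, MeasurableSet (A j)) (hμA : ∀ j ∈ s, μ (A j) ≠ ⊤)
    (hdisj : (s : Set ι).PairwiseDisjoint A) (hf : Integrable f μ) (hf_nonneg : 0 ≤ᵐ[μ] f)
    (haf : ∀ j ∈ s, ∀ y ∈ A j, a j ≤ f y) :
    ∑ j ∈ s, a j * μ.real (A j) ≤ ∫ y, f y ∂μ :=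
  calc ∑ j ∈ s, a j * μ.real (A j)
      ≤ ∑ j ∈ s, ∫ y in A j, f y ∂μ := Finset.sum_le_sum fun j hj ↦
        setIntegral_ge_of_const_le_real (hA j hj) (hμA j hj) (haf j hj) hf.integrableOn
    _ = ∫ y in ⋃ j ∈ s, A j, f y ∂μ :=
        (integral_biUnion_finset s hA hdisj fun _ _ ↦ hf.integrableOn).symm
    _ ≤ ∫ y, f y ∂μ := setIntegral_le_integral hf hf_nonneg

section Separated

variable {E : Type*} [NormedAddCommGroup E] [NormedSpace ℝ E] {γ : ℝ → ℝ} {c : ℝ}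

theorem norm_mem_Icc_of_mem_ball_half_smul {x y : E} (hx : c ≤ ‖x‖)
    (hy : y ∈ Metric.ball ((1 / 2 : ℝ) • x) (c / 4)) : ‖y‖ ∈ Set.Icc (‖x‖ / 4) ‖x‖ := by
  have hnorm : ‖(1 / 2 : ℝ) • x‖ = ‖x‖ / 2 := by
    rw [norm_smul, Real.norm_of_nonneg (by norm_num)]
    ring
  have hdiff : |‖y‖ - ‖x‖ / 2| < c / 4 :=
    hnorm ▸ (abs_norm_sub_norm_le y _).trans_lt (mem_ball_iff_norm.1 hy)
  obtain ⟨hlower, hupper⟩ := abs_lt.1 hdiff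
  constructor <;> linarith [norm_nonneg x]

theorem disjoint_ball_half_smul {x y : E} (hxy : c ≤ dist x y) :
    Disjoint (Metric.ball ((1 / 2 : ℝ) • x) (c / 4)) (Metric.ball ((1 / 2 : ℝ) • y) (c / 4)) := by
  apply Metric.ball_disjoint_ball
  rw [dist_smul₀, Real.norm_of_nonneg (by norm_num)]
  linarith

theorem pow_mul_le_of_antitoneOn (hγ : AntitoneOn γ (Set.Ioi 0)) (k : ℕ) {a r t : ℝ} (ht : 0 < t)
    (htr : t ≤ r) (hrt : r ≤ a * t) (hγr : 0 ≤ γ r) : r ^ k * γ r ≤ a ^ k * (t ^ k * γ t) := by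
  have hr : 0 < r := ht.trans_le htr
  calc r ^ k * γ r ≤ (a * t) ^ k * γ t :=
        mul_le_mul (pow_le_pow_left₀ hr.le hrt k) (hγ ht hr htr) hγr
          (pow_nonneg (hr.le.trans hrt) k)
    _ = a ^ k * (t ^ k * γ t) := by rw [mul_pow, mul_assoc]

variable [FiniteDimensional ℝ E] [Nontrivial E] [MeasurableSpace E] [BorelSpace E]
  (μ : Measure E) [μ.IsAddHaarMeasure]

theorem integrable_norm_pow_mul_iff {k : ℕ} :
    Integrable (fun y ↦ ‖y‖ ^ k * γ ‖y‖) μ ↔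
      IntegrableOn (fun u ↦ u ^ (Module.finrank ℝ E - 1 + k) * γ u) (Set.Ioi 0) := by
  simpa only [smul_eq_mul, pow_add, mul_assoc] using
    integrable_fun_norm_addHaar μ (f := fun u ↦ u ^ k * γ u)

theorem sum_norm_pow_mul_le_integral_div {ι : Type*} {s : Finset ι} {x : ι → E} {k : ℕ} (hc : 0 < c)
    (hγ : AntitoneOn γ (Set.Ioi 0)) (hγ_nonneg : ∀ u, 0 < u → 0 ≤ γ u)
    (hint : Integrable (fun y ↦ ‖y‖ ^ k * γ ‖y‖) μ) (hnorm : ∀ j ∈ s, c ≤ ‖x j‖)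
    (hsep : (s : Set ι).Pairwise fun i j ↦ c ≤ dist (x i) (x j)) :
    ∑ j ∈ s, ‖x j‖ ^ k * γ ‖x j‖ ≤
      (4 ^ k * ∫ y, ‖y‖ ^ k * γ ‖y‖ ∂μ) / μ.real (Metric.ball 0 (c / 4)) := by
  have hball_pos : 0 < μ.real (Metric.ball 0 (c / 4)) :=
    ENNReal.toReal_pos (Metric.measure_ball_pos μ 0 (by positivity)).ne' measure_ball_lt_top.ne
  have hnonneg : 0 ≤ᵐ[μ] fun y ↦ 4 ^ k * (‖y‖ ^ k * γ ‖y‖) := by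
    filter_upwards [Measure.ae_ne μ 0] with y hy
    have := hγ_nonneg ‖y‖ (norm_pos_iff.2 hy)
    positivity
  have hcompare : ∀ j ∈ s, ∀ y ∈ Metric.ball ((1 / 2 : ℝ) • x j) (c / 4),
      ‖x j‖ ^ k * γ ‖x j‖ ≤ 4 ^ k * (‖y‖ ^ k * γ ‖y‖) := by
    intro j hj y hy
    have hx : 0 < ‖x j‖ := hc.trans_le (hnorm j hj)
    obtain ⟨hlower, hupper⟩ := norm_mem_Icc_of_mem_ball_half_smul (hnorm j hj) hy
    exact pow_mul_le_of_antitoneOn hγ k (by linarith) hupper (by linarith) (hγ_nonneg _ hx)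
  have hpacking := sum_mul_measureReal_le_integral (fun _ _ ↦ measurableSet_ball)
    (fun _ _ ↦ measure_ball_lt_top.ne)
    (fun _ hi _ hj hij ↦ disjoint_ball_half_smul (hsep hi hj hij))
    (hint.const_mul (4 ^ k)) hnonneg hcompare
  rw [le_div_iff₀ hball_pos, Finset.sum_mul, ← integral_const_mul]
  simpa only [Measure.addHaar_real_ball_center] using hpacking

theorem sum_dist_pow_mul_le_integral_div {ι : Type*} {s : Finset ι} {p : E} {x : ι → E} {k : ℕ}
    (hc : 0 < c) (hγ : AntitoneOn γ (Set.Ioi 0)) (hγ_nonneg : ∀ u, 0 < u → 0 ≤ γ u)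
    (hint : Integrable (fun y ↦ ‖y‖ ^ k * γ ‖y‖) μ) (hdist : ∀ j ∈ s, c ≤ dist p (x j))
    (hsep : (s : Set ι).Pairwise fun i j ↦ c ≤ dist (x i) (x j)) :
    ∑ j ∈ s, dist p (x j) ^ k * γ (dist p (x j)) ≤
      (4 ^ k * ∫ y, ‖y‖ ^ k * γ ‖y‖ ∂μ) / μ.real (Metric.ball 0 (c / 4)) := by
  simp only [dist_eq_norm' p] at hdist ⊢
  exact sum_norm_pow_mul_le_integral_div μ hc hγ hγ_nonneg hint hdist <| by
    simpa only [dist_sub_right] using hsep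

end Separated

theorem sum_mul_one_sub_taper_le {ι : Type*} {s : Finset ι} {a d : ι → ℝ}
    (ha : ∀ j ∈ s, 0 ≤ a j) (ω : ℝ) :
    ∑ j ∈ s, a j * (1 - max (1 - d j / ω) 0) ≤ (∑ j ∈ s, d j * a j) / ω := by
  rw [Finset.sum_div]
  refine Finset.sum_le_sum fun j hj ↦ ?_
  calc a j * (1 - max (1 - d j / ω) 0) ≤ a j * (d j / ω) :=
        mul_le_mul_of_nonneg_left (by linarith [le_max_left (1 - d j / ω) 0]) (ha j hj)
    _ = d j * a j / ω := by ring

theorem rowsum_taper_bound_general {E : Type*} [NormedAddCommGroup E] [NormedSpace ℝ E]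
    [FiniteDimensional ℝ E] [Nontrivial E] {c : ℝ} (hc : 0 < c) {γ : ℝ → ℝ}
    (hγ : AntitoneOn γ (Set.Ioi 0)) (hγ_nonneg : ∀ u, 0 < u → 0 ≤ γ u)
    (hint : IntegrableOn (fun u ↦ u ^ Module.finrank ℝ E * γ u) (Set.Ioi 0)) :
    ∃ C : ℝ, ∀ (N : ℕ) (sites : Fin N → E),
      (∀ i j : Fin N, i ≠ j → c ≤ dist (sites i) (sites j)) →
      (∀ i : Fin N,
        ∑ j ∈ Finset.univ.erase i,
          dist (sites i) (sites j) * γ (dist (sites i) (sites j)) ≤ C) ∧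
      ∀ ω : ℝ, 0 < ω → ∀ i : Fin N,
        ∑ j ∈ Finset.univ.erase i,
          γ (dist (sites i) (sites j)) *
            (1 - max (1 - dist (sites i) (sites j) / ω) 0) ≤ C / ω := by
  borelize E
  let μ : Measure E := Measure.addHaar
  have hint_norm : Integrable (fun y ↦ ‖y‖ ^ 1 * γ ‖y‖) μ :=
    (integrable_norm_pow_mul_iff μ).2 <| by rwa [Nat.sub_add_cancel Module.finrank_pos]
  refine ⟨(4 * ∫ y, ‖y‖ * γ ‖y‖ ∂μ) / μ.real (Metric.ball 0 (c / 4)), fun N sites hsep ↦ ?_⟩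
  have hdist : ∀ i, ∀ j ∈ Finset.univ.erase i, c ≤ dist (sites i) (sites j) :=
    fun i j hj ↦ hsep i j (Finset.ne_of_mem_erase hj).symm
  have hrow : ∀ i, ∑ j ∈ Finset.univ.erase i,
      dist (sites i) (sites j) * γ (dist (sites i) (sites j)) ≤ _ := fun i ↦ by
    simpa only [pow_one] using
      sum_dist_pow_mul_le_integral_div μ hc hγ hγ_nonneg hint_norm (hdist i)
        fun j _ k _ hjk ↦ hsep j k hjk
  have hγ_dist : ∀ i, ∀ j ∈ Finset.univ.erase i, 0 ≤ γ (dist (sites i) (sites j)) :=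
    fun i j hj ↦ hγ_nonneg _ (hc.trans_le (hdist i j hj))
  exact ⟨hrow, fun ω hω i ↦ (sum_mul_one_sub_taper_le (hγ_dist i) ω).trans
    (div_le_div_of_nonneg_right (hrow i) hω.le)⟩

/-- **Row-sum bound for tapering under minimum separation.**
Let `c > 0` and let `γ₀ : (0,∞) → [0,∞)` be nonincreasing with `∫₀^∞ u²γ₀(u)du < ∞`.
Then there is a constant `C`, depending only on `c` and `γ₀`, such that for any finite
configuration of points in `ℝ²` with pairwise distances at least `c`:
(i) `max_i ∑_{j≠i} ‖s_i−s_j‖ γ₀(‖s_i−s_j‖) ≤ C`, and consequently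
(ii) for every `ω > 0`,
`max_i ∑_{j≠i} γ₀(‖s_i−s_j‖)(1 − (1 − ‖s_i−s_j‖/ω)₊) ≤ C/ω`. -/
theorem rowsum_taper_bound
    (c : ℝ) (hc : 0 < c) (γ0 : ℝ → ℝ)
    (hmono : AntitoneOn γ0 (Set.Ioi 0))
    (hnonneg : ∀ u : ℝ, 0 < u → 0 ≤ γ0 u)
    (hint : IntegrableOn (fun u => u ^ 2 * γ0 u) (Set.Ioi 0)) :
    ∃ C : ℝ, ∀ (N : ℕ) (sites : Fin N → EuclideanSpace ℝ (Fin 2)),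
      (∀ i j : Fin N, i ≠ j → c ≤ dist (sites i) (sites j)) →
      (∀ i : Fin N,
        ∑ j ∈ Finset.univ.erase i,
          dist (sites i) (sites j) * γ0 (dist (sites i) (sites j)) ≤ C) ∧
      ∀ ω : ℝ, 0 < ω → ∀ i : Fin N,
        ∑ j ∈ Finset.univ.erase i,
          γ0 (dist (sites i) (sites j)) *
            (1 - max (1 - dist (sites i) (sites j) / ω) 0) ≤ C / ω :=
  rowsum_taper_bound_general hc hmono hnonneg (by simpa only [finrank_euclideanSpace_fin])
end
end
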